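/- arXiv:2211.03953 — 3 statements merged into one kernel-verified Lean document; each statement's English description precedes it below -/
import Mathlib

section
/- For a (3+1)-free finite poset P and skew shape λ/μ, the P-analog skew Schur function, defined as the determinant det[e^P_{λ'_i − μ'_j − i + j}(u)] for 1 ≤ i,j ≤ λ_1, equals the sum of u^T over all P-tableaux T of shape λ/μ (fillings of λ/μ by elements of P strictly increasing in P down columns and with T(i,j) not >_P T(i,j+1) across rows). -/
open MvPolynomial
open scoped Classical

noncomputable section

/-- A poset is `(3+1)`-free: no induced subposet consisting of a 3-chain
together with an element incomparable to all of it. -/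
def ThreePlusOneFree (P : Type*) [PartialOrder P] : Prop :=
  ¬ ∃ a b c x : P, a < b ∧ b < c ∧
    ¬(x ≤ a ∨ a ≤ x) ∧ ¬(x ≤ b ∨ b ≤ x) ∧ ¬(x ≤ c ∨ c ≤ x)

/-- The `P`-elementary function `e_k^P(u)`, the sum of `u_{i_1} ⋯ u_{i_k}`
over strict chains `i_1 <_P ⋯ <_P i_k`. -/
def eP (P : Type*) [Fintype P] [PartialOrder P] (k : ℕ) : MvPolynomial P ℤ :=
  ∑ f ∈ Finset.univ.filter (fun f : Fin k → P => ∀ a b : Fin k, a < b → f a < f b),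
    ∏ i, X (f i)

/-- `e_k^P` for an integer index, vanishing for negative `k`. -/
def ePz (P : Type*) [Fintype P] [PartialOrder P] (k : ℤ) : MvPolynomial P ℤ :=
  if 0 ≤ k then eP P k.toNat else 0

/-- Conjugate partition: `conj f c` is the length of column `c` (0-indexed)
of the diagram of `f`. -/
def conj (f : ℕ → ℕ) (c : ℕ) : ℕ := Set.ncard {i | c < f i}

/-- `f : ℕ → ℕ` (0-indexed list of parts) is a partition. -/
def IsPartition (f : ℕ → ℕ) : Prop := (∀ i, f (i + 1) ≤ f i) ∧ ∃ N, ∀ i, N ≤ i → f i = 0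

/-- `λ/μ/d` is a cylindric shape. -/
def IsCylShape (lam mu : ℕ → ℕ) (d : ℕ) : Prop :=
  IsPartition lam ∧ IsPartition mu ∧ (∀ i, mu i ≤ lam i) ∧ 0 < lam 0 ∧
    conj lam 0 ≤ conj lam (lam 0 - 1) + d ∧
    conj mu 0 ≤ conj mu (lam 0 - 1) + d ∧ d ≤ conj lam 0

section Arrays
variable {P : Type*} [PartialOrder P]

/-- Column-strictness of the array `A` (a total function; only values on the cells
of the shape `col(α,β)`, over `l` columns, matter): entries strictly increase
down each column. This is the defining condition for a `P`-array. -/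
def ColStrict (A : ℕ → ℕ → P) (l : ℕ) (α β : ℕ → ℕ) : Prop :=
  ∀ c r r', c < l → β c ≤ r → r < r' → r' < α c → A r c < A r' c

/-- `col(α,β)` (with `β` a partition) is a skew partition shape. -/
def IsSkewShape (l : ℕ) (α β : ℕ → ℕ) : Prop :=
  (∀ c, c + 1 < l → α (c + 1) ≤ α c ∧ β (c + 1) ≤ β c) ∧ ∀ c, c < l → β c ≤ α c

/-- Rows of `A` are weakly increasing in `P`: no entry is `>_P` its right neighbour. -/
def RowWeak (A : ℕ → ℕ → P) (l : ℕ) (α β : ℕ → ℕ) : Prop :=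
  ∀ r c, c + 1 < l → β c ≤ r → r < α c → β (c + 1) ≤ r → r < α (c + 1) →
    ¬ A r (c + 1) < A r c

/-- `A` is a `P`-tableau of shape `col(α,β)`. -/
def IsPTableau (A : ℕ → ℕ → P) (l : ℕ) (α β : ℕ → ℕ) : Prop :=
  IsSkewShape l α β ∧ ColStrict A l α β ∧ RowWeak A l α β

/-- The glued array `A^d`: columns `0,…,l-1` of `A` shifted down by `d`, and a copy
of column `0` of `A` as the extra column `l`. -/
def glueArr (A : ℕ → ℕ → P) (l d : ℕ) : ℕ → ℕ → P :=
  fun r c => if c < l then A (r - d) c else A r 0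

/-- Column lengths of the glued shape. -/
def glueCol (f : ℕ → ℕ) (l d : ℕ) : ℕ → ℕ :=
  fun c => if c < l then f c + d else f 0

/-- `(r,j)` is an intersection point of columns `i < j` of `A`
(shape `col(α,β)`), with witness in column `i`. -/
def IsIntPoint (A : ℕ → ℕ → P) (α β : ℕ → ℕ) (i j r : ℕ) : Prop :=
  i < j ∧ β j ≤ r ∧ r < α j ∧
    ∃ w, w + j = r + 1 + i ∧ β i ≤ w ∧ (α i ≤ w ∨ A r j < A w i)

/-- Columns `i < j` of `A` intersect. -/
def Intersecting (A : ℕ → ℕ → P) (α β : ℕ → ℕ) (i j : ℕ) : Prop :=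
  ∃ r, IsIntPoint A α β i j r

/-- `(r,j)` is a `P`-minimal intersection point of the array `A` with columns `0,…,L`. -/
def PMinIP (A : ℕ → ℕ → P) (α β : ℕ → ℕ) (L j r : ℕ) : Prop :=
  j ≤ L ∧ (∃ i, IsIntPoint A α β i j r) ∧
    ∀ j' r' i', j' ≤ L → IsIntPoint A α β i' j' r' → ¬ A r' j' < A r j

/-- `(r,j)` is the rightmost `P`-minimal intersection point. -/
def RightmostPMinIP (A : ℕ → ℕ → P) (α β : ℕ → ℕ) (L j r : ℕ) : Prop :=
  PMinIP A α β L j r ∧ ∀ j' r', PMinIP A α β L j' r' → j' ≤ j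

/-- The cylindric swap `swap(A,i,j,d)` at the `P`-minimal intersection point `m` of
columns `i < j ≤ l` of `A^d` (the minimal intersection point is the lowest-row one,
since column `j` is a chain).  Everything is in the coordinates of `A`; the case
`j = l` is the wrap-around case, where entries move between column `i` and column `0`. -/
def swapArr (A : ℕ → ℕ → P) (l d i j : ℕ) (α β : ℕ → ℕ) : ℕ → ℕ → P :=
  let m := sInf {r | IsIntPoint (glueArr A l d) (glueCol α l d) (glueCol β l d) i j r}
  if j < l then
    fun r c =>
      if c = i ∧ m + 1 + i ≤ r + j + d then A (r + (j - i)) j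
      else if c = j ∧ m + 1 ≤ r + d then A (r - (j - i)) i
      else A r c
  else
    fun r c =>
      if c = i ∧ m + 1 + i ≤ r + j + d then A (r + (j - i) + d) 0
      else if c = 0 ∧ m + 1 ≤ r then A (r - (d + (j - i))) i
      else A r c

end Arrays

/-- A cylindric `P`-tableau of shape `λ/μ/d`, encoded column by column:
`T c p` is the entry of column `c` in the `p`-th cell from the top
(global row `conj μ c + p`).  The condition is that the glued filling `T^d`
is a `P`-tableau: the glued shape is a skew shape, columns strictly increase
in `P`, and rows (including the wrap-around adjacency between the last column
and the copy of column `0` shifted up by `d`) weakly increase in `P`. -/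
def IsCylTab {P : Type*} [PartialOrder P] (lam mu : ℕ → ℕ) (d : ℕ)
    (T : ∀ c : Fin (lam 0), Fin (conj lam c - conj mu c) → P) : Prop :=
  (∀ c, c + 1 < lam 0 → conj lam (c + 1) ≤ conj lam c ∧ conj mu (c + 1) ≤ conj mu c) ∧
  (∀ c, c < lam 0 → conj mu c ≤ conj lam c) ∧
  (0 < lam 0 → conj lam 0 ≤ conj lam (lam 0 - 1) + d ∧ conj mu 0 ≤ conj mu (lam 0 - 1) + d) ∧
  (∀ c p q, p < q → T c p < T c q) ∧
  (∀ (c : Fin (lam 0)) (hc : c.1 + 1 < lam 0)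
      (p : Fin (conj lam c.1 - conj mu c.1)) (q : Fin (conj lam (c.1 + 1) - conj mu (c.1 + 1))),
      conj mu c.1 + p.1 = conj mu (c.1 + 1) + q.1 → ¬ T ⟨c.1 + 1, hc⟩ q < T c p) ∧
  (∀ (h0 : 0 < lam 0) (p : Fin (conj lam (lam 0 - 1) - conj mu (lam 0 - 1)))
      (q : Fin (conj lam 0 - conj mu 0)),
      conj mu (lam 0 - 1) + p.1 + d = conj mu 0 + q.1 →
      ¬ T ⟨0, h0⟩ q < T ⟨lam 0 - 1, Nat.sub_lt h0 Nat.one_pos⟩ p)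

/-- The `u`-monomial weight `u^T` of a tableau. -/
def uT {P : Type*} (lam mu : ℕ → ℕ)
    (T : ∀ c : Fin (lam 0), Fin (conj lam c - conj mu c) → P) : MvPolynomial P ℤ :=
  ∏ c, ∏ p, X (T c p)

/-- Number of occurrences of the value `x` in the tableau `T`. -/
def tabCount {P : Type*} (lam mu : ℕ → ℕ)
    (T : ∀ c : Fin (lam 0), Fin (conj lam c - conj mu c) → P) (x : P) : ℕ :=
  ∑ c, (Finset.univ.filter (fun p => T c p = x)).card

/-- `T` is standard: it contains each element of `P` exactly once. -/
def IsStandardTab {P : Type*} (lam mu : ℕ → ℕ)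
    (T : ∀ c : Fin (lam 0), Fin (conj lam c - conj mu c) → P) : Prop :=
  ∀ x : P, tabCount lam mu T x = 1

/-- The chromatic symmetric polynomial of the incomparability graph `inc(P)`,
in the variables `x_0, …, x_{N-1}`. -/
def chromPoly (P : Type*) [Fintype P] [PartialOrder P] (N : ℕ) : MvPolynomial (Fin N) ℤ :=
  ∑ κ ∈ Finset.univ.filter
      (fun κ : P → Fin N => ∀ a b : P, a ≠ b → ¬(a ≤ b ∨ b ≤ a) → κ a ≠ κ b),
    ∏ v, X (κ v)

end

section Gash
variable {P : Type*} [PartialOrder P]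

/-- Tail swapping of two chains produces chains. -/
lemma swap_chains (h31 : ThreePlusOneFree P) (l1 l2 : List P) (p q : ℕ)
    (h1 : l1.Pairwise (· < ·)) (h2 : l2.Pairwise (· < ·)) (hpq : p ≤ q)
    (x : P) (hx : l2[q]? = some x) (hxy : ∀ y, l1[p]? = some y → x < y)
    (hmin : 0 < p → ∀ z, l2[q-1]? = some z → ∃ y, l1[p-1]? = some y ∧ ¬ z < y) :
    p ≤ l1.length ∧ q < l2.length ∧
    (l1.take p ++ l2.drop (q+1)).Pairwise (· < ·) ∧
    (l2.take (q+1) ++ l1.drop p).Pairwise (· < ·) := by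
  obtain ⟨hq, rfl⟩ := List.getElem?_eq_some_iff.1 hx
  have g1 : ∀ (i j : ℕ) (hi : i < l1.length) (hj : j < l1.length), i < j → l1[i] < l1[j] :=
    List.pairwise_iff_getElem.1 h1
  have g2 : ∀ (i j : ℕ) (hi : i < l2.length) (hj : j < l2.length), i < j → l2[i] < l2[j] :=
    List.pairwise_iff_getElem.1 h2
  have g1' : ∀ (i j : ℕ) (hi : i < l1.length) (hj : j < l1.length), i ≤ j → l1[i] ≤ l1[j] := by
    intro i j hi hj hij
    rcases hij.lt_or_eq with h | h
    · exact (g1 i j hi hj h).le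
    · subst h; exact le_rfl
  have g2' : ∀ (i j : ℕ) (hi : i < l2.length) (hj : j < l2.length), i ≤ j → l2[i] ≤ l2[j] := by
    intro i j hi hj hij
    rcases hij.lt_or_eq with h | h
    · exact (g2 i j hi hj h).le
    · subst h; exact le_rfl
  have hp : p ≤ l1.length := by
    rcases Nat.eq_zero_or_pos p with h | h
    · omega
    · obtain ⟨y, hy, -⟩ := hmin h _ (List.getElem?_eq_getElem (by omega : q - 1 < l2.length))
      obtain ⟨hy', -⟩ := List.getElem?_eq_some_iff.1 hy
      omega
  refine ⟨hp, hq, ?_, ?_⟩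
  · refine List.pairwise_append.2 ⟨h1.sublist (List.take_sublist _ _),
      h2.sublist (List.drop_sublist _ _), ?_⟩
    intro a ha b hb
    obtain ⟨i, hi, rfl⟩ := List.mem_take_iff_getElem.1 ha
    obtain ⟨j, hj, rfl⟩ := List.mem_drop_iff_getElem.1 hb
    have hp0 : 0 < p := by omega
    obtain ⟨y, hy, hzy⟩ := hmin hp0 _ (List.getElem?_eq_getElem (by omega : q - 1 < l2.length))
    obtain ⟨hy', rfl⟩ := List.getElem?_eq_some_iff.1 hy
    have key : l1[p-1] < l2[q+1] := by
      have c1 : l2[q-1] < l2[q] := g2 _ _ _ _ (by omega)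
      have c2 : l2[q] < l2[q+1] := g2 _ _ _ _ (by omega)
      by_contra hcon
      refine h31 ⟨l2[q-1], l2[q], l2[q+1], l1[p-1], c1, c2, ?_, ?_, ?_⟩
      · rintro (h | h)
        · exact hcon (h.trans_lt (c1.trans c2))
        · rcases h.lt_or_eq with h | h
          · exact hzy h
          · exact hcon (h ▸ (c1.trans c2))
      · rintro (h | h)
        · exact hcon (h.trans_lt c2)
        · exact hzy (c1.trans_le h)
      · rintro (h | h)
        · rcases h.lt_or_eq with h | h
          · exact hcon h
          · exact hzy (h ▸ (c1.trans c2))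
        · exact hzy ((c1.trans c2).trans_le h)
    exact (g1' i (p-1) _ _ (by omega)).trans_lt (key.trans_le (g2' (q+1) _ _ _ (by omega)))
  · refine List.pairwise_append.2 ⟨h2.sublist (List.take_sublist _ _),
      h1.sublist (List.drop_sublist _ _), ?_⟩
    intro a ha b hb
    obtain ⟨i, hi, rfl⟩ := List.mem_take_iff_getElem.1 ha
    obtain ⟨j, hj, rfl⟩ := List.mem_drop_iff_getElem.1 hb
    have key := hxy _ (List.getElem?_eq_getElem (by omega : p < l1.length))
    exact (g2' i q _ _ (by omega)).trans_lt (key.trans_le (g1' p _ _ _ (by omega)))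

variable {n : ℕ}

/-- A violation in shifted coordinates. -/
noncomputable def Viol (B : Fin n → ℕ) (L : Fin n → List P) (s : ℕ) (c d : Fin n) : Prop :=
  d.1 = c.1 + 1 ∧ B c ≤ s ∧ ∃ x, (L d)[s - 1 - B d]? = some x ∧
    ∀ y, (L c)[s - B c]? = some y → x < y

/-- The selected violation: lowest coordinate, then leftmost. -/
noncomputable def IsMinViol (B : Fin n → ℕ) (L : Fin n → List P) (t : ℕ × Fin n × Fin n) : Prop :=
  Viol B L t.1 t.2.1 t.2.2 ∧ (∀ s' < t.1, ∀ c' d', ¬ Viol B L s' c' d') ∧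
    ∀ c' < t.2.1, ∀ d', ¬ Viol B L t.1 c' d'

lemma IsMinViol.unique {B : Fin n → ℕ} {L : Fin n → List P} {t t' : ℕ × Fin n × Fin n}
    (h : IsMinViol B L t) (h' : IsMinViol B L t') : t = t' := by
  obtain ⟨s, c, d⟩ := t
  obtain ⟨s', c', d'⟩ := t'
  obtain ⟨v, m, k⟩ := h
  obtain ⟨v', m', k'⟩ := h'
  simp only at v m k v' m' k'
  have hs : s = s' := by
    rcases lt_trichotomy s s' with h | h | h
    · exact absurd v (m' _ h _ _)
    · exact h
    · exact absurd v' (m _ h _ _)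
  subst hs
  have hc : c = c' := by
    rcases lt_trichotomy c c' with h | h | h
    · exact absurd v (k' _ h _)
    · exact h
    · exact absurd v' (k _ h _)
  subst hc
  have hd : d = d' := Fin.ext (by rw [v.1, v'.1])
  subst hd
  rfl

lemma exists_minViol {B : Fin n → ℕ} {L : Fin n → List P}
    (h : ∃ s c d, Viol B L s c d) : ∃ t, IsMinViol B L t := by
  have h2 : ∃ k, ∃ c : Fin n, c.1 = k ∧ ∃ d, Viol B L (Nat.find h) c d := by
    obtain ⟨c, d, hv⟩ := Nat.find_spec h
    exact ⟨c.1, c, rfl, d, hv⟩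
  obtain ⟨c, hc, d, hv⟩ := Nat.find_spec h2
  refine ⟨(Nat.find h, c, d), hv, ?_, ?_⟩
  · intro s' hs' c' d' hv'
    exact Nat.find_min h hs' ⟨c', d', hv'⟩
  · intro c' hc' d' hv'
    refine Nat.find_min h2 (m := c'.1) ?_ ⟨c', rfl, d', hv'⟩
    rw [← hc]; exact hc'

/-- Swap the tails of columns `c` and `d`. -/
noncomputable def swapL (B : Fin n → ℕ) (L : Fin n → List P) (s : ℕ) (c d : Fin n) : Fin n → List P :=
  fun e => if e = c then (L c).take (s - B c) ++ (L d).drop (s - B d)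
    else if e = d then (L d).take (s - B d) ++ (L c).drop (s - B c) else L e

lemma swapL_c (B : Fin n → ℕ) (L : Fin n → List P) (s : ℕ) (c d : Fin n) :
    swapL B L s c d c = (L c).take (s - B c) ++ (L d).drop (s - B d) := by
  simp [swapL]

lemma swapL_d (B : Fin n → ℕ) (L : Fin n → List P) (s : ℕ) (c d : Fin n) (h : d ≠ c) :
    swapL B L s c d d = (L d).take (s - B d) ++ (L c).drop (s - B c) := by
  simp [swapL, h]

lemma swapL_o (B : Fin n → ℕ) (L : Fin n → List P) (s : ℕ) (c d e : Fin n) (h : e ≠ c)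
    (h' : e ≠ d) : swapL B L s c d e = L e := by
  simp [swapL, h, h']

lemma min_chains (h31 : ThreePlusOneFree P) {B : Fin n → ℕ} {L : Fin n → List P} {s : ℕ}
    {c d : Fin n} (hB : ∀ c d : Fin n, d.1 = c.1 + 1 → B d < B c)
    (hL : ∀ c, (L c).Pairwise (· < ·)) (h : IsMinViol B L (s, c, d)) :
    d ≠ c ∧ B d < B c ∧ B c ≤ s ∧ s - B c ≤ (L c).length ∧ s - B d ≤ (L d).length ∧
    ((L c).take (s - B c) ++ (L d).drop (s - B d)).Pairwise (· < ·) ∧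
    ((L d).take (s - B d) ++ (L c).drop (s - B c)).Pairwise (· < ·) := by
  obtain ⟨⟨hd, hs, x, hx, hxy⟩, hm, -⟩ := h
  simp only at hd hs hx hxy hm
  have hBd := hB c d hd
  have hne : d ≠ c := by
    intro h; rw [h] at hd; omega
  have e1 : s - 1 - B d + 1 = s - B d := by omega
  have := swap_chains h31 (L c) (L d) (s - B c) (s - 1 - B d) (hL c) (hL d) (by omega) x hx hxy
    (by
      intro hp z hz
      have := hm (s - 1) (by omega) c d
      by_contra hcon
      push Not at hcon
      refine this ⟨hd, by omega, z, ?_, ?_⟩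
      · rw [← hz]; congr 1; omega
      · intro y hy
        apply hcon
        rw [← hy]; congr 1; omega)
  rw [e1] at this
  obtain ⟨a1, a2, a3, a4⟩ := this
  exact ⟨hne, hBd, hs, a1, by omega, a3, a4⟩

lemma swapL_invol (h31 : ThreePlusOneFree P) {B : Fin n → ℕ} {L : Fin n → List P} {s : ℕ}
    {c d : Fin n} (hB : ∀ c d : Fin n, d.1 = c.1 + 1 → B d < B c)
    (hL : ∀ c, (L c).Pairwise (· < ·)) (h : IsMinViol B L (s, c, d)) :
    swapL B (swapL B L s c d) s c d = L := by
  obtain ⟨hne, hBd, hs, l1, l2, -, -⟩ := min_chains h31 hB hL h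
  funext e
  by_cases hc : e = c
  · subst hc
    rw [swapL_c, swapL_c, swapL_d _ _ _ _ _ hne, List.take_left' (by simp [l1]),
      List.drop_left' (by simp [l2]), List.take_append_drop]
  by_cases hd : e = d
  · subst hd
    rw [swapL_d _ _ _ _ _ hne, swapL_c, swapL_d _ _ _ _ _ hne, List.take_left' (by simp [l2]),
      List.drop_left' (by simp [l1]), List.take_append_drop]
  rw [swapL_o _ _ _ _ _ _ hc hd, swapL_o _ _ _ _ _ _ hc hd]

lemma swapL_min (h31 : ThreePlusOneFree P) {B : Fin n → ℕ} {L : Fin n → List P} {s : ℕ}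
    {c d : Fin n} (hB : ∀ c d : Fin n, d.1 = c.1 + 1 → B d < B c)
    (hL : ∀ c, (L c).Pairwise (· < ·)) (h : IsMinViol B L (s, c, d)) :
    IsMinViol B (swapL B L s c d) (s, c, d) := by
  obtain ⟨hne, hBd, hs, l1, l2, -, -⟩ := min_chains h31 hB hL h
  have low : ∀ e t, B e ≤ t → t < s → (swapL B L s c d e)[t - B e]? = (L e)[t - B e]? := by
    intro e t h1 h2
    by_cases hc : e = c
    · subst hc
      rw [swapL_c, List.getElem?_append_left (by simp; omega),
        List.getElem?_take_of_lt (by omega)]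
    by_cases hd : e = d
    · subst hd
      rw [swapL_d _ _ _ _ _ hne, List.getElem?_append_left (by simp; omega),
        List.getElem?_take_of_lt (by omega)]
    rw [swapL_o _ _ _ _ _ _ hc hd]
  obtain ⟨⟨hd, -, x, hx, hxy⟩, hm, hk⟩ := h
  simp only at hd hx hxy hm hk
  refine ⟨⟨hd, hs, x, ?_, ?_⟩, ?_, ?_⟩
  · simp only
    rw [low d (s-1) (by omega) (by omega), hx]
  · intro y hy
    simp only at hy
    rw [swapL_c, List.getElem?_append_right (by simp)] at hy
    simp only [List.length_take, min_eq_left l1, Nat.sub_self, List.getElem?_drop,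
      Nat.add_zero] at hy
    obtain ⟨i1, rfl⟩ := List.getElem?_eq_some_iff.1 hx
    obtain ⟨i2, rfl⟩ := List.getElem?_eq_some_iff.1 hy
    exact List.pairwise_iff_getElem.1 (hL d) _ _ _ _ (by omega)
  · rintro s' hs' c' d' ⟨hd', hs'', z, hz, hzy⟩
    simp only at hs'
    have := hB c' d' hd'
    rw [low d' (s'-1) (by omega) (by omega)] at hz
    rw [low c' s' hs'' hs'] at hzy
    exact hm s' hs' c' d' ⟨hd', hs'', z, hz, hzy⟩
  · rintro c' hc' d' ⟨hd', hs'', z, hz, hzy⟩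
    simp only at hc' hs'' hz hzy
    have := hB c' d' hd'
    rw [low d' (s-1) (by omega) (by omega)] at hz
    have h1 : c'.1 < c.1 := hc'
    rw [swapL_o _ _ _ _ _ _ (ne_of_lt hc') (by intro h; rw [h] at h1; omega)] at hzy
    exact hk c' hc' d' ⟨hd', hs'', z, hz, hzy⟩

/-- Weight of a list. -/
noncomputable def wt (l : List P) : MvPolynomial P ℤ := (l.map X).prod

lemma wt_swapL (B : Fin n → ℕ) (L : Fin n → List P) (s : ℕ) (c d : Fin n) (h : d ≠ c) :
    ∏ e, wt (swapL B L s c d e) = ∏ e, wt (L e) := by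
  have key : ∀ M : Fin n → List P, ∏ e, wt (M e) =
      wt (M c) * (wt (M d) * ∏ e ∈ (Finset.univ.erase c).erase d, wt (M e)) := by
    intro M
    rw [← Finset.mul_prod_erase Finset.univ _ (Finset.mem_univ c),
      ← Finset.mul_prod_erase (Finset.univ.erase c) _
        (Finset.mem_erase.2 ⟨h, Finset.mem_univ d⟩)]
  rw [key, key L, swapL_c, swapL_d _ _ _ _ _ h]
  have : ∏ e ∈ (Finset.univ.erase c).erase d, wt (swapL B L s c d e) =
      ∏ e ∈ (Finset.univ.erase c).erase d, wt (L e) := by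
    refine Finset.prod_congr rfl fun e he => ?_
    simp only [Finset.mem_erase] at he
    rw [swapL_o _ _ _ _ _ _ he.2.1 he.1]
  rw [this]
  have split : ∀ (l : List P) k, wt l = wt (l.take k) * wt (l.drop k) := by
    intro l k
    rw [wt, wt, wt, ← List.prod_append, ← List.map_append, List.take_append_drop]
  have app : ∀ (l l' : List P), wt (l ++ l') = wt l * wt l' := by
    intro l l'; simp [wt]
  rw [app, app, split (L c) (s - B c), split (L d) (s - B d)]
  ring

variable [Fintype P]

/-- Chains with integer length `k`. -/
noncomputable def chainsF (P : Type*) [PartialOrder P] [Fintype P] (k : ℤ) : Finset (List P) :=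
  if 0 ≤ k then
    (Finset.univ.filter (fun f : Fin k.toNat → P => ∀ a b, a < b → f a < f b)).image List.ofFn
  else ∅

lemma mem_chainsF (k : ℤ) (l : List P) :
    l ∈ chainsF P k ↔ (l.length : ℤ) = k ∧ l.Pairwise (· < ·) := by
  unfold chainsF
  split_ifs with hk
  · simp only [Finset.mem_image, Finset.mem_filter, Finset.mem_univ, true_and]
    constructor
    · rintro ⟨f, hf, rfl⟩
      refine ⟨by simp [hk], ?_⟩
      rw [List.pairwise_ofFn]
      intro i j hij
      exact hf i j hij
    · rintro ⟨h1, h2⟩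
      have h3 : k.toNat = l.length := by omega
      rw [h3]
      refine ⟨fun i => l[i.1], ?_, by simp⟩
      intro a b hab
      exact List.pairwise_iff_getElem.1 h2 _ _ _ _ hab
  · simp only [Finset.notMem_empty, false_iff]
    rintro ⟨h1, -⟩
    omega

lemma ePz_eq (k : ℤ) : ePz P k = ∑ l ∈ chainsF P k, wt l := by
  unfold ePz chainsF
  split_ifs with hk
  · rw [Finset.sum_image (fun a _ b _ h => List.ofFn_injective h)]
    unfold eP
    refine Finset.sum_congr rfl fun f _ => ?_
    rw [wt, List.map_ofFn, List.prod_ofFn]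
    rfl
  · simp

/-- Configurations. -/
noncomputable def confs (P : Type*) [PartialOrder P] [Fintype P] (A B : Fin n → ℕ) :
    Finset (Equiv.Perm (Fin n) × (Fin n → List P)) :=
  (Finset.univ.sigma (fun π : Equiv.Perm (Fin n) =>
    Fintype.piFinset fun c => chainsF P ((A (π c) : ℤ) - B c))).image fun x => (x.1, x.2)

lemma mem_confs (A B : Fin n → ℕ) (x : Equiv.Perm (Fin n) × (Fin n → List P)) :
    x ∈ confs P A B ↔ (∀ c, B c + (x.2 c).length = A (x.1 c)) ∧
      ∀ c, (x.2 c).Pairwise (· < ·) := by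
  obtain ⟨π, L⟩ := x
  simp only [confs, Finset.mem_image, Finset.mem_sigma, Finset.mem_univ, true_and,
    Fintype.mem_piFinset, mem_chainsF]
  constructor
  · rintro ⟨⟨π', L'⟩, h, heq⟩
    simp only [Prod.mk.injEq] at heq h
    obtain ⟨rfl, rfl⟩ := heq
    exact ⟨fun c => by have := (h c).1; omega, fun c => (h c).2⟩
  · rintro ⟨h1, h2⟩
    exact ⟨⟨π, L⟩, fun c => ⟨by have := h1 c; simp only; omega, h2 c⟩, rfl⟩

lemma det_confs (A B : Fin n → ℕ) :
    Matrix.det (Matrix.of fun i j : Fin n => ePz P ((A i : ℤ) - B j)) =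
      ∑ x ∈ confs P A B, ((Equiv.Perm.sign x.1 : ℤ) : MvPolynomial P ℤ) * ∏ c, wt (x.2 c) := by
  rw [Matrix.det_apply', confs, Finset.sum_image, Finset.sum_sigma]
  · refine Finset.sum_congr rfl fun π _ => ?_
    simp only [Matrix.of_apply, ePz_eq]
    rw [Finset.prod_univ_sum, Finset.mul_sum]
  · rintro ⟨a, b⟩ _ ⟨a', b'⟩ _ h
    simp only [Prod.mk.injEq] at h
    obtain ⟨rfl, rfl⟩ := h
    rfl

lemma sum_bad (h31 : ThreePlusOneFree P) (A B : Fin n → ℕ)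
    (hB : ∀ c d : Fin n, d.1 = c.1 + 1 → B d < B c) :
    ∑ x ∈ (confs P A B).filter (fun x => ∃ t, IsMinViol B x.2 t),
      ((Equiv.Perm.sign x.1 : ℤ) : MvPolynomial P ℤ) * ∏ c, wt (x.2 c) = 0 := by
  have hmem : ∀ x ∈ (confs P A B).filter (fun x => ∃ t, IsMinViol B x.2 t),
      ∃ t, IsMinViol B x.2 t := fun x hx => (Finset.mem_filter.1 hx).2
  let g : ∀ x ∈ (confs P A B).filter (fun x => ∃ t, IsMinViol B x.2 t),
      Equiv.Perm (Fin n) × (Fin n → List P) := fun x hx =>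
    (x.1 * Equiv.swap (hmem x hx).choose.2.1 (hmem x hx).choose.2.2,
      swapL B x.2 (hmem x hx).choose.1 (hmem x hx).choose.2.1 (hmem x hx).choose.2.2)
  have hg : ∀ x hx t, IsMinViol B x.2 t → g x hx =
      (x.1 * Equiv.swap t.2.1 t.2.2, swapL B x.2 t.1 t.2.1 t.2.2) := by
    intro x hx t ht
    have : (hmem x hx).choose = t := (hmem x hx).choose_spec.unique ht
    simp only [g, this]
  have gmem : ∀ x hx, g x hx ∈ (confs P A B).filter (fun x => ∃ t, IsMinViol B x.2 t) := by
    intro x hx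
    obtain ⟨hx1, ⟨s, c, d⟩, ht⟩ := Finset.mem_filter.1 hx
    rw [hg x hx _ ht]
    obtain ⟨len, hL⟩ := (mem_confs A B x).1 hx1
    obtain ⟨hne, hBd, hs, l1, l2, p1, p2⟩ := min_chains h31 hB hL ht
    refine Finset.mem_filter.2 ⟨(mem_confs A B _).2 ⟨?_, ?_⟩, (s, c, d), swapL_min h31 hB hL ht⟩
    · intro e
      simp only [Equiv.Perm.mul_apply]
      have hc' := len c
      have hd' := len d
      by_cases hc : e = c
      · subst hc
        rw [swapL_c, Equiv.swap_apply_left]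
        simp only [List.length_append, List.length_take, List.length_drop]
        omega
      by_cases hd : e = d
      · subst hd
        rw [swapL_d _ _ _ _ _ hne, Equiv.swap_apply_right]
        simp only [List.length_append, List.length_take, List.length_drop]
        omega
      rw [swapL_o _ _ _ _ _ _ hc hd, Equiv.swap_apply_of_ne_of_ne hc hd, len]
    · intro e
      simp only
      by_cases hc : e = c
      · subst hc
        rw [swapL_c]; exact p1
      by_cases hd : e = d
      · subst hd
        rw [swapL_d _ _ _ _ _ hne]; exact p2
      rw [swapL_o _ _ _ _ _ _ hc hd]; exact hL e
  refine Finset.sum_involution g ?_ ?_ gmem ?_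
  · intro x hx
    obtain ⟨hx1, ⟨s, c, d⟩, ht⟩ := Finset.mem_filter.1 hx
    rw [hg x hx _ ht]
    obtain ⟨len, hL⟩ := (mem_confs A B x).1 hx1
    obtain ⟨hne, -⟩ := min_chains h31 hB hL ht
    simp only
    rw [wt_swapL _ _ _ _ _ hne, Equiv.Perm.sign_mul, Equiv.Perm.sign_swap hne.symm]
    simp
  · intro x hx _ heq
    obtain ⟨hx1, ⟨s, c, d⟩, ht⟩ := Finset.mem_filter.1 hx
    rw [hg x hx _ ht] at heq
    obtain ⟨len, hL⟩ := (mem_confs A B x).1 hx1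
    obtain ⟨hne, -⟩ := min_chains h31 hB hL ht
    have h1 := congrArg Prod.fst heq
    simp only [mul_eq_left, Equiv.swap_eq_one_iff] at h1
    exact hne h1.symm
  · intro x hx
    obtain ⟨hx1, ⟨s, c, d⟩, ht⟩ := Finset.mem_filter.1 hx
    obtain ⟨len, hL⟩ := (mem_confs A B x).1 hx1
    have e1 := hg x hx _ ht
    have ht' : IsMinViol B (g x hx).2 (s, c, d) := by
      rw [e1]; exact swapL_min h31 hB hL ht
    rw [hg _ (gmem x hx) _ ht', e1]
    simp only [mul_assoc, Equiv.swap_mul_self, mul_one, swapL_invol h31 hB hL ht]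

lemma strictMono_of_succ (f : Fin n → ℕ) (h : ∀ c d : Fin n, d.1 = c.1 + 1 → f d < f c) :
    StrictAnti f := by
  have : ∀ k : ℕ, ∀ c d : Fin n, d.1 = c.1 + 1 + k → f d < f c := by
    intro k
    induction k with
    | zero => intro c d hd; exact h c d hd
    | succ k ih =>
      intro c d hd
      have h1 := ih c ⟨c.1 + 1 + k, by omega⟩ rfl
      exact (h ⟨c.1 + 1 + k, by omega⟩ d (by simp only; omega)).trans h1
  intro c d hcd
  have : c.1 < d.1 := hcd
  exact ‹∀ k : ℕ, ∀ c d : Fin n, d.1 = c.1 + 1 + k → f d < f c› (d.1 - c.1 - 1) c d (by omega)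

lemma good_perm (A B : Fin n → ℕ)
    (hA : ∀ c d : Fin n, d.1 = c.1 + 1 → A d < A c)
    (hB : ∀ c d : Fin n, d.1 = c.1 + 1 → B d < B c)
    (x : Equiv.Perm (Fin n) × (Fin n → List P)) (hx : x ∈ confs P A B)
    (hv : ∀ s c d, ¬ Viol B x.2 s c d) : x.1 = 1 := by
  obtain ⟨len, hL⟩ := (mem_confs A B x).1 hx
  have hA' := strictMono_of_succ A hA
  have h1 : StrictAnti (fun c => A (x.1 c)) := by
    apply strictMono_of_succ
    intro c d hd
    by_contra hcon
    have lc := len c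
    have ld := len d
    have := hB c d hd
    have hlt : A (x.1 c) - 1 - B d < (x.2 d).length := by omega
    refine hv (A (x.1 c)) c d ⟨hd, by omega, (x.2 d)[A (x.1 c) - 1 - B d],
      List.getElem?_eq_getElem hlt, ?_⟩
    intro y hy
    obtain ⟨hy', -⟩ := List.getElem?_eq_some_iff.1 hy
    omega
  have h2 : StrictMono x.1 := by
    intro c d hcd
    exact hA'.lt_iff_gt.1 (h1 hcd)
  have h3 : (x.1 : Fin n → Fin n) = id :=
    (StrictMono.range_inj h2 strictMono_id).1 (by simp [x.1.surjective.range_eq])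
  exact Equiv.ext fun c => congrFun h3 c

end Gash

lemma conj_fin {f : ℕ → ℕ} (hf : IsPartition f) (c : ℕ) : {i | c < f i}.Finite := by
  obtain ⟨N, hN⟩ := hf.2
  refine (Set.finite_Iio N).subset fun i hi => ?_
  by_contra hcon
  have := hN i (not_lt.1 hcon)
  simp only [Set.mem_ofPred_eq] at hi
  omega

lemma conj_succ {f : ℕ → ℕ} (hf : IsPartition f) (c : ℕ) : conj f (c + 1) ≤ conj f c :=
  Set.ncard_le_ncard (fun i hi => by simp only [Set.mem_ofPred_eq] at hi ⊢; omega) (conj_fin hf c)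

lemma conj_le {f g : ℕ → ℕ} (hf : IsPartition f) (h : ∀ i, g i ≤ f i) (c : ℕ) :
    conj g c ≤ conj f c :=
  Set.ncard_le_ncard (fun i hi => by simp only [Set.mem_ofPred_eq] at hi ⊢; have := h i; omega)
    (conj_fin hf c)

/-- (reformulation of Gasharov's theorem) for a `(3+1)`-free finite
poset `P` and skew shape `λ/μ`, the determinant `det[e^P_{λ'_i - μ'_j - i + j}(u)]`
(indices `1 ≤ i,j ≤ λ₁`) equals the sum of `u^T` over all `P`-tableaux `T` of shape
`λ/μ` (encoded column by column). -/
theorem stmt_6 (P : Type*) [Fintype P] [PartialOrder P] (h31 : ThreePlusOneFree P)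
    (lam mu : ℕ → ℕ) (hlam : IsPartition lam) (hmu : IsPartition mu)
    (hsub : ∀ i, mu i ≤ lam i) :
    Matrix.det (Matrix.of fun i j : Fin (lam 0) =>
        ePz P ((conj lam i.1 : ℤ) - (conj mu j.1 : ℤ) - (i.1 : ℤ) + (j.1 : ℤ)))
      = ∑ T : {T : ∀ c : Fin (lam 0), Fin (conj lam c - conj mu c) → P //
            (∀ c p q, p < q → T c p < T c q) ∧
            (∀ (c : Fin (lam 0)) (hc : c.1 + 1 < lam 0)
                (p : Fin (conj lam c.1 - conj mu c.1))
                (q : Fin (conj lam (c.1 + 1) - conj mu (c.1 + 1))),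
                conj mu c.1 + p.1 = conj mu (c.1 + 1) + q.1 →
                  ¬ T ⟨c.1 + 1, hc⟩ q < T c p)},
          uT lam mu T.1 := by
  let A : Fin (lam 0) → ℕ := fun c => conj lam c.1 + (lam 0 - c.1)
  let B : Fin (lam 0) → ℕ := fun c => conj mu c.1 + (lam 0 - c.1)
  have hA : ∀ c d : Fin (lam 0), d.1 = c.1 + 1 → A d < A c := by
    intro c d hd
    have := conj_succ hlam c.1
    have := d.2
    simp only [A, hd]
    omega
  have hB : ∀ c d : Fin (lam 0), d.1 = c.1 + 1 → B d < B c := by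
    intro c d hd
    have := conj_succ hmu c.1
    have := d.2
    simp only [B, hd]
    omega
  have hAB : ∀ c, conj mu c ≤ conj lam c := conj_le hlam hsub
  have hmat : (Matrix.of fun i j : Fin (lam 0) =>
        ePz P ((conj lam i.1 : ℤ) - (conj mu j.1 : ℤ) - (i.1 : ℤ) + (j.1 : ℤ))) =
      Matrix.of fun i j : Fin (lam 0) => ePz P ((A i : ℤ) - B j) := by
    ext1 i j
    simp only [Matrix.of_apply]
    congr 1
    have := i.2
    have := j.2
    simp only [A, B]
    omega
  rw [hmat, det_confs, ← Finset.sum_filter_add_sum_filter_not _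
    (fun x => ∃ t, IsMinViol B x.2 t), sum_bad h31 A B hB, zero_add]
  symm
  refine Finset.sum_bij (fun T _ => ((1 : Equiv.Perm (Fin (lam 0))), fun c => List.ofFn (T.1 c)))
    ?_ ?_ ?_ ?_
  · rintro ⟨T, hcol, hrow⟩ -
    refine Finset.mem_filter.2 ⟨(mem_confs A B _).2 ⟨?_, ?_⟩, ?_⟩
    · intro c
      have := hAB c.1
      simp only [List.length_ofFn, Equiv.Perm.one_apply, A, B]
      omega
    · intro c
      simp only
      rw [List.pairwise_ofFn]
      intro i j hij
      exact hcol c i j hij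
    · rintro ⟨⟨s, c, d⟩, ⟨hd, hs, x, hx, hxy⟩, -, -⟩
      simp only at hd hs hx hxy
      obtain ⟨d, hdn⟩ := d
      simp only at hd
      subst hd
      obtain ⟨hq, rfl⟩ := List.getElem?_eq_some_iff.1 hx
      have hlen := hq
      simp only [List.length_ofFn] at hlen
      have a1 := hAB c.1
      have a2 := conj_succ hlam c.1
      have a3 := conj_succ hmu c.1
      have a4 := hAB (c.1 + 1)
      have hp : s - B c < conj lam c.1 - conj mu c.1 := by
        simp only [B] at hlen hs ⊢
        omega
      have h1 := hxy (T c ⟨s - B c, hp⟩) (by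
        rw [List.getElem?_eq_getElem (by simpa using hp)]
        simp)
      simp only [List.getElem_ofFn] at h1
      refine hrow c hdn ⟨s - B c, hp⟩ ⟨_, hlen⟩ ?_ h1
      simp only [B] at hs ⊢
      omega
  · rintro ⟨T, hT⟩ - ⟨T', hT'⟩ - h
    simp only [Prod.mk.injEq, true_and] at h
    apply Subtype.ext
    funext c
    exact List.ofFn_injective (congrFun h c)
  · rintro x hx
    obtain ⟨hx1, hx2⟩ := Finset.mem_filter.1 hx
    have hv : ∀ s c d, ¬ Viol B x.2 s c d := fun s c d h => hx2 (exists_minViol ⟨s, c, d, h⟩)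
    have h1 := good_perm A B hA hB x hx1 hv
    obtain ⟨len, hL⟩ := (mem_confs A B x).1 hx1
    obtain ⟨π, L⟩ := x
    simp only at h1 len hL hv
    subst h1
    have len' : ∀ c : Fin (lam 0), (L c).length = conj lam c.1 - conj mu c.1 := by
      intro c
      have h2 : conj mu c.1 + (lam 0 - c.1) + (L c).length = conj lam c.1 + (lam 0 - c.1) := len c
      have h3 := hAB c.1
      omega
    refine ⟨⟨fun c p => (L c)[p.1]'(by rw [len']; exact p.2), ?_, ?_⟩, Finset.mem_univ _, ?_⟩
    · intro c p q hpq
      exact List.pairwise_iff_getElem.1 (hL c) _ _ _ _ hpq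
    · intro c hc p q hpq hlt
      have hd := hB c ⟨c.1 + 1, hc⟩ rfl
      have e1 : B c + p.1 - 1 - B ⟨c.1 + 1, hc⟩ = q.1 := by
        simp only [B]
        omega
      refine hv (B c + p.1) c ⟨c.1 + 1, hc⟩ ⟨rfl, by omega,
        (L ⟨c.1 + 1, hc⟩)[q.1]'(by rw [len']; exact q.2), ?_, ?_⟩
      · rw [e1]
        exact List.getElem?_eq_getElem _
      · intro y hy
        rw [Nat.add_sub_cancel_left] at hy
        obtain ⟨_, rfl⟩ := List.getElem?_eq_some_iff.1 hy
        exact hlt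
    · simp only [Prod.mk.injEq, true_and]
      funext c
      apply List.ext_getElem
      · simp [len']
      · intro i h1 h2
        simp
  · rintro ⟨T, hT⟩ -
    simp only [uT, wt, Equiv.Perm.sign_one, List.map_ofFn, List.prod_ofFn]
    simp
end

section
/- For a (3+1)-free finite poset P and cylindric shape λ/μ/d, the P-cylindric Schur function s^P_{λ/μ/d}(u) := Σ_{k ∈ Z^{λ_1}, Σk_i = 0} det[e^P_{k_i(λ_1+d) + λ'_i − μ'_j − i + j}(u)] equals Σ_{T ∈ CT_P(λ/μ/d)} u^T, the weight generating function of cylindric P-tableaux of shape λ/μ/d. In particular s^P_{λ/μ/d}(u) is a nonnegative integer combination of monomials in the u variables. -/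
open MvPolynomial
open scoped Classical

namespace CylP

section Core
set_option linter.unusedSectionVars false
variable {Q : Type*} [PartialOrder Q] [BoundedOrder Q] {l : ℕ}

/-- `g` is a column with cells in the (shifted) positions `b ≤ x < E`. -/
structure ColOK (b E : ℤ) (g : ℤ → Q) : Prop where
  le : b ≤ E
  bot : ∀ x, g x = ⊥ ↔ x < b
  top : ∀ x, g x = ⊤ ↔ E ≤ x
  lt : ∀ x y, x < y → b ≤ y → x < E → g x < g y

theorem ColOK.mono {b E : ℤ} {g : ℤ → Q} (h : ColOK b E g) {x y : ℤ} (hxy : x ≤ y) :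
    g x ≤ g y := by
  rcases hxy.eq_or_lt with rfl | hlt
  · exact le_rfl
  by_cases h1 : b ≤ y
  · by_cases h2 : x < E
    · exact (h.lt x y hlt h1 h2).le
    · rw [(h.top y).2 (by omega)]; exact le_top
  · rw [(h.bot x).2 (by omega)]; exact bot_le

theorem ColOK.ge {b E : ℤ} {g : ℤ → Q} (h : ColOK b E g) {x : ℤ} (hx : g x ≠ ⊥) : b ≤ x := by
  by_contra hc
  exact hx ((h.bot x).2 (by omega))

theorem ColOK.lt_end {b E : ℤ} {g : ℤ → Q} (h : ColOK b E g) {x : ℤ} (hx : g x ≠ ⊤) :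
    x < E := by
  by_contra hc
  exact hx ((h.top x).2 (by omega))

/-- Position `x` of column `j` is an intersection point with witness in column `i`,
translated by `n` periods. -/
def IsI (N : ℤ) (F : Fin l → ℤ → Q) (j : Fin l) (x : ℤ) (i : Fin l) (n : ℤ) : Prop :=
  ((i : ℕ) : ℤ) < ((j : ℕ) : ℤ) + n * l ∧ F j x ≠ ⊥ ∧ F j x < F i (x + 1 - n * N)

/-- Swapping the tails of columns `i0` and `j0`. -/
def swp (N : ℤ) (F : Fin l → ℤ → Q) (j0 : Fin l) (x0 : ℤ) (i0 : Fin l) (n0 : ℤ) :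
    Fin l → ℤ → Q := fun c x =>
  if c = i0 ∧ x0 - n0 * N < x then F j0 (x + n0 * N)
  else if c = j0 ∧ x0 < x then F i0 (x - n0 * N)
  else F c x

/-- Swapping the ends. -/
def swE (N : ℤ) (E : Fin l → ℤ) (j0 : Fin l) (i0 : Fin l) (n0 : ℤ) : Fin l → ℤ := fun c =>
  if c = i0 then E j0 - n0 * N else if c = j0 then E i0 + n0 * N else E c

/-- An array with a chosen first intersection point. -/
structure Good (N : ℤ) (b E : Fin l → ℤ) (F : Fin l → ℤ → Q) (j0 : Fin l) (x0 : ℤ)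
    (i0 : Fin l) (n0 : ℤ) : Prop where
  col : ∀ c, ColOK (b c) (E c) (F c)
  isI : IsI N F j0 x0 i0 n0
  first : ∀ x, x < x0 → ∀ i n, ¬ IsI N F j0 x i n

variable {N : ℤ} {b E : Fin l → ℤ} {F : Fin l → ℤ → Q} {j0 i0 : Fin l} {x0 n0 : ℤ}

theorem Good.ne (hN : 0 < N) (h : Good N b E F j0 x0 i0 n0) : i0 ≠ j0 := by
  rintro rfl
  obtain ⟨h1, h2, h3⟩ := h.isI
  have hn : 0 < n0 := by
    by_contra hc
    have : n0 * (l : ℤ) ≤ 0 := mul_nonpos_of_nonpos_of_nonneg (by omega) (by omega)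
    omega
  have : 1 ≤ n0 * N := by nlinarith
  exact absurd h3 (not_lt_of_ge ((h.col i0).mono (by linarith)))

theorem swp_i_tail {x : ℤ} (hx : x0 - n0 * N < x) : swp N F j0 x0 i0 n0 i0 x = F j0 (x + n0 * N) := by
  simp [swp, hx]

theorem swp_i_head {x : ℤ} (hne : i0 ≠ j0) (hx : x ≤ x0 - n0 * N) :
    swp N F j0 x0 i0 n0 i0 x = F i0 x := by
  simp [swp, hx, hne]

theorem swp_j_tail {x : ℤ} (hne : i0 ≠ j0) (hx : x0 < x) :
    swp N F j0 x0 i0 n0 j0 x = F i0 (x - n0 * N) := by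
  simp [swp, hx, hne.symm]

theorem swp_j_head {x : ℤ} (hne : i0 ≠ j0) (hx : x ≤ x0) :
    swp N F j0 x0 i0 n0 j0 x = F j0 x := by
  simp [swp, not_lt.2 hx, hne.symm]

theorem swp_other {c : Fin l} {x : ℤ} (h1 : c ≠ i0) (h2 : c ≠ j0) :
    swp N F j0 x0 i0 n0 c x = F c x := by
  simp [swp, h1, h2]

theorem swp_swp (hne : i0 ≠ j0) :
    swp N (swp N F j0 x0 i0 n0) j0 x0 i0 n0 = F := by
  funext c x
  by_cases hc : c = i0
  · subst hc
    by_cases hx : x0 - n0 * N < x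
    · rw [swp_i_tail hx, swp_j_tail hne (by linarith)]; congr 1; ring
    · rw [swp_i_head hne (by linarith), swp_i_head hne (by linarith)]
  by_cases hc' : c = j0
  · subst hc'
    by_cases hx : x0 < x
    · rw [swp_j_tail hne hx, swp_i_tail (by linarith)]; congr 1; ring
    · rw [swp_j_head hne (by linarith), swp_j_head hne (by linarith)]
  rw [swp_other hc hc', swp_other hc hc']

theorem Good.v_lt_tail_i (h : Good N b E F j0 x0 i0 n0) {x : ℤ} (hx : x0 - n0 * N < x) :
    F j0 x0 < F i0 x :=
  h.isI.2.2.trans_le ((h.col i0).mono (by linarith))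

theorem Good.v_lt_tail_j (h : Good N b E F j0 x0 i0 n0) {x : ℤ} (hx : x0 < x) :
    F j0 x0 < F j0 x := by
  have h1 := (h.col j0).ge h.isI.2.1
  exact (h.col j0).lt _ _ hx (by omega) ((h.col j0).lt_end h.isI.2.2.ne_top)

/-- Positions whose value is not above the chosen one do not move. -/
theorem Good.swp_eq (hN : 0 < N) (h : Good N b E F j0 x0 i0 n0) {j : Fin l} {x : ℤ}
    (hv : ¬ F j0 x0 < F j x) : swp N F j0 x0 i0 n0 j x = F j x := by
  have hne := h.ne hN
  by_cases hc : j = i0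
  · subst hc
    by_cases hx : x0 - n0 * N < x
    · exact absurd (h.v_lt_tail_i hx) hv
    · exact swp_i_head hne (by linarith)
  by_cases hc' : j = j0
  · subst hc'
    by_cases hx : x0 < x
    · exact absurd (h.v_lt_tail_j hx) hv
    · exact swp_j_head hne (by linarith)
  exact swp_other hc hc'

theorem swp_isI_self (hN : 0 < N) (h : Good N b E F j0 x0 i0 n0) :
    IsI N (swp N F j0 x0 i0 n0) j0 x0 i0 n0 := by
  have hne := h.ne hN
  refine ⟨h.isI.1, ?_, ?_⟩
  · rw [swp_j_head hne le_rfl]; exact h.isI.2.1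
  · rw [swp_j_head hne le_rfl, swp_i_tail (by linarith)]
    exact h.v_lt_tail_j (by linarith)

/-- Columns stay columns. -/
theorem swp_col (hN : 0 < N) (H : ∀ a c e x : Q, a < c → c < e → x < e ∨ a < x)
    (hb : ∀ (i j : Fin l) (n : ℤ), ((i : ℕ) : ℤ) < ((j : ℕ) : ℤ) + n * l → b j - n * N < b i)
    (h : Good N b E F j0 x0 i0 n0) (c : Fin l) :
    ColOK (b c) (swE N E j0 i0 n0 c) (swp N F j0 x0 i0 n0 c) := by
  have hne := h.ne hN
  have hI := h.isI
  have hci := h.col i0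
  have hcj := h.col j0
  have hbb := hb _ _ _ hI.1
  have e1 : b j0 ≤ x0 := hcj.ge hI.2.1
  have e2 : x0 < E j0 := hcj.lt_end hI.2.2.ne_top
  have e3 : b i0 ≤ x0 + 1 - n0 * N := hci.ge (ne_bot_of_gt hI.2.2)
  -- the key non-crossing fact just before the intersection
  have key : b i0 ≤ x0 - n0 * N → ¬ F j0 (x0 - 1) < F i0 (x0 - n0 * N) := by
    intro hle hlt
    refine h.first (x0 - 1) (by omega) i0 n0 ⟨hI.1, ?_, ?_⟩
    · intro hbot
      have := (hcj.bot _).1 hbot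
      linarith
    · have : x0 - 1 + 1 - n0 * N = x0 - n0 * N := by ring
      rwa [this]
  have e4 : x0 - n0 * N < E i0 := by
    by_contra hc
    have htop := (hci.top (x0 - n0 * N)).2 (by linarith)
    have hge : b i0 ≤ x0 - n0 * N := hci.le.trans (by linarith)
    have hnot := key hge
    rw [htop] at hnot
    exact hnot (lt_top_iff_ne_top.2 fun ht => by
      have := (hcj.top _).1 ht
      linarith)
  by_cases hc : c = i0
  · subst hc
    have hE : swE N E j0 c n0 c = E j0 - n0 * N := by simp [swE]
    rw [hE]
    have tail : ∀ x, x0 - n0 * N < x → swp N F j0 x0 c n0 c x = F j0 (x + n0 * N) :=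
      fun x hx => swp_i_tail hx
    have head : ∀ x, x ≤ x0 - n0 * N → swp N F j0 x0 c n0 c x = F c x :=
      fun x hx => swp_i_head hne hx
    refine ⟨by linarith, ?_, ?_, ?_⟩
    · intro x
      by_cases hx : x0 - n0 * N < x
      · rw [tail x hx, hcj.bot]
        constructor <;> intro <;> linarith
      · rw [head x (by linarith), hci.bot]
    · intro x
      by_cases hx : x0 - n0 * N < x
      · rw [tail x hx, hcj.top]
        constructor <;> intro <;> linarith
      · rw [head x (by linarith), hci.top]
        constructor <;> intro <;> linarith
    · intro x y hxy hy hx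
      by_cases hx' : x0 - n0 * N < x
      · rw [tail x hx', tail y (by linarith)]
        exact hcj.lt _ _ (by linarith) (by linarith) (by linarith)
      by_cases hy' : x0 - n0 * N < y
      · rw [head x (by linarith), tail y hy']
        have h1 : F c x ≤ F c (x0 - n0 * N) := hci.mono (by linarith)
        have h2 : F j0 (x0 + 1) ≤ F j0 (y + n0 * N) := hcj.mono (by linarith)
        refine h1.trans_lt (lt_of_lt_of_le ?_ h2)
        by_cases hbi : b c ≤ x0 - n0 * N
        · have c1 : F j0 (x0 - 1) < F j0 x0 := hcj.lt _ _ (by linarith) e1 (by linarith)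
          have c2 : F j0 x0 < F j0 (x0 + 1) := hcj.lt _ _ (by linarith) (by linarith) e2
          exact (H _ _ _ (F c (x0 - n0 * N)) c1 c2).resolve_right (key hbi)
        · rw [(hci.bot _).2 (by linarith)]
          refine bot_lt_iff_ne_bot.2 fun hbot => ?_
          have := (hcj.bot _).1 hbot
          linarith
      · rw [head x (by linarith), head y (by linarith)]
        exact hci.lt _ _ hxy hy (by linarith)
  by_cases hc' : c = j0
  · subst hc'
    have hE : swE N E c i0 n0 c = E i0 + n0 * N := by simp [swE, hne.symm]
    rw [hE]
    have tail : ∀ x, x0 < x → swp N F c x0 i0 n0 c x = F i0 (x - n0 * N) :=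
      fun x hx => swp_j_tail hne hx
    have head : ∀ x, x ≤ x0 → swp N F c x0 i0 n0 c x = F c x :=
      fun x hx => swp_j_head hne hx
    refine ⟨by linarith, ?_, ?_, ?_⟩
    · intro x
      by_cases hx : x0 < x
      · rw [tail x hx, hci.bot]
        constructor <;> intro <;> linarith
      · rw [head x (by linarith), hcj.bot]
    · intro x
      by_cases hx : x0 < x
      · rw [tail x hx, hci.top]
        constructor <;> intro <;> linarith
      · rw [head x (by linarith), hcj.top]
        constructor <;> intro <;> linarith
    · intro x y hxy hy hx
      by_cases hx' : x0 < x
      · rw [tail x hx', tail y (by linarith)]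
        exact hci.lt _ _ (by linarith) (by linarith) (by linarith)
      by_cases hy' : x0 < y
      · rw [head x (by linarith), tail y hy']
        exact (hcj.mono (by linarith : x ≤ x0)).trans_lt (h.v_lt_tail_i (by linarith))
      · rw [head x (by linarith), head y (by linarith)]
        exact hcj.lt _ _ hxy hy (by linarith)
  · have hE : swE N E j0 i0 n0 c = E c := by simp [swE, hc, hc']
    have hF : swp N F j0 x0 i0 n0 c = F c := funext fun x => swp_other hc hc'
    rw [hE, hF]
    exact h.col c

theorem swp_good (hN : 0 < N) (H : ∀ a c e x : Q, a < c → c < e → x < e ∨ a < x)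
    (hb : ∀ (i j : Fin l) (n : ℤ), ((i : ℕ) : ℤ) < ((j : ℕ) : ℤ) + n * l → b j - n * N < b i)
    (h : Good N b E F j0 x0 i0 n0) :
    Good N b (swE N E j0 i0 n0) (swp N F j0 x0 i0 n0) j0 x0 i0 n0 := by
  have hne := h.ne hN
  refine ⟨swp_col hN H hb h, swp_isI_self hN h, ?_⟩
  rintro x hx i n ⟨h1, h2, h3⟩
  rw [swp_j_head hne hx.le] at h2 h3
  refine h.first x hx i n ⟨h1, h2, ?_⟩
  have hle : F j0 x ≤ F j0 x0 := (h.col j0).mono hx.le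
  by_cases hc : i = i0
  · subst hc
    by_cases hz : x0 - n0 * N < x + 1 - n * N
    · exact hle.trans_lt (h.v_lt_tail_i hz)
    · rwa [swp_i_head hne (by linarith)] at h3
  by_cases hc' : i = j0
  · subst hc'
    by_cases hz : x0 < x + 1 - n * N
    · exact hle.trans_lt (h.v_lt_tail_j hz)
    · rwa [swp_j_head hne (by linarith)] at h3
  rwa [swp_other hc hc'] at h3

theorem fin_affine_inj {j j' : Fin l} {n n' : ℤ}
    (h : ((j : ℕ) : ℤ) + n * l = ((j' : ℕ) : ℤ) + n' * l) : j = j' ∧ n = n' := by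
  have hj := j.2
  have hj' := j'.2
  have h1 : ((j : ℕ) : ℤ) = ((j' : ℕ) : ℤ) := by
    have e := congrArg (· % (l : ℤ)) h
    simp only [Int.add_mul_emod_self_right] at e
    rwa [Int.emod_eq_of_lt (by omega) (by omega), Int.emod_eq_of_lt (by omega) (by omega)] at e
  refine ⟨Fin.ext (by omega), ?_⟩
  have h2 : n * (l : ℤ) = n' * l := by linarith
  exact mul_right_cancel₀ (by omega : (l : ℤ) ≠ 0) h2

/-- Intersection points with value not above the chosen one stay intersection points. -/
theorem swp_pt (hN : 0 < N) (H : ∀ a c e x : Q, a < c → c < e → x < e ∨ a < x)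
    (hb : ∀ (i j : Fin l) (n : ℤ), ((i : ℕ) : ℤ) < ((j : ℕ) : ℤ) + n * l → b j - n * N < b i)
    (h : Good N b E F j0 x0 i0 n0) {j : Fin l} {x : ℤ} (hv : ¬ F j0 x0 < F j x)
    (hp : ∃ i n, IsI N F j x i n) : ∃ i n, IsI N (swp N F j0 x0 i0 n0) j x i n := by
  have hne := h.ne hN
  have hI := h.isI
  have hcj := h.col j0
  have e1 : b j0 ≤ x0 := hcj.ge hI.2.1
  have e2 : x0 < E j0 := hcj.lt_end hI.2.2.ne_top
  obtain ⟨i, n, h1, h2, h3⟩ := hp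
  unfold IsI
  rw [h.swp_eq hN hv]
  by_cases hc : i = i0
  · subst hc
    by_cases hz : x0 - n0 * N < x + 1 - n * N
    · rcases lt_trichotomy (((j0 : ℕ) : ℤ) + n0 * l) (((j : ℕ) : ℤ) + n * l) with hlt | heq | hgt
      · refine ⟨j0, n - n0, by linarith, h2, ?_⟩
        rw [swp_j_tail hne (by linarith)]
        convert h3 using 2
        ring
      · obtain ⟨rfl, rfl⟩ := fin_affine_inj heq
        have hx : x = x0 := by
          have : ¬ x0 < x := fun hlt => hv (h.v_lt_tail_j hlt)
          have : x0 < x + 1 := by linarith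
          omega
        subst hx
        have := swp_isI_self hN h
        refine ⟨i, n0, h1, h2, ?_⟩
        have h4 := this.2.2
        rwa [swp_j_head hne le_rfl] at h4
      · refine ⟨i, n, h1, h2, ?_⟩
        rw [swp_i_tail hz]
        have hge : x0 ≤ x + (n0 - n) * N := by
          have : x0 < x + (n0 - n) * N + 1 := by linarith
          omega
        have c2 : F j0 x0 < F j0 (x0 + 1) := hcj.lt _ _ (by linarith) (by linarith) e2
        rcases hge.eq_or_lt with heq | hlt
        · have c1 : F j0 (x0 - 1) < F j0 x0 := hcj.lt _ _ (by linarith) e1 (by linarith)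
          have hpos : x + 1 - n * N + n0 * N = x0 + 1 := by linarith
          rw [hpos]
          refine (H _ _ _ (F j x) c1 c2).resolve_right fun hbad => ?_
          have hlt' : ((j : ℕ) : ℤ) < ((j0 : ℕ) : ℤ) + (n0 - n) * l := by linarith
          refine h.first (x0 - 1) (by omega) j (n0 - n) ⟨hlt', ?_, ?_⟩
          · intro hbot
            have k1 := (hcj.bot _).1 hbot
            have k2 := hb _ _ _ hlt'
            have k3 := (h.col j).ge h2
            linarith
          · have : x0 - 1 + 1 - (n0 - n) * N = x := by linarith
            rwa [this]
        · by_cases ht : F j0 (x + 1 - n * N + n0 * N) = ⊤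
          · rw [ht]; exact h3.trans_le le_top
          · have k := hcj.lt_end ht
            have c3 : F j0 (x0 + 1) < F j0 (x + 1 - n * N + n0 * N) :=
              hcj.lt _ _ (by linarith) (by linarith) (by linarith)
            exact (H _ _ _ (F j x) c2 c3).resolve_right hv
    · refine ⟨i, n, h1, h2, ?_⟩
      rwa [swp_i_head hne (by linarith)]
  by_cases hc' : i = j0
  · subst hc'
    by_cases hz : x0 < x + 1 - n * N
    · have := hI.1
      refine ⟨i0, n + n0, by linarith, h2, ?_⟩
      rw [swp_i_tail (by linarith)]
      convert h3 using 2
      ring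
    · refine ⟨i, n, h1, h2, ?_⟩
      rwa [swp_j_head hne (by linarith)]
  · refine ⟨i, n, h1, h2, ?_⟩
    rwa [swp_other hc hc']

/-- The set of `P`-minimal intersection points. -/
def SPt (N : ℤ) (F : Fin l → ℤ → Q) : Set (Fin l × ℤ) :=
  {p | (∃ i n, IsI N F p.1 p.2 i n) ∧
    ∀ j x, (∃ i n, IsI N F j x i n) → ¬ F j x < F p.1 p.2}

/-- The set of witnesses of an intersection point. -/
def WPt (N : ℤ) (F : Fin l → ℤ → Q) (p : Fin l × ℤ) : Set (Fin l × ℤ) :=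
  {q | IsI N F p.1 p.2 q.1 q.2}

theorem good_of_mem (hcol : ∀ c, ColOK (b c) (E c) (F c)) (hs : (j0, x0) ∈ SPt N F)
    (hI : IsI N F j0 x0 i0 n0) : Good N b E F j0 x0 i0 n0 := by
  refine ⟨hcol, hI, fun x hx i n h => ?_⟩
  refine hs.2 j0 x ⟨i, n, h⟩ ((hcol j0).lt _ _ hx ((hcol j0).ge hI.2.1) ?_)
  exact hx.trans ((hcol j0).lt_end hI.2.2.ne_top)

theorem swp_SPt_sub (hN : 0 < N) (H : ∀ a c e x : Q, a < c → c < e → x < e ∨ a < x)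
    (hb : ∀ (i j : Fin l) (n : ℤ), ((i : ℕ) : ℤ) < ((j : ℕ) : ℤ) + n * l → b j - n * N < b i)
    (h : Good N b E F j0 x0 i0 n0) : SPt N F ⊆ SPt N (swp N F j0 x0 i0 n0) := by
  have hne := h.ne hN
  have hg := swp_good hN H hb h
  rintro ⟨j, x⟩ ⟨hp, hmin⟩
  simp only at hp hmin
  have hv : ¬ F j0 x0 < F j x := hmin j0 x0 ⟨i0, n0, h.isI⟩
  refine ⟨swp_pt hN H hb h hv hp, ?_⟩
  intro j' x' hp' hlt
  simp only [h.swp_eq hN hv] at hlt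
  have hv' : ¬ swp N F j0 x0 i0 n0 j0 x0 < swp N F j0 x0 i0 n0 j' x' := by
    rw [swp_j_head hne le_rfl]
    exact fun hc => hv (hc.trans hlt)
  have hp2 := swp_pt hN H hb hg hv' hp'
  have he := hg.swp_eq hN hv'
  rw [swp_swp hne] at hp2 he
  rw [← he] at hlt
  exact hmin j' x' hp2 hlt

theorem swp_SPt (hN : 0 < N) (H : ∀ a c e x : Q, a < c → c < e → x < e ∨ a < x)
    (hb : ∀ (i j : Fin l) (n : ℤ), ((i : ℕ) : ℤ) < ((j : ℕ) : ℤ) + n * l → b j - n * N < b i)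
    (h : Good N b E F j0 x0 i0 n0) : SPt N (swp N F j0 x0 i0 n0) = SPt N F := by
  refine Set.Subset.antisymm ?_ (swp_SPt_sub hN H hb h)
  have := swp_SPt_sub hN H hb (swp_good hN H hb h)
  rwa [swp_swp (h.ne hN)] at this

theorem swp_WPt_sub (hN : 0 < N) (h : Good N b E F j0 x0 i0 n0) :
    WPt N F (j0, x0) ⊆ WPt N (swp N F j0 x0 i0 n0) (j0, x0) := by
  have hne := h.ne hN
  rintro ⟨i, n⟩ ⟨h1, h2, h3⟩
  simp only at h1 h2 h3
  refine ⟨h1, ?_, ?_⟩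
  · simpa only [swp_j_head hne le_rfl] using h2
  simp only [swp_j_head hne le_rfl]
  by_cases hc : i = i0
  · subst hc
    by_cases hz : x0 - n0 * N < x0 + 1 - n * N
    · rw [swp_i_tail hz]
      exact h.v_lt_tail_j (by linarith)
    · rwa [swp_i_head hne (by linarith)]
  by_cases hc' : i = j0
  · subst hc'
    by_cases hz : x0 < x0 + 1 - n * N
    · rw [swp_j_tail hne hz]
      exact h.v_lt_tail_i (by linarith)
    · rwa [swp_j_head hne (by linarith)]
  · rwa [swp_other hc hc']

theorem swp_WPt (hN : 0 < N) (H : ∀ a c e x : Q, a < c → c < e → x < e ∨ a < x)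
    (hb : ∀ (i j : Fin l) (n : ℤ), ((i : ℕ) : ℤ) < ((j : ℕ) : ℤ) + n * l → b j - n * N < b i)
    (h : Good N b E F j0 x0 i0 n0) :
    WPt N (swp N F j0 x0 i0 n0) (j0, x0) = WPt N F (j0, x0) := by
  refine Set.Subset.antisymm ?_ (swp_WPt_sub hN h)
  have := swp_WPt_sub hN (swp_good hN H hb h)
  rwa [swp_swp (h.ne hN)] at this

theorem SPt_nonempty [Finite Q] (h : ∃ j x i n, IsI N F j x i n) : (SPt N F).Nonempty := by
  let V : Set Q := {v | ∃ j x, (∃ i n, IsI N F j x i n) ∧ F j x = v}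
  have hV : V.Nonempty := by
    obtain ⟨j, x, i, n, h⟩ := h
    exact ⟨F j x, j, x, ⟨i, n, h⟩, rfl⟩
  obtain ⟨v, ⟨j, x, hp, rfl⟩, hmin⟩ :=
    (Finite.wellFounded_of_trans_of_irrefl (α := Q) (· < ·)).has_min V hV
  exact ⟨(j, x), hp, fun j' x' hp' hlt => hmin _ ⟨j', x', hp', rfl⟩ hlt⟩

/-- The position permutation behind `swp`. -/
def swPos (N : ℤ) (j0 : Fin l) (x0 : ℤ) (i0 : Fin l) (n0 : ℤ) (p : Fin l × ℤ) : Fin l × ℤ :=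
  if p.1 = i0 ∧ x0 - n0 * N < p.2 then (j0, p.2 + n0 * N)
  else if p.1 = j0 ∧ x0 < p.2 then (i0, p.2 - n0 * N)
  else p

theorem swp_eq_swPos (c : Fin l) (x : ℤ) :
    swp N F j0 x0 i0 n0 c x =
      F (swPos N j0 x0 i0 n0 (c, x)).1 (swPos N j0 x0 i0 n0 (c, x)).2 := by
  unfold swp swPos
  simp only
  split_ifs <;> rfl

theorem swPos_invol (hne : i0 ≠ j0) : Function.Involutive (swPos N j0 x0 i0 n0) := by
  rintro ⟨c, x⟩
  unfold swPos
  by_cases hc : c = i0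
  · subst hc
    by_cases hx : x0 - n0 * N < x
    · have : x0 < x + n0 * N := by linarith
      simp [hx, this, hne.symm]
    · simp [hx, hne]
  by_cases hc' : c = j0
  · subst hc'
    by_cases hx : x0 < x
    · simp [hx, hc]
    · simp [hx, hc]
  simp [hc, hc']

/-- Arrays without adjacent intersections have no intersections. -/
theorem no_isI_of_adj (H : ∀ a c e x : Q, a < c → c < e → x < e ∨ a < x)
    (hb : ∀ (i j : Fin l) (n : ℤ), ((i : ℕ) : ℤ) < ((j : ℕ) : ℤ) + n * l → b j - n * N < b i)
    (hcol : ∀ c, ColOK (b c) (E c) (F c))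
    (hadj : ∀ (i j : Fin l) (n x : ℤ), ((i : ℕ) : ℤ) + 1 = ((j : ℕ) : ℤ) + n * l →
      ¬ IsI N F j x i n) :
    ∀ (D : ℕ) (i j : Fin l) (n x : ℤ), ((i : ℕ) : ℤ) + 1 + D = ((j : ℕ) : ℤ) + n * l →
      ¬ IsI N F j x i n := by
  intro D
  induction D with
  | zero => intro i j n x h; exact hadj i j n x (by simpa using h)
  | succ D ih =>
    rintro i j n x hD ⟨h1, h2, h3⟩
    push_cast at hD
    obtain ⟨k, n', hk⟩ : ∃ (k : Fin l) (n' : ℤ), ((i : ℕ) : ℤ) + 1 = ((k : ℕ) : ℤ) + n' * l := by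
      have := i.2
      by_cases hi : (i : ℕ) + 1 < l
      · exact ⟨⟨i + 1, hi⟩, 0, by simp⟩
      · exact ⟨⟨0, by omega⟩, 1, by simp; omega⟩
    have hbik := hb i k n' (by linarith)
    have hkj : ((k : ℕ) : ℤ) + 1 + D = ((j : ℕ) : ℤ) + (n - n') * l := by linarith
    have hbkj := hb k j (n - n') (by linarith)
    have g1 : b i ≤ x + 1 - n * N := (hcol i).ge (ne_bot_of_gt h3)
    have g2 : b j ≤ x := (hcol j).ge h2
    have g3 : b k ≤ x - (n - n') * N := by
      have : b k < x - (n - n') * N + 1 := by linarith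
      omega
    have g4 : x < E j := (hcol j).lt_end h3.ne_top
    have hu : F k (x - (n - n') * N) ≠ ⊥ := fun hbot => by
      have := ((hcol k).bot _).1 hbot
      linarith
    have c1 : F j (x - 1) < F j x := (hcol j).lt _ _ (by linarith) g2 (by linarith)
    rcases H _ _ _ (F k (x - (n - n') * N)) c1 h3 with hA | hB
    · refine hadj i k n' (x - (n - n') * N) hk ⟨by linarith, hu, ?_⟩
      convert hA using 2
      ring
    · refine ih k j (n - n') (x - 1) hkj ⟨by linarith, ?_, ?_⟩
      · intro hbot
        have := ((hcol j).bot _).1 hbot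
        linarith
      · convert hB using 2
        ring

/-- Without intersections the ends are (affinely) strictly decreasing. -/
theorem ends_lt
    (hb : ∀ (i j : Fin l) (n : ℤ), ((i : ℕ) : ℤ) < ((j : ℕ) : ℤ) + n * l → b j - n * N < b i)
    (hcol : ∀ c, ColOK (b c) (E c) (F c)) (hno : ∀ j x i n, ¬ IsI N F j x i n)
    (i j : Fin l) (n : ℤ) (hij : ((i : ℕ) : ℤ) < ((j : ℕ) : ℤ) + n * l) :
    E j - n * N < E i := by
  have h1 := hb i j n hij
  have h2 := (hcol i).le
  have h3 := (hcol j).le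
  by_contra hc
  have hjE : b j < E j := by linarith
  refine hno j (E j - 1) i n ⟨hij, ?_, ?_⟩
  · intro hbot
    have := ((hcol j).bot _).1 hbot
    omega
  · have ht : F i (E j - 1 + 1 - n * N) = ⊤ := ((hcol i).top _).2 (by linarith)
    rw [ht]
    refine lt_top_iff_ne_top.2 fun ht' => ?_
    have := ((hcol j).top _).1 ht'
    omega

/-- Without intersections the affine permutation is trivial. -/
theorem perm_trivial {a : Fin l → ℤ} {κ : Fin l → ℤ} {σ : Equiv.Perm (Fin l)}
    (hb : ∀ (i j : Fin l) (n : ℤ), ((i : ℕ) : ℤ) < ((j : ℕ) : ℤ) + n * l → b j - n * N < b i)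
    (ha : ∀ (i j : Fin l) (n : ℤ), ((i : ℕ) : ℤ) < ((j : ℕ) : ℤ) + n * l → a j - n * N < a i)
    (hκ : ∑ i, κ i = 0)
    (hcol : ∀ c, ColOK (b c) (κ c * N + a (σ c)) (F c)) (hno : ∀ j x i n, ¬ IsI N F j x i n) :
    κ = 0 ∧ σ = 1 := by
  have hE := ends_lt hb hcol hno
  let w : Fin l → ℤ := fun j => ((σ j : ℕ) : ℤ) - κ j * l
  have hw : ∀ (i j : Fin l) (n : ℤ), ((i : ℕ) : ℤ) < ((j : ℕ) : ℤ) + n * l →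
      w i < w j + n * l := by
    intro i j n hij
    have h1 := hE i j n hij
    by_contra hc
    simp only [w, not_lt] at hc
    rcases hc.eq_or_lt with heq | hlt
    · have : ((σ j : ℕ) : ℤ) + (n + κ i - κ j) * l = ((σ i : ℕ) : ℤ) + 0 * l := by linarith
      obtain ⟨e1, e2⟩ := fin_affine_inj this
      rw [e1] at h1
      have : (n + κ i - κ j) * N = 0 := by rw [e2]; ring
      linarith
    · have := ha (σ j) (σ i) (κ j - κ i - n) (by linarith)
      linarith
  have hstep : ∀ m : ℕ, ∀ (i j : Fin l), (j : ℕ) = i + m → w i + m ≤ w j := by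
    intro m
    induction m with
    | zero =>
      intro i j hij
      have : i = j := Fin.ext (by omega)
      subst this; simp
    | succ m ih =>
      intro i j hij
      have hjl := j.2
      have h1 := ih i ⟨i + m, by omega⟩ rfl
      have h2 := hw ⟨i + m, by omega⟩ j 0 (by simp; omega)
      push_cast
      linarith
  have hconst : ∀ i j : Fin l, w i - (i : ℕ) ≤ w j - (j : ℕ) := by
    intro i j
    have hl : 0 < l := i.pos
    have hi := i.2
    have hj := j.2
    let z : Fin l := ⟨0, hl⟩
    let t : Fin l := ⟨l - 1, by omega⟩
    have h1 := hstep (l - 1 - i) i t (by simp [t]; omega)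
    have h2 := hstep j z j (by simp [z])
    have h3 := hw t z 1 (by simp [t, z]; omega)
    have : ((l - 1 - i : ℕ) : ℤ) = l - 1 - i := by omega
    rw [this] at h1
    linarith
  have hsum : ∑ i, (w i - (i : ℕ)) = 0 := by
    simp only [w, Finset.sum_sub_distrib, ← Finset.sum_mul, hκ]
    rw [Equiv.sum_comp σ (fun j : Fin l => ((j : ℕ) : ℤ))]
    simp
  have hwid : ∀ i, w i = (i : ℕ) := by
    intro i
    have hall : ∀ j, w j - (j : ℕ) = w i - (i : ℕ) := fun j =>
      le_antisymm (hconst j i) (hconst i j)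
    rw [Finset.sum_congr rfl (fun j _ => hall j)] at hsum
    simp only [Finset.sum_const, Finset.card_univ, Fintype.card_fin, nsmul_eq_mul] at hsum
    have hl : (l : ℤ) ≠ 0 := by have := i.pos; omega
    rcases mul_eq_zero.1 hsum with h | h
    · exact absurd h hl
    · linarith
  have hfin : ∀ i, σ i = i ∧ κ i = 0 := by
    intro i
    have h := hwid i
    simp only [w] at h
    have : ((σ i : ℕ) : ℤ) + 0 * l = ((i : ℕ) : ℤ) + κ i * l := by linarith
    obtain ⟨e1, e2⟩ := fin_affine_inj this
    exact ⟨e1, e2.symm⟩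
  exact ⟨funext fun i => (hfin i).2, Equiv.ext fun i => (hfin i).1⟩

end Core

noncomputable section Sums
set_option linter.unusedSectionVars false
variable {P : Type*} [Fintype P] [PartialOrder P]

/-- Entries together with formal bottom (above the column) and top (below the column). -/
abbrev QQ (P : Type*) := WithBot (WithTop P)

theorem QQ_H (h31 : ThreePlusOneFree P) :
    ∀ a c e x : QQ P, a < c → c < e → x < e ∨ a < x := by
  intro a c e x hac hce
  induction x using WithBot.recBotCoe with
  | bot => left; exact lt_of_le_of_lt bot_le hce
  | coe x =>
    induction x using WithTop.recTopCoe with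
    | top => right; exact lt_of_lt_of_le hac le_top
    | coe x =>
      induction a using WithBot.recBotCoe with
      | bot => right; exact WithBot.bot_lt_coe _
      | coe a =>
        induction e using WithBot.recBotCoe with
        | bot => exact absurd hce not_lt_bot
        | coe e =>
          induction e using WithTop.recTopCoe with
          | top => left; exact WithBot.coe_lt_coe.2 (WithTop.coe_lt_top _)
          | coe e =>
            induction c using WithBot.recBotCoe with
            | bot => exact absurd hac not_lt_bot
            | coe c =>
              induction c using WithTop.recTopCoe with
              | top => exact absurd (WithBot.coe_lt_coe.1 hce) not_top_lt
              | coe c =>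
                induction a using WithTop.recTopCoe with
                | top => exact absurd (WithBot.coe_lt_coe.1 hac) not_top_lt
                | coe a =>
                  simp only [WithBot.coe_lt_coe, WithTop.coe_lt_coe] at hac hce ⊢
                  by_contra hcon
                  push Not at hcon
                  obtain ⟨h1, h2⟩ := hcon
                  refine h31 ⟨a, c, e, x, hac, hce, ?_, ?_, ?_⟩
                  · rintro (h | h)
                    · exact h1 (h.trans_lt (hac.trans hce))
                    · rcases h.eq_or_lt with rfl | h
                      · exact h1 (hac.trans hce)
                      · exact h2 h
                  · rintro (h | h)
                    · exact h1 (h.trans_lt hce)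
                    · exact h2 (hac.trans_le h)
                  · rintro (h | h)
                    · rcases h.eq_or_lt with rfl | h
                      · exact h2 (hac.trans hce)
                      · exact h1 h
                    · exact h2 ((hac.trans hce).trans_le h)

/-- The variable of an entry. -/
def toX : QQ P → MvPolynomial P ℤ :=
  WithBot.recBotCoe 1 (WithTop.recTopCoe 1 fun p => X p)

@[simp] theorem toX_bot : toX (⊥ : QQ P) = 1 := rfl
@[simp] theorem toX_top : toX (⊤ : QQ P) = 1 := rfl
@[simp] theorem toX_coe (p : P) : toX (((p : WithTop P) : QQ P)) = X p := rfl

/-- The column with first cell in position `b` and entries `h`. -/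
def ext (b : ℤ) (k : ℕ) (h : Fin k → P) : ℤ → QQ P := fun x =>
  if x < b then ⊥ else if hx : (x - b).toNat < k then ((h ⟨_, hx⟩ : WithTop P) : QQ P) else ⊤

theorem ext_cell (b : ℤ) (k : ℕ) (h : Fin k → P) (p : Fin k) (x : ℤ) (hx : x = b + (p : ℕ)) :
    ext b k h x = ((h p : WithTop P) : QQ P) := by
  subst hx
  have h1 : ¬ (b + ((p : ℕ) : ℤ) < b) := by omega
  have h2 : (b + ((p : ℕ) : ℤ) - b).toNat = p := by omega
  have h3 := p.2
  simp only [ext, h1, h2, if_false, h3, dif_pos]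

theorem ext_bot (b : ℤ) (k : ℕ) (h : Fin k → P) (x : ℤ) (hx : x < b) :
    ext b k h x = ⊥ := by simp [ext, hx]

theorem ext_top (b : ℤ) (k : ℕ) (h : Fin k → P) (x : ℤ) (hx : b + k ≤ x) :
    ext b k h x = ⊤ := by
  have h1 : ¬ (x < b) := by omega
  have h2 : ¬ ((x - b).toNat < k) := by omega
  simp only [ext, h1, h2, if_false, dif_neg, not_false_eq_true]

theorem pos_cases (b : ℤ) (k : ℕ) (x : ℤ) :
    x < b ∨ (∃ p : Fin k, x = b + (p : ℕ)) ∨ b + k ≤ x := by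
  by_cases h1 : x < b
  · exact Or.inl h1
  by_cases h2 : b + k ≤ x
  · exact Or.inr (Or.inr h2)
  · exact Or.inr (Or.inl ⟨⟨(x - b).toNat, by omega⟩, by simp; omega⟩)

theorem coe_ne_top' (p : P) : ((p : WithTop P) : QQ P) ≠ ⊤ := by
  intro h
  exact WithTop.coe_ne_top (WithBot.coe_injective (h : _ = ((⊤ : WithTop P) : QQ P)))

theorem bot_ne_top' : (⊥ : QQ P) ≠ ⊤ := bot_ne_top

theorem ext_ok (b : ℤ) (k : ℕ) (h : Fin k → P) (hs : ∀ p q : Fin k, p < q → h p < h q) :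
    ColOK b (b + k) (ext b k h) := by
  refine ⟨by omega, ?_, ?_, ?_⟩
  · intro x
    rcases pos_cases b k x with hx | ⟨p, hx⟩ | hx
    · simp [ext_bot b k h x hx, hx]
    · rw [ext_cell b k h p x hx]
      simp; omega
    · rw [ext_top b k h x hx]
      simp; omega
  · intro x
    rcases pos_cases b k x with hx | ⟨p, hx⟩ | hx
    · simp [ext_bot b k h x hx]; omega
    · rw [ext_cell b k h p x hx]
      have := p.2
      simp only [coe_ne_top', false_iff]; omega
    · rw [ext_top b k h x hx]
      simp; omega
  · intro x y hxy hy hx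
    rcases pos_cases b k x with hx' | ⟨p, hx'⟩ | hx'
    · rw [ext_bot b k h x hx']
      rcases pos_cases b k y with hy' | ⟨q, hy'⟩ | hy'
      · omega
      · rw [ext_cell b k h q y hy']; exact WithBot.bot_lt_coe _
      · rw [ext_top b k h y hy']; exact bot_lt_top
    · rw [ext_cell b k h p x hx']
      rcases pos_cases b k y with hy' | ⟨q, hy'⟩ | hy'
      · omega
      · rw [ext_cell b k h q y hy', WithBot.coe_lt_coe, WithTop.coe_lt_coe]
        exact hs p q (by rw [Fin.lt_def]; omega)
      · rw [ext_top b k h y hy']; exact lt_top_iff_ne_top.2 (coe_ne_top' _)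
    · omega

theorem ext_inj (b : ℤ) (k : ℕ) : Function.Injective (ext (P := P) b k) := by
  intro h h' he
  funext p
  have := congrFun he (b + (p : ℕ))
  rw [ext_cell b k h p _ rfl, ext_cell b k h' p _ rfl] at this
  exact WithTop.coe_injective (WithBot.coe_injective this)

theorem QQ_cases (q : QQ P) : q = ⊥ ∨ q = ⊤ ∨ ∃ p : P, q = ((p : WithTop P) : QQ P) := by
  induction q using WithBot.recBotCoe with
  | bot => exact Or.inl rfl
  | coe q =>
    induction q using WithTop.recTopCoe with
    | top => exact Or.inr (Or.inl rfl)
    | coe p => exact Or.inr (Or.inr ⟨p, rfl⟩)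

theorem exists_ext (b : ℤ) (k : ℕ) (g : ℤ → QQ P) (hg : ColOK b (b + k) g) :
    ∃ h : Fin k → P, (∀ p q : Fin k, p < q → h p < h q) ∧ ext b k h = g := by
  have hex : ∀ p : Fin k, ∃ v : P, g (b + (p : ℕ)) = ((v : WithTop P) : QQ P) := by
    intro p
    have := p.2
    rcases QQ_cases (g (b + (p : ℕ))) with h | h | h
    · have := (hg.bot _).1 h; omega
    · have := (hg.top _).1 h; omega
    · exact h
  choose h hh using hex
  refine ⟨h, ?_, ?_⟩
  · intro p q hpq
    have hp := p.2
    rw [Fin.lt_def] at hpq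
    have := hg.lt (b + (p : ℕ)) (b + (q : ℕ)) (by omega) (by omega) (by omega)
    rwa [hh, hh, WithBot.coe_lt_coe, WithTop.coe_lt_coe] at this
  · funext x
    rcases pos_cases b k x with hx | ⟨p, hx⟩ | hx
    · rw [ext_bot b k h x hx, (hg.bot x).2 hx]
    · rw [ext_cell b k h p x hx, hx, hh]
    · rw [ext_top b k h x hx, (hg.top x).2 hx]

theorem ColOK.bound {b E : ℤ} {g : ℤ → QQ P} (hg : ColOK b E g) : E - b ≤ Fintype.card P := by
  have hle := hg.le
  obtain ⟨k, rfl⟩ : ∃ k : ℕ, E = b + k := ⟨(E - b).toNat, by omega⟩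
  obtain ⟨h, hs, -⟩ := exists_ext b k g hg
  have hinj : Function.Injective h := by
    intro p q hpq
    rcases lt_trichotomy p q with hlt | heq | hgt
    · exact absurd hpq (hs _ _ hlt).ne
    · exact heq
    · exact absurd hpq (hs _ _ hgt).ne'
  have := Fintype.card_le_of_injective h hinj
  rw [Fintype.card_fin] at this
  omega

/-- The weight of a column. -/
def wtc (g : ℤ → QQ P) : MvPolynomial P ℤ := ∏ᶠ x, toX (g x)

theorem ColOK.supp {b E : ℤ} {g : ℤ → QQ P} (hg : ColOK b E g) :
    Function.mulSupport (fun x => toX (g x)) ⊆ Set.Ico b E := by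
  intro x hx
  rw [Function.mem_mulSupport] at hx
  constructor
  · by_contra hc
    rw [(hg.bot x).2 (by omega)] at hx
    exact hx rfl
  · by_contra hc
    rw [(hg.top x).2 (by omega)] at hx
    exact hx rfl

theorem wtc_ext (b : ℤ) (k : ℕ) (h : Fin k → P) (hs : ∀ p q : Fin k, p < q → h p < h q) :
    wtc (ext b k h) = ∏ p, X (h p) := by
  have hok := ext_ok b k h hs
  let e : Fin k ↪ ℤ := ⟨fun p => b + (p : ℕ), fun p q hpq => Fin.ext (by simpa using hpq)⟩
  unfold wtc
  rw [finprod_eq_prod_of_mulSupport_subset (s := Finset.univ.map e)]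
  · rw [Finset.prod_map]
    refine Finset.prod_congr rfl fun p _ => ?_
    rw [ext_cell b k h p (e p) rfl, toX_coe]
  · intro x hx
    have := hok.supp hx
    rw [Set.mem_Ico] at this
    simp only [Finset.coe_map, Finset.coe_univ, Set.image_univ, Set.mem_range]
    refine ⟨⟨(x - b).toNat, by omega⟩, ?_⟩
    change b + (((x - b).toNat : ℕ) : ℤ) = x
    omega

/-- The finite set of columns from `b` to `E`. -/
def Cols (P : Type*) [Fintype P] [PartialOrder P] (b E : ℤ) : Finset (ℤ → QQ P) :=
  if b ≤ E then (Finset.univ.filter (fun f : Fin (E - b).toNat → P =>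
    ∀ a b, a < b → f a < f b)).image (ext b (E - b).toNat) else ∅

theorem mem_Cols {b E : ℤ} {g : ℤ → QQ P} : g ∈ Cols P b E ↔ ColOK b E g := by
  unfold Cols
  split_ifs with hle
  · obtain ⟨k, rfl⟩ : ∃ k : ℕ, E = b + k := ⟨(E - b).toNat, by omega⟩
    have hk : (b + (k : ℤ) - b).toNat = k := by omega
    rw [hk]
    simp only [Finset.mem_image, Finset.mem_filter, Finset.mem_univ, true_and]
    constructor
    · rintro ⟨h, hs, rfl⟩
      exact ext_ok b k h hs
    · exact exists_ext b k g
  · simp only [Finset.notMem_empty, false_iff]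
    exact fun h => hle h.le

theorem ePz_eq (b E : ℤ) : ePz P (E - b) = ∑ g ∈ Cols P b E, wtc g := by
  unfold ePz Cols
  by_cases hle : b ≤ E
  · rw [if_pos (by omega), if_pos hle, Finset.sum_image (fun _ _ _ _ h => ext_inj _ _ h)]
    unfold eP
    refine Finset.sum_congr rfl fun h hh => ?_
    rw [wtc_ext]
    exact (Finset.mem_filter.1 hh).2
  · rw [if_neg (by omega), if_neg hle, Finset.sum_empty]

variable {l : ℕ}

/-- The weight of an array. -/
def wtF (F : Fin l → ℤ → QQ P) : MvPolynomial P ℤ := ∏ᶠ p : Fin l × ℤ, toX (F p.1 p.2)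

theorem wtF_eq {b E : Fin l → ℤ} {F : Fin l → ℤ → QQ P} (h : ∀ c, ColOK (b c) (E c) (F c)) :
    wtF F = ∏ c, wtc (F c) := by
  unfold wtF
  rw [finprod_curry]
  · rw [finprod_eq_prod_of_fintype]
    rfl
  · refine Set.Finite.subset (s := ⋃ c : Fin l, (fun x => (c, x)) '' Set.Ico (b c) (E c)) ?_ ?_
    · exact Set.finite_iUnion fun c => (Set.finite_Ico _ _).image _
    · rintro ⟨c, x⟩ hx
      exact Set.mem_iUnion.2 ⟨c, x, (h c).supp hx, rfl⟩

theorem wtF_swp {N : ℤ} {F : Fin l → ℤ → QQ P} {j0 i0 : Fin l} {x0 n0 : ℤ} (hne : i0 ≠ j0) :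
    wtF (swp N F j0 x0 i0 n0) = wtF F := by
  unfold wtF
  simp_rw [swp_eq_swPos]
  exact finprod_comp_equiv (swPos_invol (N := N) (x0 := x0) (n0 := n0) hne).toPerm
    (f := fun p : Fin l × ℤ => toX (F p.1 p.2))

/-- The new translation part after a swap. -/
def swK (κ : Fin l → ℤ) (j0 i0 : Fin l) (n0 : ℤ) : Fin l → ℤ := fun c =>
  if c = i0 then κ j0 - n0 else if c = j0 then κ i0 + n0 else κ c

theorem swK_sum (κ : Fin l → ℤ) {j0 i0 : Fin l} (n0 : ℤ) (hne : i0 ≠ j0) :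
    ∑ c, swK κ j0 i0 n0 c = ∑ c, κ c := by
  have h : ∀ c, swK κ j0 i0 n0 c =
      κ (Equiv.swap i0 j0 c) + ((if c = i0 then -n0 else 0) + (if c = j0 then n0 else 0)) := by
    intro c
    unfold swK
    by_cases h1 : c = i0
    · subst h1
      simp [hne]; ring
    by_cases h2 : c = j0
    · subst h2
      simp [h1]
    rw [Equiv.swap_apply_of_ne_of_ne h1 h2]
    simp [h1, h2]
  simp_rw [h]
  rw [Finset.sum_add_distrib, Equiv.sum_comp (Equiv.swap i0 j0) κ, Finset.sum_add_distrib]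
  simp

theorem swK_swK (κ : Fin l → ℤ) {j0 i0 : Fin l} (n0 : ℤ) (hne : i0 ≠ j0) :
    swK (swK κ j0 i0 n0) j0 i0 n0 = κ := by
  funext c
  unfold swK
  by_cases h1 : c = i0
  · subst h1
    simp [hne.symm]
  by_cases h2 : c = j0
  · subst h2
    simp [h1]
  simp [h1, h2]

theorem swK_E (N : ℤ) (a κ : Fin l → ℤ) (σ : Equiv.Perm (Fin l)) {j0 i0 : Fin l} (n0 : ℤ) :
    (fun c => swK κ j0 i0 n0 c * N + a ((σ * Equiv.swap i0 j0) c)) =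
      swE N (fun c => κ c * N + a (σ c)) j0 i0 n0 := by
  funext c
  unfold swK swE
  by_cases h1 : c = i0
  · subst h1
    simp; ring
  by_cases h2 : c = j0
  · subst h2
    simp [h1]; ring
  simp [h1, h2, Equiv.swap_apply_of_ne_of_ne h1 h2]

/-- A bound for the translation parts that can contribute. -/
def bd (P : Type*) [Fintype P] (a b : Fin l → ℤ) : ℤ :=
  Fintype.card P + ∑ i, |a i| + ∑ i, |b i|

/-- The translation parts that can contribute. -/
def KK (P : Type*) [Fintype P] (a b : Fin l → ℤ) : Finset (Fin l → ℤ) :=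
  (Fintype.piFinset fun _ => Finset.Icc (-bd P a b) (bd P a b)).filter (fun κ => ∑ i, κ i = 0)

theorem kappa_bound {N : ℤ} (hN : 0 < N) {a b : Fin l → ℤ} {κ : ℤ} {i j : Fin l} {g : ℤ → QQ P}
    (hg : ColOK (b j) (κ * N + a i) g) : κ ∈ Finset.Icc (-bd P a b) (bd P a b) := by
  have h1 := hg.le
  have h2 := hg.bound
  have h3 : |a i| ≤ ∑ i, |a i| :=
    Finset.single_le_sum (f := fun i => |a i|) (fun _ _ => abs_nonneg _) (Finset.mem_univ i)
  have h4 : |b j| ≤ ∑ i, |b i| :=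
    Finset.single_le_sum (f := fun i => |b i|) (fun _ _ => abs_nonneg _) (Finset.mem_univ j)
  have h5 : |κ * N| ≤ bd P a b := by
    unfold bd
    rw [abs_le] at *
    constructor <;> linarith
  have h6 : |κ| ≤ |κ * N| := by
    rw [abs_mul]
    exact le_mul_of_one_le_right (abs_nonneg _) (by rw [abs_of_pos hN]; omega)
  rw [Finset.mem_Icc, ← abs_le]
  exact h6.trans h5

theorem mem_KK {N : ℤ} (hN : 0 < N) {a b κ : Fin l → ℤ} {σ : Equiv.Perm (Fin l)}
    {F : Fin l → ℤ → QQ P} (hs : ∑ i, κ i = 0)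
    (hc : ∀ c, ColOK (b c) (κ c * N + a (σ c)) (F c)) : κ ∈ KK P a b := by
  unfold KK
  rw [Finset.mem_filter, Fintype.mem_piFinset]
  exact ⟨fun c => kappa_bound hN (hc c), hs⟩

/-- The finite set of states. -/
def St (P : Type*) [Fintype P] [PartialOrder P] (N : ℤ) (a b : Fin l → ℤ) :
    Finset ((_ : (Fin l → ℤ) × Equiv.Perm (Fin l)) × (Fin l → ℤ → QQ P)) :=
  (KK P a b ×ˢ Finset.univ).sigma fun p =>
    Fintype.piFinset fun j => Cols P (b j) (p.1 j * N + a (p.2 j))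

theorem mem_St {N : ℤ} (hN : 0 < N) {a b : Fin l → ℤ}
    {s : (_ : (Fin l → ℤ) × Equiv.Perm (Fin l)) × (Fin l → ℤ → QQ P)} :
    s ∈ St P N a b ↔ (∑ i, s.1.1 i = 0) ∧
      ∀ c, ColOK (b c) (s.1.1 c * N + a (s.1.2 c)) (s.2 c) := by
  unfold St
  simp only [Finset.mem_sigma, Finset.mem_product, Finset.mem_univ, and_true,
    Fintype.mem_piFinset, mem_Cols]
  constructor
  · rintro ⟨h1, h2⟩
    exact ⟨(Finset.mem_filter.1 h1).2, h2⟩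
  · rintro ⟨h1, h2⟩
    exact ⟨mem_KK hN h1 h2, h2⟩

section Invol
variable [NeZero l]

/-- The chosen intersection point. -/
def pkP (N : ℤ) (F : Fin l → ℤ → QQ P) : Fin l × ℤ := Classical.epsilon (· ∈ SPt N F)

/-- The chosen witness. -/
def pkQ (N : ℤ) (F : Fin l → ℤ → QQ P) : Fin l × ℤ := Classical.epsilon (· ∈ WPt N F (pkP N F))

/-- The sign reversing involution. -/
def Phi (N : ℤ) (s : (_ : (Fin l → ℤ) × Equiv.Perm (Fin l)) × (Fin l → ℤ → QQ P)) :
    (_ : (Fin l → ℤ) × Equiv.Perm (Fin l)) × (Fin l → ℤ → QQ P) :=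
  ⟨(swK s.1.1 (pkP N s.2).1 (pkQ N s.2).1 (pkQ N s.2).2,
    s.1.2 * Equiv.swap (pkQ N s.2).1 (pkP N s.2).1),
    swp N s.2 (pkP N s.2).1 (pkP N s.2).2 (pkQ N s.2).1 (pkQ N s.2).2⟩

theorem pk_good {N : ℤ} {b E : Fin l → ℤ} {F : Fin l → ℤ → QQ P}
    (hcol : ∀ c, ColOK (b c) (E c) (F c)) (hI : ∃ j x i n, IsI N F j x i n) :
    Good N b E F (pkP N F).1 (pkP N F).2 (pkQ N F).1 (pkQ N F).2 := by
  have h1 : pkP N F ∈ SPt N F := Classical.epsilon_spec (p := (· ∈ SPt N F)) (SPt_nonempty hI)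
  have h2 : pkQ N F ∈ WPt N F (pkP N F) := by
    obtain ⟨i, n, h⟩ := h1.1
    exact Classical.epsilon_spec (p := (· ∈ WPt N F (pkP N F))) ⟨(i, n), h⟩
  exact good_of_mem hcol h1 h2

theorem sum_states (h31 : ThreePlusOneFree P) {N : ℤ} (hN : 0 < N) {a b : Fin l → ℤ}
    (hb : ∀ (i j : Fin l) (n : ℤ), ((i : ℕ) : ℤ) < ((j : ℕ) : ℤ) + n * l → b j - n * N < b i)
    (ha : ∀ (i j : Fin l) (n : ℤ), ((i : ℕ) : ℤ) < ((j : ℕ) : ℤ) + n * l → a j - n * N < a i) :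
    ∑ s ∈ St P N a b, Equiv.Perm.sign s.1.2 • wtF s.2 =
      ∑ F ∈ (Fintype.piFinset fun j => Cols P (b j) (a j)).filter
        (fun F => ¬ ∃ j x i n, IsI N F j x i n), wtF F := by
  have H := QQ_H h31
  rw [← Finset.sum_filter_add_sum_filter_not _ (fun s => ∃ j x i n, IsI N s.2 j x i n)]
  have hz : ∑ s ∈ (St P N a b).filter (fun s => ∃ j x i n, IsI N s.2 j x i n),
      Equiv.Perm.sign s.1.2 • wtF s.2 = 0 := by
    have good : ∀ s ∈ (St P N a b).filter (fun s => ∃ j x i n, IsI N s.2 j x i n),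
        Good N b (fun c => s.1.1 c * N + a (s.1.2 c)) s.2
          (pkP N s.2).1 (pkP N s.2).2 (pkQ N s.2).1 (pkQ N s.2).2 := by
      intro s hs
      rw [Finset.mem_filter, mem_St hN] at hs
      exact pk_good hs.1.2 hs.2
    have pkp : ∀ s ∈ (St P N a b).filter (fun s => ∃ j x i n, IsI N s.2 j x i n),
        pkP N (Phi N s).2 = pkP N s.2 := by
      intro s hs
      unfold pkP
      rw [show SPt N (Phi N s).2 = SPt N s.2 from swp_SPt hN H hb (good s hs)]
    have pkq : ∀ s ∈ (St P N a b).filter (fun s => ∃ j x i n, IsI N s.2 j x i n),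
        pkQ N (Phi N s).2 = pkQ N s.2 := by
      intro s hs
      unfold pkQ
      rw [pkp s hs, show WPt N (Phi N s).2 (pkP N s.2) = WPt N s.2 (pkP N s.2) from
        swp_WPt hN H hb (good s hs)]
    refine Finset.sum_involution (fun s _ => Phi N s) ?_ ?_ ?_ ?_
    · intro s hs
      have hne := (good s hs).ne hN
      simp only [Phi, wtF_swp hne, Equiv.Perm.sign_mul, Equiv.Perm.sign_swap hne]
      simp
    · intro s hs _ heq
      have hne := (good s hs).ne hN
      have := congrArg (fun s => s.1.2) heq
      simp only [Phi] at this
      have h2 := mul_eq_left.1 this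
      rw [Equiv.swap_eq_one_iff] at h2
      exact hne h2
    · intro s hs
      have hg := swp_good hN H hb (good s hs)
      have hne := (good s hs).ne hN
      have hs' := hs
      rw [Finset.mem_filter, mem_St hN] at hs' ⊢
      refine ⟨⟨?_, ?_⟩, ?_⟩
      · simp only [Phi]
        rw [swK_sum _ _ hne]
        exact hs'.1.1
      · intro c
        have := hg.col c
        rw [← swK_E] at this
        exact this
      · exact ⟨_, _, _, _, hg.isI⟩
    · intro s hs
      have hne := (good s hs).ne hN
      have e1 := pkp s hs
      have e2 := pkq s hs
      rw [show Phi N (Phi N s) = ⟨(swK (Phi N s).1.1 (pkP N (Phi N s).2).1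
        (pkQ N (Phi N s).2).1 (pkQ N (Phi N s).2).2,
        (Phi N s).1.2 * Equiv.swap (pkQ N (Phi N s).2).1 (pkP N (Phi N s).2).1),
        swp N (Phi N s).2 (pkP N (Phi N s).2).1 (pkP N (Phi N s).2).2 (pkQ N (Phi N s).2).1
          (pkQ N (Phi N s).2).2⟩ from rfl, e1, e2]
      simp only [Phi]
      rw [swK_swK _ _ hne, swp_swp hne, Equiv.mul_swap_mul_self]
  rw [hz, zero_add]
  refine Finset.sum_bij (fun s _ => s.2) ?_ ?_ ?_ ?_
  · intro s hs
    rw [Finset.mem_filter, mem_St hN] at hs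
    obtain ⟨⟨h1, h2⟩, h3⟩ := hs
    obtain ⟨e1, e2⟩ := perm_trivial hb ha h1 h2 (fun j x i n h => h3 ⟨j, x, i, n, h⟩)
    rw [Finset.mem_filter, Fintype.mem_piFinset]
    refine ⟨fun c => ?_, h3⟩
    have := h2 c
    rw [e1, e2] at this
    rw [mem_Cols]
    simpa using this
  · rintro ⟨⟨κ, σ⟩, F⟩ hs ⟨⟨κ', σ'⟩, F'⟩ hs' heq
    rw [Finset.mem_filter, mem_St hN] at hs hs'
    obtain ⟨⟨h1, h2⟩, h3⟩ := hs
    obtain ⟨⟨h1', h2'⟩, h3'⟩ := hs'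
    obtain ⟨e1, e2⟩ := perm_trivial hb ha h1 h2 (fun j x i n h => h3 ⟨j, x, i, n, h⟩)
    obtain ⟨e1', e2'⟩ := perm_trivial hb ha h1' h2' (fun j x i n h => h3' ⟨j, x, i, n, h⟩)
    simp only at heq e1 e2 e1' e2'
    subst heq e1 e2 e1' e2'
    rfl
  · intro F hF
    rw [Finset.mem_filter, Fintype.mem_piFinset] at hF
    refine ⟨⟨(0, 1), F⟩, ?_, rfl⟩
    rw [Finset.mem_filter, mem_St hN]
    refine ⟨⟨by simp, fun c => ?_⟩, hF.2⟩
    have := mem_Cols.1 (hF.1 c)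
    simpa using this
  · intro s hs
    rw [Finset.mem_filter, mem_St hN] at hs
    obtain ⟨⟨h1, h2⟩, h3⟩ := hs
    obtain ⟨e1, e2⟩ := perm_trivial hb ha h1 h2 (fun j x i n h => h3 ⟨j, x, i, n, h⟩)
    rw [e2]
    simp

end Invol

/-- The finitely supported sum of determinants is the signed sum over states. -/
theorem finsum_det {N : ℤ} (hN : 0 < N) (a b : Fin l → ℤ) :
    (∑ᶠ k : {k : Fin l → ℤ // ∑ i, k i = 0},
      Matrix.det (Matrix.of fun i j : Fin l => ePz P (k.1 i * N + a i - b j))) =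
      ∑ s ∈ St P N a b, Equiv.Perm.sign s.1.2 • wtF s.2 := by
  have hprod : ∀ (κ : Fin l → ℤ) (σ : Equiv.Perm (Fin l)),
      ∏ j, ePz P (κ j * N + a (σ j) - b j) =
        ∑ F ∈ Fintype.piFinset fun j => Cols P (b j) (κ j * N + a (σ j)), wtF F := by
    intro κ σ
    simp_rw [ePz_eq]
    rw [Finset.prod_univ_sum]
    refine Finset.sum_congr rfl fun F hF => ?_
    rw [Fintype.mem_piFinset] at hF
    rw [wtF_eq fun c => mem_Cols.1 (hF c)]
  have hKperm : ∀ (κ : Fin l → ℤ) (σ : Equiv.Perm (Fin l)), κ ∈ KK P a b → κ ∘ σ ∈ KK P a b := by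
    intro κ σ h
    unfold KK at *
    rw [Finset.mem_filter, Fintype.mem_piFinset] at *
    refine ⟨fun c => h.1 (σ c), ?_⟩
    rw [← h.2]
    exact Equiv.sum_comp σ κ
  have hsupp : ∀ k : Fin l → ℤ, ∑ i, k i = 0 →
      Matrix.det (Matrix.of fun i j : Fin l => ePz P (k i * N + a i - b j)) ≠ 0 →
      k ∈ KK P a b := by
    intro k hk hne
    rw [Matrix.det_apply] at hne
    obtain ⟨σ, -, hσ⟩ := Finset.exists_ne_zero_of_sum_ne_zero hne
    have h1 : ∏ j, ePz P ((k ∘ σ) j * N + a (σ j) - b j) ≠ 0 := by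
      intro h0
      apply hσ
      simp only [Matrix.of_apply]
      simp only [Function.comp] at h0
      rw [h0, smul_zero]
    rw [hprod] at h1
    obtain ⟨F, hF, -⟩ := Finset.exists_ne_zero_of_sum_ne_zero h1
    rw [Fintype.mem_piFinset] at hF
    have h2 : k ∘ σ ∈ KK P a b :=
      mem_KK (σ := σ) hN ((Equiv.sum_comp σ k).trans hk) (fun c => mem_Cols.1 (hF c))
    have h3 := hKperm _ σ⁻¹ h2
    have : (k ∘ σ) ∘ (σ⁻¹ : Equiv.Perm (Fin l)) = k := by funext c; simp
    rwa [this] at h3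
  have hL : (∑ᶠ k : {k : Fin l → ℤ // ∑ i, k i = 0},
      Matrix.det (Matrix.of fun i j : Fin l => ePz P (k.1 i * N + a i - b j))) =
      ∑ k ∈ KK P a b, Matrix.det (Matrix.of fun i j : Fin l => ePz P (k i * N + a i - b j)) := by
    rw [finsum_eq_sum_of_support_subset (s := (KK P a b).subtype (fun k => ∑ i, k i = 0))]
    · rw [Finset.sum_subtype_of_mem (p := fun k : Fin l → ℤ => ∑ i, k i = 0)
        (fun k => Matrix.det (Matrix.of fun i j : Fin l => ePz P (k i * N + a i - b j)))]
      intro k hk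
      exact (Finset.mem_filter.1 hk).2
    · intro k hk
      rw [Finset.mem_coe, Finset.mem_subtype]
      exact hsupp k.1 k.2 hk
  rw [hL]
  unfold St
  rw [Finset.sum_sigma, Finset.sum_product_right]
  simp_rw [Matrix.det_apply]
  rw [Finset.sum_comm]
  refine Finset.sum_congr rfl fun σ _ => ?_
  simp only [← Finset.smul_sum]
  simp only [← hprod, Matrix.of_apply]
  congr 1
  refine Finset.sum_bij' (fun κ _ => κ ∘ σ) (fun κ _ => κ ∘ (σ⁻¹ : Equiv.Perm (Fin l)))
    (fun κ h => hKperm κ σ h) (fun κ h => hKperm κ σ⁻¹ h) ?_ ?_ ?_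
  · intro κ _; funext c; simp
  · intro κ _; funext c; simp
  · intro κ _; rfl

end Sums

section Final
set_option linter.unusedSectionVars false

theorem conj_finite {f : ℕ → ℕ} (hf : IsPartition f) (c : ℕ) : {i | c < f i}.Finite := by
  obtain ⟨M, hM⟩ := hf.2
  refine (Set.finite_lt_nat M).subset fun i hi => ?_
  by_contra hc
  simp only [Set.mem_ofPred_eq, not_lt] at hc hi
  have := hM i hc
  omega

theorem conj_anti {f : ℕ → ℕ} (hf : IsPartition f) {c c' : ℕ} (h : c ≤ c') :
    conj f c' ≤ conj f c :=
  Set.ncard_le_ncard (fun _ hi => lt_of_le_of_lt h hi) (conj_finite hf c)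

theorem conj_le {f g : ℕ → ℕ} (hg : IsPartition g) (h : ∀ i, f i ≤ g i) (c : ℕ) :
    conj f c ≤ conj g c :=
  Set.ncard_le_ncard (fun i hi => lt_of_lt_of_le hi (h i)) (conj_finite hg c)

theorem affine_anti {f : ℕ → ℕ} (hf : IsPartition f) {l d : ℕ}
    (hd : conj f 0 ≤ conj f (l - 1) + d) (i j : Fin l) (n : ℤ)
    (hij : ((i : ℕ) : ℤ) < ((j : ℕ) : ℤ) + n * l) :
    ((conj f j : ℤ) - (j : ℕ)) - n * ((l + d : ℕ) : ℤ) < (conj f i : ℤ) - (i : ℕ) := by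
  have hi := i.2
  have hj := j.2
  have hn : 0 ≤ n := by
    by_contra hc
    have : n * (l : ℤ) ≤ (-1) * l := mul_le_mul_of_nonneg_right (by omega) (by omega)
    omega
  rcases hn.eq_or_lt with rfl | hpos
  · have := conj_anti hf (c := i) (c' := j) (by omega)
    omega
  · have h1 := conj_anti hf (c := 0) (c' := j) (by omega)
    have h2 := conj_anti hf (c := i) (c' := l - 1) (by omega)
    have h3 : 1 * ((l + d : ℕ) : ℤ) ≤ n * ((l + d : ℕ) : ℤ) :=
      mul_le_mul_of_nonneg_right (by omega) (by omega)
    generalize n * ((l + d : ℕ) : ℤ) = t at *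
    push_cast at h3
    omega

variable {P : Type*} [Fintype P] [PartialOrder P]

/-- The array of a filling. -/
noncomputable def FT (lam mu : ℕ → ℕ) (T : ∀ c : Fin (lam 0), Fin (conj lam c - conj mu c) → P) :
    Fin (lam 0) → ℤ → QQ P := fun c =>
  ext ((conj mu c : ℤ) - (c : ℕ)) (conj lam c - conj mu c) (T c)

theorem cyl_iff (h31 : ThreePlusOneFree P) {lam mu : ℕ → ℕ} {d : ℕ}
    (hshape : IsCylShape lam mu d)
    (T : ∀ c : Fin (lam 0), Fin (conj lam c - conj mu c) → P)
    (hs : ∀ c p q, p < q → T c p < T c q) :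
    IsCylTab lam mu d T ↔
      ¬ ∃ j x i n, IsI ((lam 0 + d : ℕ) : ℤ) (FT lam mu T) j x i n := by
  obtain ⟨hl, hm, hml, h0, hd1, hd2, -⟩ := hshape
  have hA := affine_anti hl hd1
  have hB := affine_anti hm hd2
  have hcol : ∀ c : Fin (lam 0), ColOK ((conj mu c : ℤ) - (c : ℕ))
      ((conj mu c : ℤ) - (c : ℕ) + ((conj lam c - conj mu c : ℕ) : ℤ)) (FT lam mu T c) :=
    fun c => ext_ok _ _ _ (hs c)
  have hle : ∀ c, conj mu c ≤ conj lam c := fun c => conj_le hl hml c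
  constructor
  · rintro ⟨-, -, -, -, hrow, hwrap⟩
    have hadj : ∀ (i j : Fin (lam 0)) (n x : ℤ),
        ((i : ℕ) : ℤ) + 1 = ((j : ℕ) : ℤ) + n * (lam 0 : ℕ) →
        ¬ IsI ((lam 0 + d : ℕ) : ℤ) (FT lam mu T) j x i n := by
      rintro i j n x hij ⟨h1, h2, h3⟩
      have hAA := hA i j n h1
      have hi := i.2
      have hlei := hle i
      have hlej := hle j
      obtain ⟨q, hq⟩ : ∃ q : Fin (conj lam j - conj mu j),
          x = (conj mu j : ℤ) - (j : ℕ) + (q : ℕ) := by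
        have g1 := (hcol j).ge h2
        have g2 := (hcol j).lt_end h3.ne_top
        exact ⟨⟨(x - ((conj mu j : ℤ) - (j : ℕ))).toNat, by omega⟩, by simp; omega⟩
      have hq2 := q.2
      obtain ⟨p, hp⟩ : ∃ p : Fin (conj lam i - conj mu i),
          x + 1 - n * ((lam 0 + d : ℕ) : ℤ) = (conj mu i : ℤ) - (i : ℕ) + (p : ℕ) := by
        have g1 := (hcol i).ge (ne_bot_of_gt h3)
        have g2 : x + 1 ≤ (conj lam j : ℤ) - (j : ℕ) := by omega
        generalize n * ((lam 0 + d : ℕ) : ℤ) = t at *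
        exact ⟨⟨(x + 1 - t - ((conj mu i : ℤ) - (i : ℕ))).toNat, by omega⟩, by simp; omega⟩
      have v1 : FT lam mu T j x = ((T j q : WithTop P) : QQ P) := ext_cell _ _ _ q _ hq
      have v2 : FT lam mu T i (x + 1 - n * ((lam 0 + d : ℕ) : ℤ)) =
          ((T i p : WithTop P) : QQ P) := ext_cell _ _ _ p _ hp
      rw [v1, v2, WithBot.coe_lt_coe, WithTop.coe_lt_coe] at h3
      by_cases hi' : (i : ℕ) + 1 < lam 0
      · have e : (((⟨i + 1, hi'⟩ : Fin (lam 0)) : ℕ) : ℤ) + 0 * (lam 0 : ℕ) =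
            ((j : ℕ) : ℤ) + n * (lam 0 : ℕ) := by simpa using hij
        obtain ⟨rfl, rfl⟩ := fin_affine_inj e
        refine hrow i hi' p q ?_ h3
        push_cast at hp hq
        omega
      · have e : (((⟨0, h0⟩ : Fin (lam 0)) : ℕ) : ℤ) + 1 * (lam 0 : ℕ) =
            ((j : ℕ) : ℤ) + n * (lam 0 : ℕ) := by
          rw [← hij]; simp; omega
        obtain ⟨rfl, rfl⟩ := fin_affine_inj e
        obtain rfl : i = ⟨lam 0 - 1, Nat.sub_lt h0 Nat.one_pos⟩ := Fin.ext (by simp; omega)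
        refine hwrap h0 p q ?_ h3
        simp only at hp hq
        push_cast at hp hq
        omega
    rintro ⟨j, x, i, n, h⟩
    have h1 := h.1
    refine no_isI_of_adj (QQ_H h31) hB hcol hadj
      (((j : ℕ) : ℤ) + n * (lam 0 : ℕ) - (i : ℕ) - 1).toNat i j n x ?_ h
    generalize n * ((lam 0 : ℕ) : ℤ) = t at *
    omega
  · intro hno
    refine ⟨fun c _ => ⟨conj_anti hl (by omega), conj_anti hm (by omega)⟩, fun c _ => hle c,
      fun _ => ⟨hd1, hd2⟩, hs, ?_, ?_⟩
    · intro c hc p q hpq hlt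
      refine hno ⟨⟨c + 1, hc⟩, (conj mu (c + 1) : ℤ) - ((c : ℕ) + 1) + (q : ℕ), c, 0, ?_, ?_, ?_⟩
      · simp
      · rw [show FT lam mu T ⟨c + 1, hc⟩ ((conj mu (c + 1) : ℤ) - ((c : ℕ) + 1) + (q : ℕ)) =
          ((T ⟨c + 1, hc⟩ q : WithTop P) : QQ P) from ext_cell _ _ _ q _ (by simp)]
        exact WithBot.coe_ne_bot
      · rw [show FT lam mu T ⟨c + 1, hc⟩ ((conj mu (c + 1) : ℤ) - ((c : ℕ) + 1) + (q : ℕ)) =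
          ((T ⟨c + 1, hc⟩ q : WithTop P) : QQ P) from ext_cell _ _ _ q _ (by simp)]
        rw [show FT lam mu T c ((conj mu (c + 1) : ℤ) - ((c : ℕ) + 1) + (q : ℕ) + 1 -
          0 * ((lam 0 + d : ℕ) : ℤ)) =
          ((T c p : WithTop P) : QQ P) from ext_cell _ _ _ p _ (by simp; omega)]
        rw [WithBot.coe_lt_coe, WithTop.coe_lt_coe]
        exact hlt
    · intro _ p q hpq hlt
      refine hno ⟨⟨0, h0⟩, (conj mu 0 : ℤ) + (q : ℕ),
        ⟨lam 0 - 1, Nat.sub_lt h0 Nat.one_pos⟩, 1, ?_, ?_, ?_⟩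
      · simp; omega
      · rw [show FT lam mu T ⟨0, h0⟩ ((conj mu 0 : ℤ) + (q : ℕ)) =
          ((T ⟨0, h0⟩ q : WithTop P) : QQ P) from ext_cell _ _ _ q _ (by simp)]
        exact WithBot.coe_ne_bot
      · rw [show FT lam mu T ⟨0, h0⟩ ((conj mu 0 : ℤ) + (q : ℕ)) =
          ((T ⟨0, h0⟩ q : WithTop P) : QQ P) from ext_cell _ _ _ q _ (by simp)]
        rw [show FT lam mu T ⟨lam 0 - 1, Nat.sub_lt h0 Nat.one_pos⟩
          ((conj mu 0 : ℤ) + (q : ℕ) + 1 - 1 * ((lam 0 + d : ℕ) : ℤ)) =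
          ((T ⟨lam 0 - 1, Nat.sub_lt h0 Nat.one_pos⟩ p : WithTop P) : QQ P) from
            ext_cell _ _ _ p _ (by push_cast; omega)]
        rw [WithBot.coe_lt_coe, WithTop.coe_lt_coe]
        exact hlt

theorem main_eq (h31 : ThreePlusOneFree P) (lam mu : ℕ → ℕ) (d : ℕ)
    (hshape : IsCylShape lam mu d) :
    (∑ᶠ k : {k : Fin (lam 0) → ℤ // ∑ i, k i = 0},
        Matrix.det (Matrix.of fun i j : Fin (lam 0) =>
          ePz P (k.1 i * ((lam 0 + d : ℕ) : ℤ)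
            + (conj lam i.1 : ℤ) - (conj mu j.1 : ℤ) - (i.1 : ℤ) + (j.1 : ℤ))))
      = ∑ T : {T : ∀ c : Fin (lam 0), Fin (conj lam c - conj mu c) → P //
            IsCylTab lam mu d T},
          uT lam mu T.1 := by
  have hsh := hshape
  obtain ⟨hl, hm, hml, h0, hd1, hd2, -⟩ := hsh
  have hN : (0 : ℤ) < ((lam 0 + d : ℕ) : ℤ) := by omega
  have : NeZero (lam 0) := ⟨h0.ne'⟩
  have hle : ∀ c, conj mu c ≤ conj lam c := fun c => conj_le hl hml c
  let a : Fin (lam 0) → ℤ := fun i => (conj lam i : ℤ) - (i : ℕ)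
  let b : Fin (lam 0) → ℤ := fun i => (conj mu i : ℤ) - (i : ℕ)
  have hab : ∀ c, b c + ((conj lam c - conj mu c : ℕ) : ℤ) = a c := by
    intro c
    have := hle c
    simp only [a, b]
    omega
  have hentry : ∀ (κ : ℤ) (i j : Fin (lam 0)), κ * ((lam 0 + d : ℕ) : ℤ)
      + (conj lam i.1 : ℤ) - (conj mu j.1 : ℤ) - (i.1 : ℤ) + (j.1 : ℤ) =
      κ * ((lam 0 + d : ℕ) : ℤ) + a i - b j := by
    intro κ i j
    simp only [a, b]
    ring
  simp_rw [hentry]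
  rw [finsum_det hN a b, sum_states h31 hN (a := a) (b := b) (affine_anti hm hd2)
    (affine_anti hl hd1)]
  symm
  have hcol : ∀ (T : ∀ c : Fin (lam 0), Fin (conj lam c - conj mu c) → P),
      (∀ c p q, p < q → T c p < T c q) → ∀ c, ColOK (b c) (a c) (FT lam mu T c) := by
    intro T hs c
    rw [← hab]
    exact ext_ok _ _ _ (hs c)
  refine Finset.sum_bij (fun T _ => FT lam mu T.1) ?_ ?_ ?_ ?_
  · rintro ⟨T, hT⟩ _
    have hs := hT.2.2.2.1
    rw [Finset.mem_filter, Fintype.mem_piFinset]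
    exact ⟨fun c => mem_Cols.2 (hcol T hs c), (cyl_iff h31 hshape T hs).1 hT⟩
  · rintro ⟨T, hT⟩ _ ⟨T', hT'⟩ _ he
    apply Subtype.ext
    funext c
    exact ext_inj _ _ (congrFun he c)
  · intro F hF
    rw [Finset.mem_filter, Fintype.mem_piFinset] at hF
    obtain ⟨hF1, hF2⟩ := hF
    have hex : ∀ c : Fin (lam 0), ∃ h : Fin (conj lam c - conj mu c) → P,
        (∀ p q, p < q → h p < h q) ∧ ext (b c) (conj lam c - conj mu c) h = F c := by
      intro c
      have := mem_Cols.1 (hF1 c)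
      rw [← hab] at this
      exact exists_ext _ _ _ this
    choose T hs hT using hex
    have hFT : FT lam mu T = F := funext hT
    refine ⟨⟨T, (cyl_iff h31 hshape T hs).2 (by rw [hFT]; exact hF2)⟩, Finset.mem_univ _, hFT⟩
  · rintro ⟨T, hT⟩ _
    have hs := hT.2.2.2.1
    rw [wtF_eq (hcol T hs)]
    unfold uT
    refine Finset.prod_congr rfl fun c _ => ?_
    exact (wtc_ext _ _ _ (hs c)).symm

theorem coeff_nonneg (lam mu : ℕ → ℕ)
    (T : ∀ c : Fin (lam 0), Fin (conj lam c - conj mu c) → P)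
    (mo : P →₀ ℕ) : 0 ≤ MvPolynomial.coeff mo (uT lam mu T) := by
  have : uT lam mu T = MvPolynomial.map (Nat.castRingHom ℤ) (∏ c, ∏ p, X (T c p)) := by
    simp [uT, map_prod]
  rw [this, MvPolynomial.coeff_map]
  simp

end Final

end CylP

/-- (main theorem) for a `(3+1)`-free finite poset `P` and a cylindric
shape `λ/μ/d`, the `P`-cylindric Schur function
`s^P_{λ/μ/d}(u) = Σ_{k, Σk=0} det[e^P_{k_i(λ₁+d)+λ'_i-μ'_j-i+j}(u)]`
equals the weight generating function of cylindric `P`-tableaux of shape `λ/μ/d`;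
in particular all its coefficients are nonnegative. -/
theorem stmt_7 (P : Type*) [Fintype P] [PartialOrder P] (h31 : ThreePlusOneFree P)
    (lam mu : ℕ → ℕ) (d : ℕ) (hshape : IsCylShape lam mu d) :
    ((∑ᶠ k : {k : Fin (lam 0) → ℤ // ∑ i, k i = 0},
        Matrix.det (Matrix.of fun i j : Fin (lam 0) =>
          ePz P (k.1 i * ((lam 0 + d : ℕ) : ℤ)
            + (conj lam i.1 : ℤ) - (conj mu j.1 : ℤ) - (i.1 : ℤ) + (j.1 : ℤ))))
      = ∑ T : {T : ∀ c : Fin (lam 0), Fin (conj lam c - conj mu c) → P //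
            IsCylTab lam mu d T},
          uT lam mu T.1)
    ∧ ∀ mo : P →₀ ℕ,
        0 ≤ MvPolynomial.coeff mo
          (∑ᶠ k : {k : Fin (lam 0) → ℤ // ∑ i, k i = 0},
            Matrix.det (Matrix.of fun i j : Fin (lam 0) =>
              ePz P (k.1 i * ((lam 0 + d : ℕ) : ℤ)
                + (conj lam i.1 : ℤ) - (conj mu j.1 : ℤ) - (i.1 : ℤ) + (j.1 : ℤ)))) := by 
  have h := CylP.main_eq h31 lam mu d hshape
  refine ⟨h, fun mo => ?_⟩
  rw [h]
  rw [MvPolynomial.coeff_sum]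
  exact Finset.sum_nonneg fun T _ => CylP.coeff_nonneg lam mu T.1 mo
end

section
/- Let P be a finite (3+1)-free poset with |P| = n, and r a positive integer. Writing X_{inc(P)}(x) = Σ_{λ ⊢ n} c^P_λ e_λ(x), the partial sum Σ_{λ ⊢ n, λ_1 ≤ r} c^P_λ equals the number of standard cylindric P-tableaux of shape (r^c t)/∅/1, where (r^c t) is the partition of n with the maximal number of rows of length r (so n = rc + t with 0 ≤ t < r, adjusting conventions). In particular this partial sum is nonnegative. -/
open MvPolynomial
open scoped Classical

namespace Stmt13Aux

set_option linter.unusedSectionVars false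
set_option linter.unusedVariables false

open Finset

/-- Cyclic gap between the starting positions of columns `i` and `j`. -/
def gap (r : ℕ) (j i : Fin r) : ℕ := if i.1 < j.1 then j.1 - i.1 else j.1 + (r + 1) - i.1

section Comb
variable {P : Type*} [Fintype P] [PartialOrder P] {r : ℕ}

/-- proper colouring of the incomparability graph -/
def Proper (κ : P → Fin r) : Prop := ∀ a b : P, a ≠ b → ¬(a ≤ b ∨ b ≤ a) → κ a ≠ κ b

noncomputable def cnt (κ : P → Fin r) (i : Fin r) (v : P) : ℕ :=
  (univ.filter (fun z => κ z = i ∧ ¬ v < z)).card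

def IP (κ : P → Fin r) (v : P) (i : Fin r) : Prop :=
  i ≠ κ v ∧ cnt κ i v + gap r (κ v) i ≤ cnt κ (κ v) v

lemma Proper.cmp {κ : P → Fin r} (h : Proper κ) {a b : P} (hab : κ a = κ b) : a ≤ b ∨ b ≤ a := by
  by_contra hc
  by_cases e : a = b
  · exact hc (Or.inl e.le)
  · exact h a b e hc hab

lemma Proper.not_lt {κ : P → Fin r} (h : Proper κ) {a b : P} (hab : κ a = κ b) :
    ¬ a < b ↔ b ≤ a := by
  constructor
  · intro hn
    rcases h.cmp hab with h1 | h1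
    · rcases h1.eq_or_lt with h2 | h2
      · exact h2.ge
      · exact absurd h2 hn
    · exact h1
  · intro h1 h2
    exact absurd (lt_of_lt_of_le h2 h1) (lt_irrefl _)

lemma cnt_mono_anti {κ : P → Fin r} (i : Fin r) {a b : P} (h : a ≤ b) : cnt κ i a ≤ cnt κ i b := by
  apply card_le_card
  intro z
  simp only [mem_filter, mem_univ, true_and]
  rintro ⟨h1, h2⟩
  exact ⟨h1, fun h3 => h2 (lt_of_le_of_lt h h3)⟩

lemma cnt_own_pos {κ : P → Fin r} (v : P) : 1 ≤ cnt κ (κ v) v := by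
  apply Finset.card_pos.mpr
  exact ⟨v, by simp⟩

/-- the cnt of own colour is strictly monotone -/
lemma cnt_lt {κ : P → Fin r} (h : Proper κ) {a b : P} (hab : a < b) :
    cnt κ (κ b) a < cnt κ (κ b) b := by
  apply card_lt_card
  rw [Finset.ssubset_iff_of_subset]
  · refine ⟨b, by simp, by simp [hab]⟩
  · intro z
    simp only [mem_filter, mem_univ, true_and]
    rintro ⟨h1, h2⟩
    exact ⟨h1, fun h3 => h2 (lt_trans hab h3)⟩

lemma pred {κ : P → Fin r} (h : Proper κ) {v : P} (hv : 2 ≤ cnt κ (κ v) v) :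
    ∃ b, b < v ∧ κ b = κ v ∧ cnt κ (κ v) b + 1 = cnt κ (κ v) v := by
  let S := univ.filter (fun z => κ z = κ v ∧ z < v)
  have hS : S.Nonempty := by
    by_contra hne
    rw [Finset.not_nonempty_iff_eq_empty] at hne
    have : cnt κ (κ v) v ≤ 1 := by
      have : univ.filter (fun z => κ z = κ v ∧ ¬ v < z) ⊆ {v} := by
        intro z
        simp only [mem_filter, mem_univ, true_and, mem_singleton]
        rintro ⟨h1, h2⟩
        rw [h.not_lt h1.symm] at h2
        by_contra h3
        have : z ∈ S := by simp [S, h1, lt_of_le_of_ne h2 h3]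
        rw [hne] at this
        simp at this
      exact (card_le_card this).trans (by simp)
    omega
  obtain ⟨b, hb⟩ := S.exists_maximal hS
  have hbS := hb.1
  simp only [S, mem_filter, mem_univ, true_and] at hbS
  refine ⟨b, hbS.2, hbS.1, ?_⟩
  have : univ.filter (fun z => κ z = κ v ∧ ¬ v < z)
      = insert v (univ.filter (fun z => κ z = κ v ∧ ¬ b < z)) := by
    ext z
    simp only [mem_filter, mem_univ, true_and, mem_insert]
    constructor
    · rintro ⟨h1, h2⟩
      by_cases e : z = v
      · exact Or.inl e
      · right
        refine ⟨h1, fun h3 => ?_⟩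
        rw [h.not_lt h1.symm] at h2
        have hz : z ∈ S := by simp [S, h1, lt_of_le_of_ne h2 e]
        exact absurd (lt_of_lt_of_le h3 (hb.2 hz h3.le)) (lt_irrefl _)
    · rintro (h1 | ⟨h1, h2⟩)
      · subst h1; simp
      · refine ⟨h1, fun h3 => h2 (lt_trans hbS.2 h3)⟩
  unfold cnt
  rw [this, card_insert_of_notMem]
  simp [hbS.2]

lemma exists_rank {κ : P → Fin r} (h : Proper κ) (k : ℕ) (hk : 1 ≤ k) (u : P)
    (hu : k ≤ cnt κ (κ u) u) : ∃ u0, u0 ≤ u ∧ κ u0 = κ u ∧ cnt κ (κ u) u0 = k := by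
  obtain ⟨m, hm⟩ := Nat.exists_eq_add_of_le hu
  induction m generalizing u with
  | zero => exact ⟨u, le_rfl, rfl, by omega⟩
  | succ m ih =>
    obtain ⟨b, hb1, hb2, hb3⟩ := pred h (v := u) (by omega)
    obtain ⟨u0, h1, h2, h3⟩ := ih b (by rw [hb2]; omega) (by rw [hb2]; omega)
    exact ⟨u0, h1.trans hb1.le, h2.trans hb2, by rw [← hb2]; exact h3⟩

lemma exists_top {κ : P → Fin r} (h : Proper κ) (l : Fin r) (v : P) (hv : 1 ≤ cnt κ l v) :
    ∃ u, κ u = l ∧ ¬ v < u ∧ cnt κ l u = cnt κ l v := by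
  obtain ⟨u, hu⟩ := Finset.exists_maximal (Finset.card_pos.mp hv)
  have hu1 := hu.1
  simp only [mem_filter, mem_univ, true_and] at hu1
  refine ⟨u, hu1.1, hu1.2, ?_⟩
  unfold cnt
  congr 1
  ext z
  simp only [mem_filter, mem_univ, true_and, and_congr_right_iff]
  intro hz
  constructor
  · intro h1 h2
    rw [h.not_lt (hu1.1.trans hz.symm)] at h1
    exact hu1.2 (lt_of_lt_of_le h2 h1)
  · intro h1 h2
    have := hu.2 (y := z) (by simp [hz, h1]) h2.le
    exact absurd (lt_of_lt_of_le h2 this) (lt_irrefl _)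

lemma tpo (h31 : ThreePlusOneFree P) {a b c x : P} (hab : a < b) (hbc : b < c) (hax : ¬ a < x)
    (hxa : x ≠ a) : x ≤ c := by
  by_contra hc
  apply h31
  have h1 : ¬ x ≤ b := fun h => hc (h.trans hbc.le)
  have h2 : ¬ x ≤ a := fun h => h1 (h.trans hab.le)
  have h3 : ¬ a ≤ x := fun h => hax (lt_of_le_of_ne h (Ne.symm hxa))
  have h4 : ¬ b ≤ x := fun h => h3 (hab.le.trans h)
  have h5 : ¬ c ≤ x := fun h => h4 (hbc.le.trans h)
  exact ⟨a, b, c, x, hab, hbc, by tauto, by tauto, by tauto⟩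

/-- if `u0` has rank at most `cnt κ l b`, then `u0` is not above `b` -/
lemma not_lt_of_rank {κ : P → Fin r} (h : Proper κ) {u0 b : P}
    (hle : cnt κ (κ u0) u0 ≤ cnt κ (κ u0) b) : ¬ b < u0 := by
  intro hlt
  exact absurd (cnt_lt h hlt) (by omega)

lemma gap_pos {j i : Fin r} : 1 ≤ gap r j i := by
  unfold gap
  have := i.2
  split_ifs <;> omega

/-- bypass lemma -/
lemma bypass (h31 : ThreePlusOneFree P) {κ : P → Fin r} (h : Proper κ) {v u0 : P} {i l : Fin r}
    (hil : i ≠ l) (hlj : l ≠ κ v)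
    (hg : gap r (κ v) i = gap r (κ v) l + gap r l i)
    (hip : cnt κ i v + gap r (κ v) i ≤ cnt κ (κ v) v)
    (hno : ∀ b, b < v → κ b = κ v → ¬ IP κ b l)
    (hu : κ u0 = l) (hu0 : cnt κ l u0 + gap r (κ v) l = cnt κ (κ v) v) : IP κ u0 i := by
  subst hu
  have g1 := gap_pos (j := κ v) (i := κ u0)
  have g2 := gap_pos (j := κ u0) (i := i)
  obtain ⟨b, hb1, hb2, hb3⟩ := pred h (v := v) (by omega)
  have hnb := hno b hb1 hb2
  have hnb' : ¬ (cnt κ (κ u0) b + gap r (κ v) (κ u0) ≤ cnt κ (κ v) b) := by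
    intro hh
    apply hnb
    refine ⟨by rw [hb2]; exact hlj, by rw [hb2]; exact hh⟩
  have hbu : ¬ b < u0 := not_lt_of_rank h (by omega)
  refine ⟨hil, ?_⟩
  have : cnt κ i u0 ≤ cnt κ i v := by
    apply card_le_card
    intro z
    simp only [mem_filter, mem_univ, true_and]
    rintro ⟨h1, h2⟩
    refine ⟨h1, fun h3 => h2 ?_⟩
    have hub : u0 ≠ b := fun e => hlj (by rw [e, hb2])
    have := tpo h31 hb1 h3 hbu hub
    refine lt_of_le_of_ne this (fun e => hil ?_)
    rw [← h1, e]
  omega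

noncomputable def swp (κ : P → Fin r) (v : P) (i : Fin r) : P → Fin r :=
  fun x => if v < x then Equiv.swap i (κ v) (κ x) else κ x

lemma swp_self (κ : P → Fin r) (v : P) (i : Fin r) : swp κ v i v = κ v := by simp [swp]

lemma swp_swp (κ : P → Fin r) (v : P) (i : Fin r) : swp (swp κ v i) v i = κ := by
  funext x
  unfold swp
  by_cases hx : v < x <;> simp [hx]

lemma cnt_swp_v (κ : P → Fin r) (v : P) (i k : Fin r) : cnt (swp κ v i) k v = cnt κ k v := by
  unfold cnt
  congr 1
  ext z
  simp only [mem_filter, mem_univ, true_and]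
  unfold swp
  by_cases hz : v < z <;> simp [hz]

lemma IP_swp_v (κ : P → Fin r) (v : P) (i k : Fin r) : IP (swp κ v i) v k ↔ IP κ v k := by
  unfold IP
  rw [swp_self, cnt_swp_v, cnt_swp_v]

/-- selected intersection -/
def Sel (ℓ : P → ℕ) (κ : P → Fin r) (v : P) (i : Fin r) : Prop :=
  IP κ v i ∧ (∀ u k, IP κ u k → ℓ v ≤ ℓ u) ∧ ∀ k, IP κ v k → gap r (κ v) i ≤ gap r (κ v) k

lemma gap_inj {j i k : Fin r} (hi : i ≠ j) (hk : k ≠ j) (h : gap r j i = gap r j k) : i = k := by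
  have := i.2
  have := k.2
  have h1 : i.1 ≠ j.1 := fun e => hi (Fin.ext e)
  have h2 : k.1 ≠ j.1 := fun e => hk (Fin.ext e)
  apply Fin.ext
  unfold gap at h
  split_ifs at h <;> omega

lemma gap_cyc {j i l : Fin r} (h1 : i ≠ j) (h2 : l ≠ j) (h3 : l ≠ i) :
    gap r l i = gap r l j + gap r j i ∨ gap r j i = gap r j l + gap r l i := by
  have := i.2
  have := j.2
  have := l.2
  have h1 : i.1 ≠ j.1 := fun e => h1 (Fin.ext e)
  have h2 : l.1 ≠ j.1 := fun e => h2 (Fin.ext e)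
  have h3 : l.1 ≠ i.1 := fun e => h3 (Fin.ext e)
  unfold gap
  split_ifs <;> omega

lemma Sel.unique {ℓ : P → ℕ} (hℓ : Function.Injective ℓ) {κ : P → Fin r} {v v' : P} {i i' : Fin r}
    (h : Sel ℓ κ v i) (h' : Sel ℓ κ v' i') : v = v' ∧ i = i' := by
  have e : v = v' := hℓ (le_antisymm (h.2.1 _ _ h'.1) (h'.2.1 _ _ h.1))
  subst e
  exact ⟨rfl, gap_inj h.1.1 h'.1.1 (le_antisymm (h.2.2 _ h'.1) (h'.2.2 _ h.1))⟩

lemma Sel.exists {ℓ : P → ℕ} {κ : P → Fin r} (h : ∃ v i, IP κ v i) : ∃ v i, Sel ℓ κ v i := by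
  obtain ⟨v0, i0, h0⟩ := h
  obtain ⟨v, hv, hmin⟩ := Finset.exists_min_image (univ.filter (fun v => ∃ i, IP κ v i)) ℓ
    ⟨v0, by simp; exact ⟨i0, h0⟩⟩
  simp only [mem_filter, mem_univ, true_and] at hv hmin
  obtain ⟨i1, h1⟩ := hv
  obtain ⟨i, hi, hmin2⟩ := Finset.exists_min_image (univ.filter (fun i => IP κ v i))
    (fun i => gap r (κ v) i) ⟨i1, by simpa using h1⟩
  simp only [mem_filter, mem_univ, true_and] at hi hmin2
  exact ⟨v, i, hi, fun u k hk => hmin u ⟨k, hk⟩, hmin2⟩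

section SelFacts
variable {ℓ : P → ℕ} {κ : P → Fin r} {v : P} {i : Fin r}

lemma Sel.noIP (hℓ : StrictMono ℓ) (hs : Sel ℓ κ v i) {b : P} (hb : ℓ b < ℓ v) (k : Fin r) :
    ¬ IP κ b k := fun hk => absurd (hs.2.1 _ _ hk) (by omega)

lemma Sel.eq (h : Proper κ) (hℓ : StrictMono ℓ) (hs : Sel ℓ κ v i) :
    cnt κ i v + gap r (κ v) i = cnt κ (κ v) v := by
  refine le_antisymm hs.1.2 ?_
  by_contra hc
  have g1 := gap_pos (j := κ v) (i := i)
  obtain ⟨b, hb1, hb2, hb3⟩ := pred h (v := v) (by omega)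
  apply hs.noIP hℓ (hℓ hb1) i
  have := cnt_mono_anti (κ := κ) i hb1.le
  refine ⟨by rw [hb2]; exact hs.1.1, by rw [hb2]; omega⟩

lemma Sel.cross (h31 : ThreePlusOneFree P) (h : Proper κ) (hℓ : StrictMono ℓ) (hs : Sel ℓ κ v i)
    {x x' : P} (hx : v < x) (hxj : κ x = κ v) (hx' : ¬ v < x') (hxi : κ x' = i) : x' < x := by
  have g1 := gap_pos (j := κ v) (i := i)
  have he := hs.eq h hℓ
  have hpos : 1 ≤ cnt κ i v := Finset.card_pos.mpr ⟨x', by simp [hx', hxi]⟩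
  obtain ⟨b, hb1, hb2, hb3⟩ := pred h (v := v) (by omega)
  have hn := hs.noIP hℓ (hℓ hb1) i
  have hn' : ¬ (cnt κ i b + gap r (κ v) i ≤ cnt κ (κ v) b) := by
    intro hh
    apply hn
    refine ⟨by rw [hb2]; exact hs.1.1, by rw [hb2]; exact hh⟩
  have hb : ¬ b < x' := by
    intro hlt
    have : cnt κ i b < cnt κ i v := by
      apply card_lt_card
      rw [Finset.ssubset_iff_of_subset]
      · exact ⟨x', by simp [hx', hxi], by simp [hlt]⟩
      · intro z
        simp only [mem_filter, mem_univ, true_and]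
        rintro ⟨h1, h2⟩
        exact ⟨h1, fun h3 => h2 (lt_trans hb1 h3)⟩
    omega
  have hne : x' ≠ b := fun e => hs.1.1 (by rw [← hxi, e, hb2])
  refine lt_of_le_of_ne (tpo h31 hb1 hx hb hne) (fun e => hs.1.1 (by rw [← hxi, e, hxj]))

lemma Sel.proper (h31 : ThreePlusOneFree P) (h : Proper κ) (hℓ : StrictMono ℓ)
    (hs : Sel ℓ κ v i) : Proper (swp κ v i) := by
  have key : ∀ x x', v < x → ¬ v < x' → swp κ v i x = swp κ v i x' → x' ≤ x := by
    intro x x' hx hx' he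
    simp only [swp, hx, hx', if_true, if_false] at he
    by_cases h1 : κ x = i
    · rw [h1, Equiv.swap_apply_left] at he
      have : x' ≤ v := (h.not_lt he).1 hx'
      exact this.trans hx.le
    · by_cases h2 : κ x = κ v
      · rw [h2, Equiv.swap_apply_right] at he
        exact (hs.cross h31 h hℓ hx h2 hx' he.symm).le
      · rw [Equiv.swap_apply_of_ne_of_ne h1 h2] at he
        rcases h.cmp he with h3 | h3
        · exact absurd (lt_of_lt_of_le hx h3) hx'
        · exact h3
  intro a b hab hinc he
  apply hinc
  by_cases ha : v < a <;> by_cases hb : v < b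
  · simp only [swp, ha, hb, if_true] at he
    exact h.cmp ((Equiv.swap i (κ v)).injective he)
  · exact Or.inr (key a b ha hb he)
  · exact Or.inl (key b a hb ha he.symm)
  · simp only [swp, ha, hb, if_false] at he
    exact h.cmp he

/-- Number of elements of colour `m` which are above `v` but not above `u`. -/
noncomputable def tl (κ : P → Fin r) (v u : P) (m : Fin r) : ℕ :=
  (univ.filter (fun z => κ z = m ∧ v < z ∧ ¬ u < z)).card

noncomputable def bt (κ : P → Fin r) (v u : P) (m : Fin r) : ℕ :=
  (univ.filter (fun z => κ z = m ∧ ¬ v < z ∧ ¬ u < z)).card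

lemma cnt_split (κ : P → Fin r) (v u : P) (m : Fin r) :
    cnt κ m u = bt κ v u m + tl κ v u m := by
  unfold cnt bt tl
  rw [← card_union_of_disjoint]
  · congr 1
    ext z
    simp only [mem_filter, mem_univ, true_and, mem_union]
    tauto
  · rw [Finset.disjoint_left]
    intro z
    simp only [mem_filter, mem_univ, true_and]
    tauto

lemma bt_swp (κ : P → Fin r) (v u : P) (i m : Fin r) : bt (swp κ v i) v u m = bt κ v u m := by
  unfold bt
  congr 1
  ext z
  simp only [mem_filter, mem_univ, true_and]
  unfold swp
  by_cases hz : v < z <;> simp [hz]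

lemma tl_swp (κ : P → Fin r) (v u : P) (i m : Fin r) :
    tl (swp κ v i) v u m = tl κ v u (Equiv.swap i (κ v) m) := by
  unfold tl
  congr 1
  ext z
  simp only [mem_filter, mem_univ, true_and]
  unfold swp
  by_cases hz : v < z
  · simp only [hz, if_true, true_and]
    rw [Equiv.swap_apply_eq_iff]
  · simp [hz]

lemma bt_le (κ : P → Fin r) (v u : P) (m : Fin r) : bt κ v u m ≤ cnt κ m v := by
  apply card_le_card
  intro z
  simp only [mem_filter, mem_univ, true_and]
  tauto

lemma bt_eq {κ : P → Fin r} (h : Proper κ) (v u : P) (m : Fin r) (ht : 1 ≤ tl κ v u m) :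
    bt κ v u m = cnt κ m v := by
  obtain ⟨z, hz⟩ := Finset.card_pos.mp ht
  simp only [mem_filter, mem_univ, true_and] at hz
  unfold bt cnt
  congr 1
  ext x
  simp only [mem_filter, mem_univ, true_and]
  constructor
  · tauto
  · rintro ⟨h1, h2⟩
    refine ⟨h1, h2, fun h3 => ?_⟩
    rcases h.cmp (h1.trans hz.1.symm) with h4 | h4
    · exact hz.2.2 (lt_of_lt_of_le h3 h4)
    · exact h2 (lt_of_lt_of_le hz.2.1 h4)

lemma tl_eq_zero {κ : P → Fin r} (v u : P) (m : Fin r)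
    (hh : ∀ z, κ z = m → v < z → u < z) : tl κ v u m = 0 := by
  unfold tl
  rw [Finset.card_eq_zero, Finset.filter_eq_empty_iff]
  rintro z - ⟨h1, h2, h3⟩
  exact h3 (hh z h1 h2)

lemma Sel.swp_min (h31 : ThreePlusOneFree P) (h : Proper κ) (hℓ : StrictMono ℓ)
    (hinj : Function.Injective ℓ)
    (hs : Sel ℓ κ v i) {u : P} {k : Fin r} (hk : IP (swp κ v i) u k) : ℓ v ≤ ℓ u := by
  by_contra hlt
  push Not at hlt
  have hvu : ¬ v < u := fun h1 => absurd (hℓ h1) (by omega)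
  have hne : u ≠ v := fun e => by rw [e] at hlt; omega
  have hcol : swp κ v i u = κ u := by simp [swp, hvu]
  have hno := fun k => hs.noIP hℓ hlt k
  have heq := hs.eq h hℓ
  have hij := hs.1.1
  obtain ⟨hk1, hk2⟩ := hk
  rw [hcol] at hk1 hk2
  rw [cnt_split _ v u, cnt_split _ v u (κ u), bt_swp, bt_swp, tl_swp, tl_swp] at hk2
  have same : (∀ m, tl κ v u (Equiv.swap i (κ v) m) = tl κ v u m) → False := by
    intro hh
    rw [hh, hh, ← cnt_split, ← cnt_split] at hk2
    exact hno k ⟨hk1, hk2⟩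
  have same2 : tl κ v u i = 0 → tl κ v u (κ v) = 0 → False := by
    intro a1 a2
    apply same
    intro m
    by_cases m1 : m = i
    · rw [m1, Equiv.swap_apply_left, a1, a2]
    · by_cases m2 : m = κ v
      · rw [m2, Equiv.swap_apply_right, a1, a2]
      · rw [Equiv.swap_apply_of_ne_of_ne m1 m2]
  have huv : ¬ u < v := fun h1 => same2
    (tl_eq_zero v u _ fun z _ h2 => h1.trans h2) (tl_eq_zero v u _ fun z _ h2 => h1.trans h2)
  by_cases c1 : κ u = κ v
  · rcases h.cmp c1 with h1 | h1
    · exact huv (lt_of_le_of_ne h1 hne)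
    · exact hvu (lt_of_le_of_ne h1 hne.symm)
  by_cases c2 : κ u = i
  · apply same2
    · apply tl_eq_zero
      intro z hz hvz
      rcases h.cmp (hz.trans c2.symm) with h1 | h1
      · exact absurd (lt_of_lt_of_le hvz h1) hvu
      · exact lt_of_le_of_ne h1 (fun e => hvu (e ▸ hvz))
    · apply tl_eq_zero
      intro z hz hvz
      exact hs.cross h31 h hℓ hvz hz hvu c2
  rw [Equiv.swap_apply_of_ne_of_ne c2 c1, ← cnt_split] at hk2
  have noi : cnt κ (κ u) u < bt κ v u i + tl κ v u i + gap r (κ u) i := by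
    rw [← cnt_split]
    by_contra hc
    exact hno i ⟨fun e => c2 e.symm, by omega⟩
  have noj : cnt κ (κ u) u < bt κ v u (κ v) + tl κ v u (κ v) + gap r (κ u) (κ v) := by
    rw [← cnt_split]
    by_contra hc
    exact hno (κ v) ⟨fun e => c1 e.symm, by omega⟩
  have cyc := gap_cyc (l := κ u) hij c1 c2
  have bi := bt_le κ v u i
  have bj := bt_le κ v u (κ v)
  by_cases k1 : k = i
  · subst k1
    rw [Equiv.swap_apply_left] at hk2
    have bi' := bt_eq h v u k (by omega)
    rcases cyc with cyc | cyc
    · by_cases hj0 : tl κ v u (κ v) = 0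
      · omega
      · have bj' := bt_eq h v u (κ v) (by omega)
        omega
    · have g1 := gap_pos (j := κ u) (i := k)
      obtain ⟨u0, e1, e2, e3⟩ := exists_rank h (cnt κ k v + gap r (κ u) k) (by omega) u (by omega)
      have hip : IP κ u0 k := by
        refine bypass h31 h (l := κ u) (Ne.symm c2) c1 cyc heq.le ?_ e2 (by omega)
        intro b hb _
        exact hs.noIP hℓ (hℓ hb) _
      have := hs.2.1 _ _ hip
      have := hℓ.monotone e1
      omega
  · by_cases k2 : k = κ v
    · subst k2
      rw [Equiv.swap_apply_right] at hk2
      have bj' := bt_eq h v u (κ v) (by omega)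
      rcases cyc with cyc | cyc <;> omega
    · rw [Equiv.swap_apply_of_ne_of_ne k1 k2, ← cnt_split] at hk2
      exact hno k ⟨hk1, hk2⟩

lemma Sel.swp (h31 : ThreePlusOneFree P) (h : Proper κ) (hℓ : StrictMono ℓ)
    (hinj : Function.Injective ℓ) (hs : Sel ℓ κ v i) : Sel ℓ (swp κ v i) v i := by
  refine ⟨(IP_swp_v _ _ _ _).2 hs.1, fun u k hk => hs.swp_min h31 h hℓ hinj hk, ?_⟩
  intro k hk
  rw [swp_self]
  exact hs.2.2 k ((IP_swp_v _ _ _ _).1 hk)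

/-- column lengths -/
noncomputable def len (κ : P → Fin r) (j : Fin r) : ℕ := (univ.filter (fun z => κ z = j)).card

noncomputable def hi (κ : P → Fin r) (v : P) (j : Fin r) : ℕ :=
  (univ.filter (fun z => κ z = j ∧ v < z)).card

lemma len_split (κ : P → Fin r) (v : P) (j : Fin r) : len κ j = cnt κ j v + hi κ v j := by
  unfold cnt len hi
  rw [← card_union_of_disjoint]
  · congr 1
    ext z
    simp only [mem_filter, mem_univ, true_and, mem_union]
    tauto
  · rw [Finset.disjoint_left]
    intro z
    simp only [mem_filter, mem_univ, true_and]
    tauto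

lemma hi_swp (κ : P → Fin r) (v : P) (i m : Fin r) :
    hi (Stmt13Aux.swp κ v i) v m = hi κ v (Equiv.swap i (κ v) m) := by
  unfold hi
  congr 1
  ext z
  simp only [mem_filter, mem_univ, true_and]
  unfold Stmt13Aux.swp
  by_cases hz : v < z
  · simp only [hz, if_true, and_true]
    rw [Equiv.swap_apply_eq_iff]
  · simp [hz]

/-- weight matrix -/
noncomputable def wM (z : Fin r → ℂ) (a : Fin r → ℕ) : Matrix (Fin r) (Fin r) ℂ :=
  fun k j => z k ^ (a j + r * j.1)

lemma wM_swp (z : Fin r → ℂ) (hz : ∀ k, z k ^ (r + 1) = 1) (h : Proper κ) (hℓ : StrictMono ℓ)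
    (hs : Sel ℓ κ v i) :
    wM z (len (Stmt13Aux.swp κ v i)) = (wM z (len κ)).submatrix id (Equiv.swap i (κ v)) := by
  have heq := hs.eq h hℓ
  have key : ∀ k (A B s t : ℕ), A + (r + 1) * s = B + (r + 1) * t → z k ^ A = z k ^ B := by
    intro k A B s t e
    have : z k ^ (A + (r + 1) * s) = z k ^ (B + (r + 1) * t) := by rw [e]
    simpa [pow_add, pow_mul, hz] using this
  have hi1 := i.2
  have hj1 := (κ v).2
  ext k m
  simp only [Matrix.submatrix_apply, id, wM]
  rw [len_split _ v m, cnt_swp_v, hi_swp, len_split κ v (Equiv.swap i (κ v) m)]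
  by_cases m1 : m = i
  · subst m1
    rw [Equiv.swap_apply_left]
    unfold gap at heq
    split_ifs at heq with hlt
    · apply key k _ _ (κ v).1 m.1
      zify [hlt.le] at heq ⊢
      linarith
    · apply key k _ _ ((κ v).1 + 1) m.1
      have : m.1 ≤ (κ v).1 + (r + 1) := by omega
      zify [this] at heq ⊢
      linarith
  · by_cases m2 : m = κ v
    · subst m2
      rw [Equiv.swap_apply_right]
      unfold gap at heq
      split_ifs at heq with hlt
      · apply key k _ _ i.1 (κ v).1
        zify [hlt.le] at heq ⊢
        linarith
      · apply key k _ _ i.1 ((κ v).1 + 1)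
        have : i.1 ≤ (κ v).1 + (r + 1) := by omega
        zify [this] at heq ⊢
        linarith
    · rw [Equiv.swap_apply_of_ne_of_ne m1 m2]

lemma det_swp (z : Fin r → ℂ) (hz : ∀ k, z k ^ (r + 1) = 1) (h : Proper κ) (hℓ : StrictMono ℓ)
    (hs : Sel ℓ κ v i) :
    (wM z (len (Stmt13Aux.swp κ v i))).det = - (wM z (len κ)).det := by
  rw [wM_swp z hz h hℓ hs, Matrix.det_permute', Equiv.Perm.sign_swap hs.1.1]
  simp

end SelFacts

lemma exists_lin (P : Type*) [Fintype P] [PartialOrder P] :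
    ∃ ℓ : P → ℕ, StrictMono ℓ ∧ Function.Injective ℓ := by
  let e : LinearExtension P ≃ P := Equiv.refl _
  have : Fintype (LinearExtension P) := inferInstanceAs (Fintype P)
  let f := Fintype.orderIsoFinOfCardEq (LinearExtension P) rfl
  have hinj : Function.Injective (fun x : P => ((f.symm (toLinearExtension x)) : ℕ)) := by
    intro a b hab
    have := f.symm.injective (Fin.ext hab)
    exact this
  refine ⟨fun x => (f.symm (toLinearExtension x) : ℕ), ?_, hinj⟩
  apply Monotone.strictMono_of_injective _ hinj
  intro a b hab
  exact f.symm.monotone (toLinearExtension.monotone hab)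

lemma sum_IP_zero (h31 : ThreePlusOneFree P) (z : Fin r → ℂ) (hz : ∀ k, z k ^ (r + 1) = 1) :
    ∑ κ ∈ univ.filter (fun κ : P → Fin r => Proper κ ∧ ∃ v i, IP κ v i),
      (wM z (len κ)).det = 0 := by
  obtain ⟨ℓ, hℓ, hinj⟩ := exists_lin P
  obtain h0 | hne0 := isEmpty_or_nonempty (P × Fin r)
  · apply Finset.sum_eq_zero
    intro κ hκ
    simp only [mem_filter, mem_univ, true_and] at hκ
    obtain ⟨-, v, i, -⟩ := hκ
    exact (h0.false (v, i)).elim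
  have hex : ∀ κ : P → Fin r, ∃ p : P × Fin r, (∃ v i, IP κ v i) → Sel ℓ κ p.1 p.2 := by
    intro κ
    by_cases hh : ∃ v i, IP κ v i
    · obtain ⟨v, i, h⟩ := Sel.exists (ℓ := ℓ) hh
      exact ⟨(v, i), fun _ => h⟩
    · exact ⟨hne0.some, fun h => absurd h hh⟩
  choose sel hsel using hex
  have hsw : ∀ κ, Proper κ ∧ (∃ v i, IP κ v i) →
      swp (swp κ (sel κ).1 (sel κ).2) (sel (swp κ (sel κ).1 (sel κ).2)).1
        (sel (swp κ (sel κ).1 (sel κ).2)).2 = κ := by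
    rintro κ ⟨h1, h2⟩
    have s1 := hsel κ h2
    have s2 := s1.swp h31 h1 hℓ hinj
    have s3 := hsel _ ⟨_, _, s2.1⟩
    obtain ⟨e1, e2⟩ := s3.unique hinj s2
    rw [e1, e2, swp_swp]
  refine Finset.sum_involution (fun κ _ => swp κ (sel κ).1 (sel κ).2) ?_ ?_ ?_ ?_
  · intro κ hκ
    simp only [mem_filter, mem_univ, true_and] at hκ
    rw [det_swp z hz hκ.1 hℓ (hsel κ hκ.2)]
    ring
  · intro κ hκ hne he
    simp only [mem_filter, mem_univ, true_and] at hκ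
    have := det_swp z hz hκ.1 hℓ (hsel κ hκ.2)
    rw [he] at this
    apply hne
    linear_combination (1/2 : ℂ) * this
  · intro κ hκ
    simp only [mem_filter, mem_univ, true_and] at hκ ⊢
    have s1 := hsel κ hκ.2
    exact ⟨s1.proper h31 hκ.1 hℓ, _, _, (s1.swp h31 hκ.1 hℓ hinj).1⟩
  · intro κ hκ
    simp only [mem_filter, mem_univ, true_and] at hκ
    exact hsw κ hκ

/-- The symmetrization identity. -/
lemma sum_all (z : Fin r → ℂ) :
    ∑ κ ∈ univ.filter (fun κ : P → Fin r => Proper κ), (wM z (len κ)).det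
      = (∑ κ ∈ univ.filter (fun κ : P → Fin r => Proper κ), ∏ v, z (κ v))
        * (wM z (fun _ => 0)).det := by
  simp only [Matrix.det_apply']
  rw [Finset.sum_comm, Finset.mul_sum]
  apply Finset.sum_congr rfl
  intro σ _
  have h1 : ∀ κ : P → Fin r, ∏ j, wM z (len κ) (σ j) j
      = (∏ v, z (σ (κ v))) * ∏ j, wM z (fun _ => 0) (σ j) j := by
    intro κ
    simp only [wM, pow_add, Finset.prod_mul_distrib, zero_add, pow_zero, one_mul]
    congr 1
    rw [← Finset.prod_fiberwise (s := univ) (g := κ)]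
    apply Finset.prod_congr rfl
    intro j _
    rw [len, ← Finset.prod_const]
    apply Finset.prod_congr rfl
    intro x hx
    simp only [mem_filter, mem_univ, true_and] at hx
    rw [hx]
  simp only [h1]
  have h2 : ∑ κ ∈ univ.filter (fun κ : P → Fin r => Proper κ), ∏ v, z (σ (κ v))
      = ∑ κ ∈ univ.filter (fun κ : P → Fin r => Proper κ), ∏ v, z (κ v) := by
    refine Finset.sum_bij' (fun κ _ => σ ∘ κ) (fun κ _ => σ.symm ∘ κ) ?_ ?_ ?_ ?_ ?_
    · intro κ hκ
      simp only [mem_filter, mem_univ, true_and] at hκ ⊢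
      intro a b h1 h2 h3
      exact hκ a b h1 h2 (σ.injective h3)
    · intro κ hκ
      simp only [mem_filter, mem_univ, true_and] at hκ ⊢
      intro a b h1 h2 h3
      exact hκ a b h1 h2 (σ.symm.injective h3)
    · intro κ _; funext x; simp
    · intro κ _; funext x; simp
    · intro κ _; simp
  rw [← h2, Finset.sum_mul]
  apply Finset.sum_congr rfl
  intro κ _
  ring

/-- balanced column lengths -/
def bal (r n : ℕ) (j : ℕ) : ℕ := n / r + if j < n % r then 1 else 0

lemma sum_bal (r n : ℕ) (hr : 0 < r) : ∑ j : Fin r, bal r n j.1 = n := by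
  rw [Fin.sum_univ_eq_sum_range (fun j => bal r n j) r]
  simp only [bal, Finset.sum_add_distrib, Finset.sum_const, card_range, smul_eq_mul]
  rw [← Finset.card_filter]
  have : (range r).filter (fun j => j < n % r) = range (n % r) := by
    ext x
    have := Nat.mod_lt n hr
    simp only [mem_filter, mem_range]
    omega
  rw [this, card_range]
  exact Nat.div_add_mod n r

lemma bal_unique {r n : ℕ} (hr : 0 < r) (a : Fin r → ℕ) (hsum : ∑ j, a j = n)
    (h1 : ∀ i j : Fin r, a j ≤ a i + 1) (h2 : ∀ i j : Fin r, i ≤ j → a j ≤ a i) (j : Fin r) :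
    a j = bal r n j.1 := by
  have hb := sum_bal r n hr
  have key : ∀ j i : Fin r, bal r n j.1 < a j → a i < bal r n i.1 → False := by
    intro j i hj hi
    have e1 := h1 i j
    unfold bal at hi hj
    rcases le_total i j with h | h
    · have e2 := h2 i j h
      have h' : i.1 ≤ j.1 := h
      split_ifs at hi hj <;> omega
    · have h' : j.1 ≤ i.1 := h
      split_ifs at hi hj <;> omega
  by_contra hne
  rcases lt_or_gt_of_ne hne with hlt | hgt
  · have : ∑ i, a i < ∑ i : Fin r, bal r n i.1 := by
      apply Finset.sum_lt_sum
      · intro i _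
        by_contra hc
        exact key i j (by omega) hlt
      · exact ⟨j, mem_univ _, hlt⟩
    omega
  · have : ∑ i : Fin r, bal r n i.1 < ∑ i, a i := by
      apply Finset.sum_lt_sum
      · intro i _
        by_contra hc
        exact key j i hgt (by omega)
      · exact ⟨j, mem_univ _, hgt⟩
    omega

lemma sum_len (κ : P → Fin r) : ∑ j, len κ j = Fintype.card P := by
  unfold len
  rw [← Finset.card_univ (α := P)]
  exact (Finset.card_eq_sum_card_fiberwise (fun x _ => mem_univ (κ x))).symm

lemma cnt_le_len (κ : P → Fin r) (i : Fin r) (v : P) : cnt κ i v ≤ len κ i := by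
  rw [len_split κ v]; omega

lemma exists_max {κ : P → Fin r} (h : Proper κ) (l : Fin r) (hl : 1 ≤ len κ l) :
    ∃ u, κ u = l ∧ cnt κ l u = len κ l := by
  obtain ⟨u, hu⟩ := Finset.exists_maximal (Finset.card_pos.mp hl)
  have hu1 := hu.1
  simp only [mem_filter, mem_univ, true_and] at hu1
  refine ⟨u, hu1, ?_⟩
  unfold cnt len
  congr 1
  ext z
  simp only [mem_filter, mem_univ, true_and, and_iff_left_iff_imp]
  intro hz h2
  have := hu.2 (y := z) (by simp [hz]) h2.le
  exact absurd (lt_of_lt_of_le h2 this) (lt_irrefl _)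

lemma len_of_noIP {κ : P → Fin r} (hr : 0 < r) (h : Proper κ) (hno : ∀ v i, ¬ IP κ v i)
    (j : Fin r) : len κ j = bal r (Fintype.card P) j.1 := by
  have key : ∀ i j : Fin r, i ≠ j → len κ j < len κ i + gap r j i := by
    intro i j hij
    by_contra hc
    have g1 := gap_pos (j := j) (i := i)
    obtain ⟨u, hu1, hu2⟩ := exists_max h j (by omega)
    subst hu1
    apply hno u i
    have := cnt_le_len κ i u
    exact ⟨hij, by omega⟩
  have anti : ∀ (d : ℕ) (i j : Fin r), i.1 + d = j.1 → len κ j ≤ len κ i := by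
    intro d
    induction d with
    | zero => intro i j e; have : i = j := Fin.ext (by omega)
              rw [this]
    | succ d ih =>
      intro i j e
      have hj := j.2
      let j' : Fin r := ⟨i.1 + d, by omega⟩
      have e1 := ih i j' rfl
      have e2 := key j' j (fun e' => by have := congrArg Fin.val e'; simp [j'] at this; omega)
      have : gap r j j' = 1 := by
        unfold gap
        simp only [j']
        split_ifs <;> omega
      omega
  have anti' : ∀ i j : Fin r, i ≤ j → len κ j ≤ len κ i := fun i j hij =>
    anti (j.1 - i.1) i j (by have : i.1 ≤ j.1 := hij; omega)
  apply bal_unique hr _ (sum_len κ) _ anti'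
  intro i j
  let z : Fin r := ⟨0, hr⟩
  let l : Fin r := ⟨r - 1, by omega⟩
  have e1 := anti' z j (by simp [z, Fin.le_def])
  have e2 := anti' i l (by simp [l, Fin.le_def]; omega)
  by_cases hzl : l = z
  · rw [hzl] at e2; omega
  · have e3 := key l z hzl
    have : gap r z l = 2 := by
      unfold gap
      simp only [z, l]
      split_ifs <;> omega
    omega

/-- adjacency of columns -/
def Adj' (j i : Fin r) : Prop := i.1 + 1 = j.1 ∨ (j.1 = 0 ∧ i.1 + 1 = r)

lemma exists_between {j i : Fin r} (hij : i ≠ j) (hna : ¬ Adj' j i) :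
    ∃ l, i ≠ l ∧ l ≠ j ∧ gap r j i = gap r j l + gap r l i := by
  have hi := i.2
  have hj := j.2
  have hij' : i.1 ≠ j.1 := fun e => hij (Fin.ext e)
  unfold Adj' at hna
  have main : ∀ l : Fin r, i.1 ≠ l.1 → l.1 ≠ j.1 →
      (i.1 < l.1 ∧ l.1 < j.1 ∨ l.1 < j.1 ∧ j.1 < i.1 ∨ j.1 < i.1 ∧ i.1 < l.1) →
      ∃ l, i ≠ l ∧ l ≠ j ∧ gap r j i = gap r j l + gap r l i := by
    intro l h1 h2 h3
    refine ⟨l, fun e => h1 (by rw [e]), fun e => h2 (by rw [e]), ?_⟩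
    have hl := l.2
    unfold gap
    split_ifs <;> omega
  by_cases c1 : i.1 < j.1
  · exact main ⟨i.1 + 1, by omega⟩ (by simp) (by simp; omega) (by simp; omega)
  · by_cases c2 : j.1 = 0
    · exact main ⟨r - 1, by omega⟩ (by simp; omega) (by simp; omega) (by simp; omega)
    · exact main ⟨0, by omega⟩ (by simp; omega) (by simp; omega) (by simp; omega)

lemma noIP_of_adj (h31 : ThreePlusOneFree P) {κ : P → Fin r} (h : Proper κ)
    (hno : ∀ v i, Adj' (κ v) i → ¬ IP κ v i) : ∀ v i, ¬ IP κ v i := by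
  by_contra hc
  push Not at hc
  obtain ⟨v0, i0, h0⟩ := hc
  obtain ⟨⟨v, i⟩, hp, hmin⟩ := Finset.exists_min_image
    (univ.filter (fun p : P × Fin r => IP κ p.1 p.2)) (fun p => gap r (κ p.1) p.2)
    ⟨(v0, i0), by simpa using h0⟩
  simp only [mem_filter, mem_univ, true_and, Prod.forall] at hp hmin
  obtain ⟨l, h1, h2, h3⟩ := exists_between hp.1 (fun ha => hno v i ha hp)
  have g1 := gap_pos (j := κ v) (i := l)
  have g2 := gap_pos (j := l) (i := i)
  have hl : ∀ b, κ b = κ v → ¬ IP κ b l := by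
    intro b hb hip
    have := hmin b l hip
    rw [hb] at this
    omega
  have hvl : ¬ (cnt κ l v + gap r (κ v) l ≤ cnt κ (κ v) v) := fun hh => hl v rfl ⟨h2, hh⟩
  have hp2 := hp.2
  obtain ⟨u, hu1, -, hu2⟩ := exists_top h l v (by omega)
  subst hu1
  obtain ⟨u0, e1, e2, e3⟩ := exists_rank h (cnt κ (κ v) v - gap r (κ v) (κ u)) (by omega) u
    (by omega)
  have := bypass h31 h h1 h2 h3 hp2 (fun b _ hb => hl b hb) e2 (by omega)
  have := hmin _ _ this
  rw [e2] at this
  omega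

end Comb

lemma bal_succ (r n : ℕ) (hr : 0 < r) (j : ℕ) (hj : j < r) :
    bal r (n + 1) j = bal r n j + if j = n % r then 1 else 0 := by
  have h1 := Nat.div_add_mod n r
  have h2 := Nat.mod_lt n hr
  unfold bal
  by_cases hc : n % r + 1 < r
  · have e1 : (n + 1) / r = n / r := by
      rw [Nat.div_eq_iff hr]
      constructor
      · have := mul_comm r (n / r)
        omega
      · have := mul_comm r (n / r)
        omega
    have e2 : (n + 1) % r = n % r + 1 := by
      have := Nat.div_add_mod (n + 1) r
      rw [e1] at this
      omega
    rw [e1, e2]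
    split_ifs <;> omega
  · have e : n + 1 = r * (n / r + 1) := by rw [mul_add]; omega
    have e1 : (n + 1) / r = n / r + 1 := by
      rw [e, Nat.mul_div_cancel_left _ hr]
    have e2 : (n + 1) % r = 0 := by rw [e, Nat.mul_mod_right]
    rw [e1, e2]
    split_ifs <;> omega

lemma col_sum (r n : ℕ) (hr : 0 < r) (z : ℂ) (hz : z ^ (r + 1) = 1) (hz1 : z ≠ 1) :
    z ^ (bal r n (n % r) + 1 + r * (n % r)) = - ∑ j : Fin r, z ^ (bal r n j.1 + r * j.1) := by
  have ht := Nat.mod_lt n hr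
  set t := n % r with htdef
  set c := n / r with hcdef
  have hb : ∀ j, bal r n j = c + if j < t then 1 else 0 := fun j => rfl
  have hz2 : z ^ r ≠ 1 := by
    intro h
    rw [pow_succ, h, one_mul] at hz
    exact hz1 hz
  have geom : ∑ s ∈ range (r + 1), (z ^ r) ^ s = 0 := by
    have := mul_geom_sum (z ^ r) (r + 1)
    rw [← pow_mul, mul_comm r, pow_mul, hz, one_pow, sub_self] at this
    rcases mul_eq_zero.mp this with h | h
    · exact absurd (sub_eq_zero.mp h) hz2
    · exact h
  have hsh : ∀ j, z ^ (c + r * j) = z ^ (c + 1) * (z ^ r) ^ (j + 1) := by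
    intro j
    have : z ^ (c + r * j) = z ^ (c + r * j) * z ^ (r + 1) := by rw [hz, mul_one]
    rw [this, ← pow_mul, ← pow_add, ← pow_add]
    congr 1
    ring
  rw [Fin.sum_univ_eq_sum_range (fun j => z ^ (bal r n j + r * j)) r, eq_neg_iff_add_eq_zero]
  have split : ∑ j ∈ range r, z ^ (bal r n j + r * j)
      = ∑ j ∈ range t, z ^ (bal r n j + r * j)
        + ∑ j ∈ range (r - t), z ^ (bal r n (t + j) + r * (t + j)) := by
    rw [← Finset.sum_range_add, Nat.add_sub_cancel' ht.le]
  have split2 : ∑ s ∈ range (r + 1), (z ^ r) ^ s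
      = ∑ s ∈ range t, (z ^ r) ^ s + ((z ^ r) ^ t
        + ∑ s ∈ range (r - t), (z ^ r) ^ (t + (s + 1))) := by
    have e : r + 1 = t + (r - t + 1) := by omega
    rw [e, Finset.sum_range_add, Finset.sum_range_succ' (fun s => (z ^ (_)) ^ (t + s)) (r - t)]
    rw [add_zero, add_comm (∑ s ∈ range (r - t), _)]
  rw [split]
  have s1 : ∑ j ∈ range t, z ^ (bal r n j + r * j) = z ^ (c + 1) * ∑ s ∈ range t, (z ^ r) ^ s := by
    rw [Finset.mul_sum]
    apply Finset.sum_congr rfl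
    intro j hj
    rw [hb, if_pos (mem_range.mp hj), pow_add, pow_mul]
  have s2 : ∑ j ∈ range (r - t), z ^ (bal r n (t + j) + r * (t + j))
      = z ^ (c + 1) * ∑ s ∈ range (r - t), (z ^ r) ^ (t + (s + 1)) := by
    rw [Finset.mul_sum]
    apply Finset.sum_congr rfl
    intro j hj
    rw [hb, if_neg (by omega), add_zero, hsh]
    rfl
  have s3 : z ^ (bal r n t + 1 + r * t) = z ^ (c + 1) * (z ^ r) ^ t := by
    rw [hb, if_neg (by omega), add_zero, pow_add _ (c + 1), pow_mul]
  rw [s1, s2, s3]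
  rw [split2] at geom
  linear_combination z ^ (c + 1) * geom

lemma det_bal (r : ℕ) (hr : 0 < r) (z : Fin r → ℂ) (hz : ∀ k, z k ^ (r + 1) = 1)
    (hz1 : ∀ k, z k ≠ 1) (n : ℕ) :
    (wM z (fun j => bal r n j.1)).det = (-1) ^ n * (wM z (fun _ => 0)).det := by
  induction n with
  | zero => simp [bal]
  | succ n ih =>
    have ht := Nat.mod_lt n hr
    have : wM z (fun j => bal r (n + 1) j.1)
        = (wM z (fun j => bal r n j.1)).updateCol ⟨n % r, ht⟩
          (fun k => ∑ i, (fun _ => (-1 : ℂ)) i • wM z (fun j => bal r n j.1) k i) := by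
      ext k j
      rw [Matrix.updateCol_apply]
      split_ifs with hj
      · subst hj
        have := col_sum r n hr (z k) (hz k) (hz1 k)
        simp only [wM, bal_succ r n hr _ ht, if_true, smul_eq_mul, neg_mul, one_mul,
          Finset.sum_neg_distrib]
        exact this
      · have : j.1 ≠ n % r := fun e => hj (Fin.ext e)
        simp only [wM, bal_succ r n hr _ j.2, if_neg this, add_zero]
    rw [this, Matrix.det_updateCol_sum, ih, pow_succ]
    simp

lemma esymm_roots (r : ℕ) (ζ : ℂ) (hζ : IsPrimitiveRoot ζ (r + 1)) (k : ℕ) :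
    aeval (fun j : Fin r => ζ ^ (j.1 + 1)) (esymm (Fin r) ℤ k)
      = if k ≤ r then (-1 : ℂ) ^ k else 0 := by
  rw [aeval_esymm_eq_multiset_esymm]
  set s := Multiset.map (fun j : Fin r => ζ ^ (j.1 + 1)) univ.val with hs
  have hcard : s.card = r := by simp [hs]
  split_ifs with hk
  · have h1 := Multiset.prod_X_sub_X_eq_sum_esymm s
    have h2 : (s.map (fun t => Polynomial.X - Polynomial.C t)).prod
        = ∑ i ∈ range (r + 1), (Polynomial.X : Polynomial ℂ) ^ i := by
      have hX : (Polynomial.X - 1 : Polynomial ℂ) ≠ 0 := Polynomial.X_sub_C_ne_zero (1 : ℂ)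
      apply mul_right_cancel₀ hX
      rw [geom_sum_mul, Polynomial.X_pow_sub_one_eq_prod (Nat.succ_pos r) hζ]
      have e : Polynomial.nthRootsFinset (r + 1) (1 : ℂ)
          = (range (r + 1)).image (fun i => ζ ^ i) := by
        ext x
        rw [Polynomial.mem_nthRootsFinset (Nat.succ_pos r)]
        simp only [mem_image, mem_range]
        constructor
        · intro hx
          obtain ⟨i, hi, rfl⟩ := hζ.eq_pow_of_pow_eq_one hx
          exact ⟨i, hi, rfl⟩
        · rintro ⟨i, -, rfl⟩
          rw [← pow_mul, mul_comm, pow_mul, hζ.pow_eq_one, one_pow]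
      rw [e, Finset.prod_image]
      · rw [Finset.prod_range_succ']
        simp only [hs, Multiset.map_map, pow_zero, map_one, Function.comp_def]
        congr 1
        exact Fin.prod_univ_eq_prod_range
          (fun i => (Polynomial.X - Polynomial.C (ζ ^ (i + 1)) : Polynomial ℂ)) r
      · intro a ha b hb hab
        exact hζ.pow_inj (by simpa using ha) (by simpa using hb) hab
    have h3 := congrArg (fun p => Polynomial.coeff p (r - k)) (h1.symm.trans h2)
    simp only [hcard, Polynomial.finsetSum_coeff, Polynomial.coeff_X_pow] at h3
    rw [Finset.sum_eq_single k] at h3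
    · simp only [Finset.sum_ite_eq, mem_range] at h3
      rw [if_pos (by omega)] at h3
      have h4 : ((-1 : ℂ)) ^ k * s.esymm k = 1 := by
        simpa [Polynomial.coeff_C_mul, Polynomial.coeff_X_pow, ← map_neg, ← map_pow, ← map_mul,
          ← map_one Polynomial.C, -map_one] using h3
      have h5 : ((-1 : ℂ)) ^ k * (-1) ^ k = 1 := by rw [← mul_pow]; simp
      linear_combination (-1 : ℂ) ^ k * h4 - s.esymm k * h5
    · intro b hb hbk
      have hb' := mem_range.mp hb
      have : r - k ≠ r - b := by omega
      have e1 : ((-1 : Polynomial ℂ)) ^ b = Polynomial.C ((-1) ^ b) := by simp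
      simp only [e1]
      rw [Polynomial.coeff_C_mul, Polynomial.coeff_C_mul, Polynomial.coeff_X_pow, if_neg this]
      simp
    · intro h
      simp at h
      omega
  · unfold Multiset.esymm
    rw [Multiset.powersetCard_eq_empty _ (by omega)]
    simp

lemma mprod_pow (x : ℂ) (s : Multiset ℕ) : (s.map (fun k => x ^ k)).prod = x ^ s.sum := by
  induction s using Multiset.induction_on with
  | empty => simp
  | cons a s ih => simp [ih, pow_add]

lemma coef_sum {P : Type*} [Fintype P] [PartialOrder P] (r : ℕ) (ζ : ℂ)
    (hζ : IsPrimitiveRoot ζ (r + 1))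
    (coef : Nat.Partition (Fintype.card P) → ℤ)
    (hcoef : chromPoly P r
        = ∑ μ : Nat.Partition (Fintype.card P), C (coef μ) * esymmPart (Fin r) ℤ μ) :
    ∑ κ ∈ univ.filter (fun κ : P → Fin r => Proper κ), ∏ v, ζ ^ ((κ v).1 + 1)
      = (-1) ^ Fintype.card P * ((∑ μ ∈ Finset.univ.filter
        (fun μ : Nat.Partition (Fintype.card P) => ∀ p ∈ μ.parts, p ≤ r), coef μ : ℤ) : ℂ) := by
  have h := congrArg (aeval (fun j : Fin r => ζ ^ (j.1 + 1))) hcoef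
  have e : aeval (fun j : Fin r => ζ ^ (j.1 + 1)) (chromPoly P r) =
      ∑ κ ∈ univ.filter (fun κ : P → Fin r => Proper κ), ∏ v, ζ ^ ((κ v).1 + 1) := by
    unfold chromPoly Proper
    simp only [map_sum, map_prod, aeval_X]
    congr 1
    ext κ
    simp
  rw [← e, h]
  simp only [map_sum, map_mul]
  rw [Finset.sum_filter]
  push_cast
  rw [Finset.mul_sum]
  apply Finset.sum_congr rfl
  intro μ _
  have h1 : aeval (fun j : Fin r => ζ ^ (j.1 + 1)) (esymmPart (Fin r) ℤ μ)
      = if ∀ p ∈ μ.parts, p ≤ r then (-1 : ℂ) ^ Fintype.card P else 0 := by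
    unfold esymmPart
    rw [map_multiset_prod, Multiset.map_map]
    simp only [Function.comp_def, esymm_roots r ζ hζ]
    split_ifs with hp
    · rw [Multiset.map_congr rfl (g := fun k => (-1 : ℂ) ^ k)
        (fun x hx => by rw [if_pos (hp x hx)])]
      rw [mprod_pow, μ.parts_sum]
    · push Not at hp
      obtain ⟨p, hp1, hp2⟩ := hp
      apply Multiset.prod_eq_zero
      rw [Multiset.mem_map]
      exact ⟨p, hp1, by rw [if_neg (by omega)]⟩
  rw [h1]
  split_ifs <;> simp [mul_comm]

lemma main_count {P : Type*} [Fintype P] [PartialOrder P] (h31 : ThreePlusOneFree P)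
    (r : ℕ) (hr : 0 < r) (coef : Nat.Partition (Fintype.card P) → ℤ)
    (hcoef : chromPoly P r
        = ∑ μ : Nat.Partition (Fintype.card P), C (coef μ) * esymmPart (Fin r) ℤ μ) :
    (∑ μ ∈ Finset.univ.filter
        (fun μ : Nat.Partition (Fintype.card P) => ∀ p ∈ μ.parts, p ≤ r), coef μ)
      = ((univ.filter (fun κ : P → Fin r => Proper κ ∧ ∀ v i, ¬ IP κ v i)).card : ℤ) := by
  have hζ := Complex.isPrimitiveRoot_exp (r + 1) (Nat.succ_ne_zero r)
  set ζ := Complex.exp (2 * Real.pi * Complex.I / ((r + 1 : ℕ) : ℂ)) with hζdef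
  let z : Fin r → ℂ := fun j => ζ ^ (j.1 + 1)
  have hz : ∀ k, z k ^ (r + 1) = 1 := by
    intro k
    simp only [z]
    rw [← pow_mul, mul_comm, pow_mul, hζ.pow_eq_one, one_pow]
  have hz1 : ∀ k, z k ≠ 1 := by
    intro k hk
    have := hζ.pow_inj (i := k.1 + 1) (j := 0) (by omega) (by omega) (by simpa using hk)
    omega
  have hzinj : ∀ k l, z k = z l → k = l := by
    intro k l hk
    have := hζ.pow_inj (i := k.1 + 1) (j := l.1 + 1) (by omega) (by omega) hk
    exact Fin.ext (by omega)
  have hD : (wM z (fun _ => 0)).det ≠ 0 := by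
    have : wM z (fun _ => 0) = Matrix.vandermonde (fun k => z k ^ r) := by
      ext k j
      simp [wM, Matrix.vandermonde_apply, pow_mul]
    rw [this, Matrix.det_vandermonde_ne_zero_iff]
    intro k l hkl
    apply hzinj
    have hk := hz k
    have hl := hz l
    simp only at hkl
    rw [pow_succ] at hk hl
    rw [hkl] at hk
    have hne : z l ^ r ≠ 0 := fun e => by rw [e, zero_mul] at hl; exact zero_ne_one hl
    exact mul_left_cancel₀ hne (hk.trans hl.symm)
  have hall := sum_all (P := P) z
  have hsplit : univ.filter (fun κ : P → Fin r => Proper κ)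
      = univ.filter (fun κ : P → Fin r => Proper κ ∧ ∃ v i, IP κ v i)
        ∪ univ.filter (fun κ : P → Fin r => Proper κ ∧ ∀ v i, ¬ IP κ v i) := by
    ext κ
    simp only [mem_filter, mem_univ, true_and, mem_union]
    by_cases hh : ∃ v i, IP κ v i
    · simp [hh]
    · push Not at hh
      simp [hh]
  have hdisj : Disjoint (univ.filter (fun κ : P → Fin r => Proper κ ∧ ∃ v i, IP κ v i))
      (univ.filter (fun κ : P → Fin r => Proper κ ∧ ∀ v i, ¬ IP κ v i)) := by
    rw [Finset.disjoint_left]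
    intro κ
    simp only [mem_filter, mem_univ, true_and]
    rintro ⟨-, v, i, h1⟩ ⟨-, h2⟩
    exact h2 v i h1
  have hlhs : ∑ κ ∈ univ.filter (fun κ : P → Fin r => Proper κ), (wM z (len κ)).det
      = ((univ.filter (fun κ : P → Fin r => Proper κ ∧ ∀ v i, ¬ IP κ v i)).card : ℂ)
        * ((-1) ^ Fintype.card P * (wM z (fun _ => 0)).det) := by
    rw [hsplit, Finset.sum_union hdisj, sum_IP_zero h31 z hz, zero_add, ← nsmul_eq_mul]
    rw [← Finset.sum_const]
    apply Finset.sum_congr rfl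
    intro κ hκ
    simp only [mem_filter, mem_univ, true_and] at hκ
    rw [← det_bal r hr z hz hz1]
    congr 2
    funext j
    exact len_of_noIP hr hκ.1 hκ.2 j
  rw [hlhs, coef_sum r ζ hζ coef hcoef] at hall
  have hsgn : ((-1 : ℂ)) ^ Fintype.card P ≠ 0 := pow_ne_zero _ (by norm_num)
  have : ((∑ μ ∈ Finset.univ.filter
        (fun μ : Nat.Partition (Fintype.card P) => ∀ p ∈ μ.parts, p ≤ r), coef μ : ℤ) : ℂ)
      = (((univ.filter (fun κ : P → Fin r => Proper κ ∧ ∀ v i, ¬ IP κ v i)).card : ℤ) : ℂ) := by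
    apply mul_left_cancel₀ (mul_ne_zero hsgn hD)
    push_cast at hall ⊢
    linear_combination -hall
  exact_mod_cast this

section Tab
variable {P : Type*} [Fintype P] [PartialOrder P] {r : ℕ}

/-- simplified form of the cylindric tableau conditions -/
def Good (a : ℕ → ℕ) (T : ∀ c : Fin r, Fin (a c.1) → P) : Prop :=
  (∀ c p q, p < q → T c p < T c q) ∧
  (∀ (c : Fin r) (hc : c.1 + 1 < r) (p : Fin (a c.1)) (q : Fin (a (c.1 + 1))),
      p.1 = q.1 → ¬ T ⟨c.1 + 1, hc⟩ q < T c p) ∧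
  (∀ (h0 : 0 < r) (p : Fin (a (r - 1))) (q : Fin (a 0)),
      p.1 + 1 = q.1 → ¬ T ⟨0, h0⟩ q < T ⟨r - 1, Nat.sub_lt h0 Nat.one_pos⟩ p)

/-- each element appears once -/
def Std (a : ℕ → ℕ) (T : ∀ c : Fin r, Fin (a c.1) → P) : Prop :=
  ∀ x : P, ∑ c, (univ.filter (fun p => T c p = x)).card = 1

lemma std_iff (a : ℕ → ℕ) (T : ∀ c : Fin r, Fin (a c.1) → P) :
    Std a T ↔ ∀ x, ∃ c p, T c p = x ∧ ∀ c' p', T c' p' = x → (⟨c', p'⟩ : Σ c : Fin r, Fin (a c.1)) = ⟨c, p⟩ := by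
  unfold Std
  apply forall_congr'
  intro x
  rw [← Finset.card_sigma, Finset.card_eq_one]
  constructor
  · rintro ⟨⟨c, p⟩, hcp⟩
    have key : ∀ c' p', T c' p' = x ↔ (⟨c', p'⟩ : Σ c : Fin r, Fin (a c.1)) = ⟨c, p⟩ := by
      intro c' p'
      have := Finset.ext_iff.1 hcp ⟨c', p'⟩
      simpa only [mem_sigma, mem_univ, mem_filter, true_and, Finset.mem_singleton] using this
    exact ⟨c, p, (key c p).2 rfl, fun c' p' h => (key c' p').1 h⟩
  · rintro ⟨c, p, h1, h2⟩
    refine ⟨⟨c, p⟩, ?_⟩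
    ext ⟨c', p'⟩
    simp only [mem_sigma, mem_univ, mem_filter, true_and, Finset.mem_singleton]
    constructor
    · exact h2 c' p'
    · intro e
      cases e
      exact h1

/-- the relation between tableaux and colourings -/
def Rel (a : ℕ → ℕ) (T : ∀ c : Fin r, Fin (a c.1) → P) (κ : P → Fin r) : Prop :=
  ∀ c p, κ (T c p) = c ∧ cnt κ c (T c p) = p.1 + 1

lemma lt_iff_cnt {κ : P → Fin r} (h : Proper κ) {v u : P} :
    v < u ↔ cnt κ (κ u) v < cnt κ (κ u) u := by
  constructor
  · exact cnt_lt h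
  · intro hlt
    by_contra hn
    have : cnt κ (κ u) u ≤ cnt κ (κ u) v := by
      apply card_le_card
      intro z
      simp only [mem_filter, mem_univ, true_and]
      rintro ⟨h1, h2⟩
      refine ⟨h1, fun h3 => hn ?_⟩
      rw [h.not_lt h1.symm] at h2
      exact lt_of_lt_of_le h3 h2
    omega

lemma eq_of_rank {κ : P → Fin r} (h : Proper κ) {x y : P} (hc : κ x = κ y)
    (hr : cnt κ (κ x) x = cnt κ (κ x) y) : x = y := by
  rcases h.cmp hc with h1 | h1
  · rcases h1.eq_or_lt with h2 | h2
    · exact h2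
    · have := cnt_lt h h2
      rw [← hc] at this
      omega
  · rcases h1.eq_or_lt with h2 | h2
    · exact h2.symm
    · have := cnt_lt h h2
      omega

lemma rel_rows (h31 : ThreePlusOneFree P) (a : ℕ → ℕ) (ha : ∀ c, c + 1 < r → a (c + 1) ≤ a c)
    (ha2 : a 0 ≤ a (r - 1) + 1)
    (T : ∀ c : Fin r, Fin (a c.1) → P) (κ : P → Fin r) (h : Proper κ) (hR : Rel a T κ)
    (hsurj : ∀ x, ∃ c p, T c p = x) :
    Good a T ↔ ∀ v i, ¬ IP κ v i := by
  have key : ∀ v c p, v < T c p ↔ cnt κ c v < p.1 + 1 := by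
    intro v c p
    rw [lt_iff_cnt h, (hR c p).1, (hR c p).2]
  constructor
  · rintro ⟨-, h2, h3⟩
    apply noIP_of_adj h31 h
    intro v i hadj hip
    obtain ⟨j, q, rfl⟩ := hsurj v
    obtain ⟨e1, e2⟩ := hR j q
    obtain ⟨hij, hip⟩ := hip
    rw [e1] at hadj hij hip
    rw [e2] at hip
    rcases hadj with hadj | ⟨hj, hi⟩
    · obtain ⟨i, hi⟩ := i
      obtain ⟨j, hj⟩ := j
      simp only at hadj
      subst hadj
      have g : gap r ⟨i + 1, hj⟩ ⟨i, hi⟩ = 1 := by simp [gap]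
      rw [g] at hip
      refine h2 ⟨i, hi⟩ hj ⟨q.1, lt_of_lt_of_le q.2 (ha i hj)⟩ q rfl ?_
      rw [key]
      simp only
      omega
    · obtain ⟨i, hi'⟩ := i
      obtain ⟨j, hj'⟩ := j
      simp only at hj hi
      subst hj
      have hie : i = r - 1 := by omega
      subst hie
      have hne : r - 1 ≠ 0 := fun e => hij (Fin.ext e)
      have g : gap r ⟨0, hj'⟩ ⟨r - 1, hi'⟩ = 2 := by
        simp [gap]
        omega
      rw [g] at hip
      have hq : q.1 < a 0 := q.2
      have hq1 : 1 ≤ q.1 := by omega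
      refine h3 hj' ⟨q.1 - 1, by omega⟩ q (by simp only; omega) ?_
      rw [key]
      simp only
      omega
  · intro hno
    have hcol : ∀ c p q, p < q → T c p < T c q := by
      intro c p q hpq
      rw [key, (hR c p).2]
      have : p.1 < q.1 := hpq
      omega
    refine ⟨hcol, ?_, ?_⟩
    · intro c hc p q hpq hlt
      rw [key] at hlt
      apply hno (T ⟨c.1 + 1, hc⟩ q) c
      obtain ⟨e1, e2⟩ := hR ⟨c.1 + 1, hc⟩ q
      refine ⟨?_, ?_⟩
      · rw [e1]
        intro e
        have := congrArg Fin.val e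
        simp at this
      · rw [e1, e2]
        have g : gap r ⟨c.1 + 1, hc⟩ c = 1 := by simp [gap]
        rw [g]
        omega
    · intro h0 p q hpq hlt
      by_cases h1 : r = 1
      · subst h1
        exact lt_asymm hlt (hcol ⟨0, h0⟩ p q (by rw [Fin.lt_def]; omega))
      · rw [key] at hlt
        apply hno (T ⟨0, h0⟩ q) ⟨r - 1, Nat.sub_lt h0 Nat.one_pos⟩
        obtain ⟨e1, e2⟩ := hR ⟨0, h0⟩ q
        refine ⟨?_, ?_⟩
        · rw [e1]
          intro e
          have := congrArg Fin.val e
          simp at this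
          omega
        · rw [e1, e2]
          have g : gap r ⟨0, h0⟩ ⟨r - 1, Nat.sub_lt h0 Nat.one_pos⟩ = 2 := by
            simp [gap]
            omega
          rw [g]
          omega

lemma exists_col (a : ℕ → ℕ) (T : ∀ c : Fin r, Fin (a c.1) → P)
    (hcol : ∀ c p q, p < q → T c p < T c q) (hstd : Std a T) :
    ∃ κ : P → Fin r, Proper κ ∧ Rel a T κ := by
  rw [std_iff] at hstd
  choose κ p hp hu using hstd
  have hκ : ∀ c q, κ (T c q) = c := by
    intro c q
    have := hu (T c q) c q rfl
    exact (congrArg Sigma.fst this).symm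
  have hsur : ∀ c x, κ x = c → ∃ q, T c q = x := by
    intro c x hx
    subst hx
    exact ⟨p x, hp x⟩
  have hmono : ∀ c q q', T c q < T c q' ↔ q < q' := by
    intro c q q'
    have : StrictMono (T c) := fun s t hst => hcol c s t hst
    exact this.lt_iff_lt
  refine ⟨κ, ?_, ?_⟩
  · intro x y hxy hinc he
    apply hinc
    obtain ⟨q, hq⟩ := hsur _ x rfl
    obtain ⟨q', hq'⟩ := hsur (κ x) y he.symm
    rcases lt_trichotomy q q' with h1 | h1 | h1
    · left; rw [← hq, ← hq']; exact (hcol _ _ _ h1).le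
    · exact absurd (by rw [← hq, ← hq', h1]) hxy
    · right; rw [← hq, ← hq']; exact (hcol _ _ _ h1).le
  · intro c q
    refine ⟨hκ c q, ?_⟩
    have : univ.filter (fun z => κ z = c ∧ ¬ T c q < z) = (Finset.Iic q).image (T c) := by
      ext z
      simp only [mem_filter, mem_univ, true_and, mem_image, mem_Iic]
      constructor
      · rintro ⟨h1, h2⟩
        obtain ⟨q', rfl⟩ := hsur c z h1
        rw [hmono] at h2
        exact ⟨q', not_lt.mp h2, rfl⟩
      · rintro ⟨q', h1, rfl⟩
        refine ⟨hκ c q', ?_⟩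
        rw [hmono]
        exact not_lt.mpr h1
    unfold cnt
    rw [this, Finset.card_image_of_injective, Fin.card_Iic]
    exact StrictMono.injective (fun s t hst => hcol c s t hst)

lemma exists_tab (a : ℕ → ℕ) (κ : P → Fin r) (h : Proper κ) (ha : ∀ c : Fin r, len κ c = a c.1) :
    ∃ T : ∀ c : Fin r, Fin (a c.1) → P, Std a T ∧ Rel a T κ := by
  have hex : ∀ (c : Fin r) (p : Fin (a c.1)), ∃ x, κ x = c ∧ cnt κ c x = p.1 + 1 := by
    intro c p
    have hp := p.2
    have hc := ha c
    obtain ⟨u, hu1, hu2⟩ := exists_max h c (by omega)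
    subst hu1
    obtain ⟨x, -, h2, h3⟩ := exists_rank h (p.1 + 1) (by omega) u (by omega)
    exact ⟨x, h2, h3⟩
  choose T hT1 hT2 using hex
  refine ⟨T, ?_, fun c p => ⟨hT1 c p, hT2 c p⟩⟩
  rw [std_iff]
  intro x
  have h1 := cnt_own_pos (κ := κ) x
  have h2 := cnt_le_len κ (κ x) x
  rw [ha] at h2
  refine ⟨κ x, ⟨cnt κ (κ x) x - 1, by omega⟩, ?_, ?_⟩
  · symm
    apply eq_of_rank h
    · rw [hT1]
    · rw [hT2]
      simp only
      omega
  · intro c' p' e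
    subst e
    have e1 := hT1 c' p'
    have e2 := hT2 c' p'
    generalize T c' p' = y at *
    subst e1
    congr 1
    apply Fin.ext
    simp only
    omega

lemma card_tab (h31 : ThreePlusOneFree P) (hr : 0 < r) (a : ℕ → ℕ)
    (ha : ∀ c : Fin r, a c.1 = bal r (Fintype.card P) c.1) :
    Nat.card {T : ∀ c : Fin r, Fin (a c.1) → P // Good a T ∧ Std a T}
      = (univ.filter (fun κ : P → Fin r => Proper κ ∧ ∀ v i, ¬ IP κ v i)).card := by
  have hm1 : ∀ c, c + 1 < r → a (c + 1) ≤ a c := by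
    intro c hc
    have e1 := ha ⟨c + 1, hc⟩
    have e2 := ha ⟨c, by omega⟩
    simp only at e1 e2
    rw [e1, e2]
    unfold bal
    split_ifs <;> omega
  have hm2 : a 0 ≤ a (r - 1) + 1 := by
    have e1 := ha ⟨0, hr⟩
    have e2 := ha ⟨r - 1, by omega⟩
    simp only at e1 e2
    rw [e1, e2]
    unfold bal
    split_ifs <;> omega
  have hsur : ∀ T : ∀ c : Fin r, Fin (a c.1) → P, Std a T → ∀ x, ∃ c p, T c p = x := by
    intro T hT x
    obtain ⟨c, p, h1, -⟩ := (std_iff a T).1 hT x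
    exact ⟨c, p, h1⟩
  have hex : ∀ T : {T : ∀ c : Fin r, Fin (a c.1) → P // Good a T ∧ Std a T},
      ∃ κ : {κ : P → Fin r // Proper κ ∧ ∀ v i, ¬ IP κ v i}, Rel a T.1 κ.1 := by
    rintro ⟨T, hT1, hT2⟩
    obtain ⟨κ, h1, h2⟩ := exists_col a T hT1.1 hT2
    exact ⟨⟨κ, h1, (rel_rows h31 a hm1 hm2 T κ h1 h2 (hsur T hT2)).1 hT1⟩, h2⟩
  choose f hf using hex
  have hbij : Function.Bijective f := by
    constructor
    · intro T T' e
      have h1 := hf T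
      have h2 := hf T'
      rw [← e] at h2
      apply Subtype.ext
      funext c p
      obtain ⟨a1, a2⟩ := h1 c p
      obtain ⟨b1, b2⟩ := h2 c p
      apply eq_of_rank (f T).2.1
      · rw [a1, b1]
      · rw [a1, a2, b2]
    · rintro ⟨κ, hκ1, hκ2⟩
      obtain ⟨T, h1, h2⟩ := exists_tab a κ hκ1
        (fun c => by rw [len_of_noIP hr hκ1 hκ2 c, ha])
      have hg := (rel_rows h31 a hm1 hm2 T κ hκ1 h2 (hsur T h1)).2 hκ2
      refine ⟨⟨T, hg, h1⟩, ?_⟩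
      apply Subtype.ext
      funext x
      obtain ⟨c, p, rfl⟩ := hsur T h1 x
      exact ((hf ⟨T, hg, h1⟩ c p).1).trans (h2 c p).1.symm
  rw [Nat.card_congr (Equiv.ofBijective f hbij), Nat.card_eq_fintype_card, Fintype.card_subtype]

end Tab

lemma conj_zero (c : ℕ) : conj (fun _ => 0) c = 0 := by
  simp [conj]

lemma conj_lam (C t r c : ℕ) (hc : c < r) :
    conj (fun i => if i < C then r else if i = C then t else 0) c
      = C + if c < t then 1 else 0 := by
  unfold conj
  have : {i | c < (fun i => if i < C then r else if i = C then t else 0) i}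
      = ((Finset.range (C + if c < t then 1 else 0) : Finset ℕ) : Set ℕ) := by
    ext i
    simp only [Set.mem_setOf_eq, coe_range, Set.mem_Iio]
    split_ifs <;> omega
  rw [this, Set.ncard_coe_finset, Finset.card_range]

lemma final {P : Type*} [Fintype P] [PartialOrder P] (h31 : ThreePlusOneFree P)
    (lam : ℕ → ℕ) (hl : 0 < lam 0)
    (hlam : ∀ c, c < lam 0 → conj lam c = bal (lam 0) (Fintype.card P) c) :
    Nat.card {T : ∀ col : Fin (lam 0), Fin (conj lam col - conj (fun _ => 0) col) → P //
        IsCylTab lam (fun _ => 0) 1 T ∧ IsStandardTab lam (fun _ => 0) T}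
      = (univ.filter (fun κ : P → Fin (lam 0) => Proper κ ∧ ∀ v i, ¬ IP κ v i)).card := by
  rw [← card_tab h31 hl (fun c => conj lam c - conj (fun _ => 0) c)
    (fun c => by simp only [conj_zero, Nat.sub_zero]; exact hlam c.1 c.2)]
  apply Nat.card_congr
  apply Equiv.subtypeEquivRight
  intro T
  apply and_congr _ Iff.rfl
  have hm1 : ∀ c, c + 1 < lam 0 → conj lam (c + 1) ≤ conj lam c := by
    intro c hc
    rw [hlam _ hc, hlam c (by omega)]
    unfold bal
    split_ifs <;> omega
  have hm2 : conj lam 0 ≤ conj lam (lam 0 - 1) + 1 := by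
    rw [hlam _ hl, hlam (lam 0 - 1) (by omega)]
    unfold bal
    split_ifs <;> omega
  constructor
  · rintro ⟨-, -, -, h4, h5, h6⟩
    refine ⟨h4, ?_, ?_⟩
    · intro c hc p q hpq
      exact h5 c hc p q (by
        have z1 := conj_zero c.1
        have z2 := conj_zero (c.1 + 1)
        omega)
    · intro h0 p q hpq
      exact h6 h0 p q (by
        have z1 := conj_zero 0
        have z2 := conj_zero (lam 0 - 1)
        omega)
  · rintro ⟨h4, h5, h6⟩
    refine ⟨?_, ?_, ?_, h4, ?_, ?_⟩
    · intro c hc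
      exact ⟨hm1 c hc, by rw [conj_zero, conj_zero]⟩
    · intro c hc
      rw [conj_zero]; omega
    · intro _
      exact ⟨hm2, by rw [conj_zero, conj_zero]; omega⟩
    · intro c hc p q hpq
      have z1 := conj_zero c.1
      have z2 := conj_zero (c.1 + 1)
      exact h5 c hc p q (by omega)
    · intro h0 p q hpq
      have z1 := conj_zero 0
      have z2 := conj_zero (lam 0 - 1)
      exact h6 h0 p q (by omega)

lemma chromPoly_empty (P : Type*) [Fintype P] [PartialOrder P] (hP : ∀ _ : P, False) :
    chromPoly P 0 = 1 := by
  unfold chromPoly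
  rw [Finset.filter_true_of_mem (fun κ _ a => (hP a).elim)]
  have : IsEmpty P := ⟨hP⟩
  simp

end Stmt13Aux

/-- for a `(3+1)`-free finite poset `P` with `|P| = n` and `r > 0`,
the partial sum `Σ_{λ ⊢ n, λ₁ ≤ r} c^P_λ` of the `e`-expansion coefficients of
`X_{inc(P)}` equals the number of standard cylindric `P`-tableaux of shape
`(r^c t)/∅/1`, where `(r^c t)` is the partition of `n` with the maximal number of
rows of length `r` (`c = n / r`, `t = n % r`); in particular it is nonnegative. -/
theorem stmt_13 (P : Type*) [Fintype P] [PartialOrder P] (h31 : ThreePlusOneFree P)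
    (r : ℕ) (hr : 0 < r)
    (coef : Nat.Partition (Fintype.card P) → ℤ)
    (hcoef : ∀ N, chromPoly P N
        = ∑ μ : Nat.Partition (Fintype.card P), C (coef μ) * esymmPart (Fin N) ℤ μ) :
    (∑ μ ∈ Finset.univ.filter
        (fun μ : Nat.Partition (Fintype.card P) => ∀ p ∈ μ.parts, p ≤ r), coef μ)
      = (Nat.card {T : ∀ col : Fin ((fun i => if i < Fintype.card P / r then r
              else if i = Fintype.card P / r then Fintype.card P % r else 0) 0),
            Fin (conj (fun i => if i < Fintype.card P / r then r
                else if i = Fintype.card P / r then Fintype.card P % r else 0) col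
              - conj (fun _ => 0) col) → P //
          IsCylTab (fun i => if i < Fintype.card P / r then r
              else if i = Fintype.card P / r then Fintype.card P % r else 0) (fun _ => 0) 1 T ∧
          IsStandardTab (fun i => if i < Fintype.card P / r then r
              else if i = Fintype.card P / r then Fintype.card P % r else 0) (fun _ => 0) T} : ℤ) := by
  classical
  have hlam0 : (fun i => if i < Fintype.card P / r then r
      else if i = Fintype.card P / r then Fintype.card P % r else 0) 0
        = min r (Fintype.card P) := by
    have h1 := Nat.div_add_mod (Fintype.card P) r
    simp only
    by_cases hlt : Fintype.card P < r
    · rw [Nat.div_eq_of_lt hlt, Nat.mod_eq_of_lt hlt]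
      simp
      omega
    · have : 0 < Fintype.card P / r := Nat.div_pos (by omega) hr
      rw [if_pos this]
      omega
  have hfilter : Finset.univ.filter
        (fun μ : Nat.Partition (Fintype.card P) => ∀ p ∈ μ.parts, p ≤ r)
      = Finset.univ.filter
        (fun μ : Nat.Partition (Fintype.card P) => ∀ p ∈ μ.parts, p ≤ (fun i =>
          if i < Fintype.card P / r then r
          else if i = Fintype.card P / r then Fintype.card P % r else 0) 0) := by
    ext μ
    simp only [Finset.mem_filter, Finset.mem_univ, true_and]
    refine forall_congr' fun p => forall_congr' fun hp => ?_
    have hle : p ≤ Fintype.card P := by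
      have := Multiset.le_sum_of_mem hp
      rwa [μ.parts_sum] at this
    have := hlam0
    simp only at this
    rw [this]
    omega
  have hconj : ∀ c, c < min r (Fintype.card P) → conj (fun i => if i < Fintype.card P / r then r
      else if i = Fintype.card P / r then Fintype.card P % r else 0) c
        = Stmt13Aux.bal (min r (Fintype.card P)) (Fintype.card P) c := by
    intro c hc
    rw [Stmt13Aux.conj_lam _ _ _ _ (by omega)]
    unfold Stmt13Aux.bal
    by_cases hlt : Fintype.card P < r
    · rw [min_eq_right hlt.le, Nat.div_eq_of_lt hlt, Nat.mod_eq_of_lt hlt,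
        Nat.div_self (by omega), Nat.mod_self, if_pos (by omega), if_neg (by omega)]
    · rw [min_eq_left (by omega)]
  rw [hfilter]
  generalize hL : (fun i => if i < Fintype.card P / r then r
      else if i = Fintype.card P / r then Fintype.card P % r else 0) = lam at *
  rcases Nat.eq_zero_or_pos (Fintype.card P) with h0 | hpos
  · have hl0 : lam 0 = 0 := by rw [hlam0, h0]; simp
    have hP : IsEmpty P := Fintype.card_eq_zero_iff.mp h0
    have hE : IsEmpty (Fin (lam 0)) := by rw [hl0]; infer_instance
    have hcard : Nat.card {T : ∀ col : Fin (lam 0), Fin (conj lam col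
        - conj (fun _ => 0) col) → P // IsCylTab lam (fun _ => 0) 1 T ∧
          IsStandardTab lam (fun _ => 0) T} = 1 := by
      rw [Nat.card_eq_one_iff_unique]
      constructor
      · infer_instance
      · refine ⟨⟨fun c => hE.elim c, ?_, fun x => hP.elim x⟩⟩
        refine ⟨?_, ?_, ?_, ?_, ?_, ?_⟩
        · intro c hc; omega
        · intro c hc; omega
        · intro hc; omega
        · intro c; exact hE.elim c
        · intro c; exact hE.elim c
        · intro hc; omega
    rw [hcard]
    have hc0 := congrArg (aeval (fun _ : Fin 0 => (0 : ℤ))) (hcoef 0)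
    have hparts : ∀ μ : Nat.Partition (Fintype.card P), μ.parts = 0 := by
      intro μ
      rw [Multiset.eq_zero_iff_forall_notMem]
      intro p hp
      have h1 := Multiset.le_sum_of_mem hp
      rw [μ.parts_sum] at h1
      have h2 := μ.parts_pos hp
      omega
    have hall : Finset.univ.filter
        (fun μ : Nat.Partition (Fintype.card P) => ∀ p ∈ μ.parts, p ≤ lam 0) = Finset.univ := by
      ext μ
      simp [hparts]
    rw [hall]
    have e1 : chromPoly P 0 = 1 := Stmt13Aux.chromPoly_empty P (fun a => hP.elim a)
    rw [e1] at hc0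
    simp only [map_one, map_sum, map_mul, esymmPart, hparts, Multiset.map_zero,
      Multiset.prod_zero, mul_one, aeval_C] at hc0
    simpa using hc0.symm
  · have hl : 0 < lam 0 := by rw [hlam0]; omega
    rw [Stmt13Aux.main_count h31 (lam 0) hl coef (hcoef _)]
    congr 1
    symm
    apply Stmt13Aux.final h31 lam hl
    intro c hc
    rw [hlam0] at hc ⊢
    exact hconj c hc
end
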